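/- arXiv:1806.07020 — 4 statements merged into one kernel-verified Lean document; each statement's English description precedes it below -/
import Mathlib

section
/- Let ℍ be the hyperbolic plane (the upper half-plane with its hyperbolic metric). Let A ⊆ ℍ and a ∈ A be such that A is starlike with respect to a: for every z ∈ A, every point w with dist(a,w) + dist(w,z) = dist(a,z) belongs to A. Then A is arccosh(√2)-quasiconvex: for all z₁, z₂ ∈ A, every point w with dist(z₁,w) + dist(w,z₂) = dist(z₁,z₂) satisfies infDist(w, A) ≤ arccosh(√2) = log(1+√2). -/
open UpperHalfPlane

/-- The bilinear formula for `cosh (dist z w)` in hyperboloid coordinates. -/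
lemma sq_cosh_formula (z w : UpperHalfPlane) : Real.cosh (dist z w) =
    (((z.re ^ 2 + z.im ^ 2) / z.im) * (1 / w.im) + (1 / z.im) * ((w.re ^ 2 + w.im ^ 2) / w.im)) / 2
      - (z.re / z.im) * (w.re / w.im) := by
  have hz := z.im_pos
  have hw := w.im_pos
  rw [UpperHalfPlane.cosh_dist']
  field_simp
  ring

lemma sq_norm_formula (z : UpperHalfPlane) :
    ((z.re ^ 2 + z.im ^ 2) / z.im) * (1 / z.im) - (z.re / z.im) ^ 2 = 1 := by
  have hz := z.im_pos
  field_simp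
  ring

lemma sq_null_zero {P Q R p q r : ℝ} (h : P * Q - R ^ 2 = 1)
    (h0 : p * q - r ^ 2 = 0) (h1 : p * Q + q * P = 2 * r * R) : p = 0 ∧ q = 0 ∧ r = 0 := by
  have hQ : Q ≠ 0 := by rintro rfl; nlinarith [sq_nonneg R]
  have hP : P ≠ 0 := by rintro rfl; nlinarith [sq_nonneg R]
  have e : (p * Q - q * P) ^ 2 + 4 * r ^ 2 = 0 := by
    have : (p * Q + q * P) ^ 2 = (2 * r * R) ^ 2 := by rw [h1]
    linear_combination this + (-4 * P * Q) * h0 - 4 * r ^ 2 * h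
  have hr : r = 0 := by
    have : r ^ 2 = 0 := by nlinarith [sq_nonneg (p * Q - q * P), sq_nonneg r]
    simpa using this
  subst hr
  have e2 : p * Q - q * P = 0 := by
    have : (p * Q - q * P) ^ 2 = 0 := by linarith
    simpa using this
  refine ⟨?_, ?_, rfl⟩
  · have : p * Q = 0 := by linarith
    simpa [hQ] using this
  · have : q * P = 0 := by linarith
    simpa [hP] using this

/-- Hyperbolic Stewart theorem. -/
lemma sq_stewart (a z₁ z₂ w : UpperHalfPlane) (h : dist z₁ w + dist w z₂ = dist z₁ z₂) :
    Real.cosh (dist a w) * Real.sinh (dist z₁ z₂) =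
      Real.cosh (dist a z₁) * Real.sinh (dist w z₂)
        + Real.cosh (dist a z₂) * Real.sinh (dist z₁ w) := by
  have f1 := sq_cosh_formula z₁ w
  have f2 := sq_cosh_formula w z₂
  have f3 := sq_cosh_formula z₁ z₂
  rw [sq_cosh_formula a w, sq_cosh_formula a z₁, sq_cosh_formula a z₂]
  have n1 := sq_norm_formula z₁
  have n2 := sq_norm_formula z₂
  have n3 := sq_norm_formula w
  have hs : Real.sinh (dist z₁ z₂) = Real.sinh (dist z₁ w) * Real.cosh (dist w z₂)
      + Real.cosh (dist z₁ w) * Real.sinh (dist w z₂) := by rw [← h, Real.sinh_add]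
  have hc : Real.cosh (dist z₁ z₂) = Real.cosh (dist z₁ w) * Real.cosh (dist w z₂)
      + Real.sinh (dist z₁ w) * Real.sinh (dist w z₂) := by rw [← h, Real.cosh_add]
  have q1 := Real.cosh_sq (dist z₁ w)
  have q2 := Real.cosh_sq (dist w z₂)
  generalize Real.sinh (dist z₁ z₂) = s at *
  generalize Real.cosh (dist z₁ z₂) = c at *
  generalize Real.sinh (dist z₁ w) = s1 at *
  generalize Real.cosh (dist z₁ w) = c1 at *
  generalize Real.sinh (dist w z₂) = s2 at *
  generalize Real.cosh (dist w z₂) = c2 at *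
  generalize (z₁.re ^ 2 + z₁.im ^ 2) / z₁.im = P1 at *
  generalize 1 / z₁.im = Q1 at *
  generalize z₁.re / z₁.im = R1 at *
  generalize (z₂.re ^ 2 + z₂.im ^ 2) / z₂.im = P2 at *
  generalize 1 / z₂.im = Q2 at *
  generalize z₂.re / z₂.im = R2 at *
  generalize (w.re ^ 2 + w.im ^ 2) / w.im = P at *
  generalize 1 / w.im = Q at *
  generalize w.re / w.im = R at *
  have key := sq_null_zero (p := s * P - s2 * P1 - s1 * P2) (q := s * Q - s2 * Q1 - s1 * Q2)
    (r := s * R - s2 * R1 - s1 * R2) n3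
    (by
      have : s ^ 2 + s2 ^ 2 + s1 ^ 2 - 2 * s * (s2 * c1 + s1 * c2) + 2 * s1 * s2 * c = 0 := by
        subst hs hc
        linear_combination (-s2 ^ 2) * q1 - s1 ^ 2 * q2
      linear_combination this + s ^ 2 * n3 + s2 ^ 2 * n1 + s1 ^ 2 * n2 + 2 * s * s2 * f1
        + 2 * s * s1 * f2 - 2 * s1 * s2 * f3)
    (by linear_combination 2 * s * n3 + 2 * s2 * f1 + 2 * s1 * f2 + 2 * hs)
  obtain ⟨k1, k2, k3⟩ := key
  linear_combination (1 / a.im) / 2 * k1 + ((a.re ^ 2 + a.im ^ 2) / a.im) / 2 * k2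
    - (a.re / a.im) * k3

/-- Points on the segment from `a` to `z` in barycentric coordinates. -/
lemma sq_exists_point (a z : UpperHalfPlane) (s t : ℝ) (hs : 0 < s) (ht : 0 < t) :
    ∃ p : UpperHalfPlane, dist a p + dist p z = dist a z ∧ ∀ w : UpperHalfPlane,
      Real.cosh (dist w p) * √(s ^ 2 + t ^ 2 + 2 * s * t * Real.cosh (dist a z)) =
        s * Real.cosh (dist w a) + t * Real.cosh (dist w z) := by
  have hc1 := Real.one_le_cosh (dist a z)
  have hpos : 0 < s ^ 2 + t ^ 2 + 2 * s * t * Real.cosh (dist a z) := by positivity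
  set N := √(s ^ 2 + t ^ 2 + 2 * s * t * Real.cosh (dist a z)) with hN
  have hN0 : 0 < N := Real.sqrt_pos.2 hpos
  have hN2 : N ^ 2 = s ^ 2 + t ^ 2 + 2 * s * t * Real.cosh (dist a z) := Real.sq_sqrt hpos.le
  have ha := a.im_pos
  have hz := z.im_pos
  have hQ : 0 < s * (1 / a.im) + t * (1 / z.im) := by positivity
  set Q := s * (1 / a.im) + t * (1 / z.im) with hQd
  set R := s * (a.re / a.im) + t * (z.re / z.im) with hRd
  let p : UpperHalfPlane := UpperHalfPlane.mk ⟨R / Q, N / Q⟩ (by positivity)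
  have pre : p.re = R / Q := rfl
  have pim : p.im = N / Q := rfl
  have m1 : 1 / p.im * N = Q := by rw [pim]; field_simp
  have m2 : p.re / p.im * N = R := by rw [pre, pim]; field_simp
  have m3 : (p.re ^ 2 + p.im ^ 2) / p.im * N =
      s * ((a.re ^ 2 + a.im ^ 2) / a.im) + t * ((z.re ^ 2 + z.im ^ 2) / z.im) := by
    have : (p.re ^ 2 + p.im ^ 2) / p.im * N = (R ^ 2 + N ^ 2) / Q := by
      rw [pre, pim]; field_simp
    rw [this, div_eq_iff hQ.ne', hN2, sq_cosh_formula a z]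
    have n1 := sq_norm_formula a
    have n2 := sq_norm_formula z
    rw [hRd, hQd]
    linear_combination (-s ^ 2) * n1 - t ^ 2 * n2
  have hw : ∀ w : UpperHalfPlane, Real.cosh (dist w p) * N =
        s * Real.cosh (dist w a) + t * Real.cosh (dist w z) := by
    intro w
    rw [sq_cosh_formula w p, sq_cosh_formula w a, sq_cosh_formula w z]
    linear_combination ((w.re ^ 2 + w.im ^ 2) / w.im) / 2 * m1 + (1 / w.im) / 2 * m3
      - (w.re / w.im) * m2
  refine ⟨p, ?_, hw⟩
  have h1 := hw a
  have h2 := hw z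
  rw [dist_self, Real.cosh_zero] at h1 h2
  rw [dist_comm z p, dist_comm z a] at h2
  have hS0 : 0 ≤ Real.sinh (dist a z) := Real.sinh_nonneg_iff.2 dist_nonneg
  have hS1 : 0 ≤ Real.sinh (dist a p) := Real.sinh_nonneg_iff.2 dist_nonneg
  have hS2 : 0 ≤ Real.sinh (dist p z) := Real.sinh_nonneg_iff.2 dist_nonneg
  have q0 := Real.cosh_sq (dist a z)
  have q1 := Real.cosh_sq (dist a p)
  have q2 := Real.cosh_sq (dist p z)
  have e1 : Real.sinh (dist a p) * N = t * Real.sinh (dist a z) := by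
    rw [← sq_eq_sq₀ (by positivity) (by positivity)]
    have := congrArg (· ^ 2) h1
    linear_combination this - N ^ 2 * q1 - hN2 + t ^ 2 * q0
  have e2 : Real.sinh (dist p z) * N = s * Real.sinh (dist a z) := by
    rw [← sq_eq_sq₀ (by positivity) (by positivity)]
    have := congrArg (· ^ 2) h2
    linear_combination this - N ^ 2 * q2 - hN2 + s ^ 2 * q0
  have hcc : Real.cosh (dist a p + dist p z) = Real.cosh (dist a z) := by
    rw [Real.cosh_add]
    have hNN : N ^ 2 ≠ 0 := by positivity
    apply mul_right_cancel₀ hNN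
    have g1 := congrArg₂ (· * ·) h1 h2
    have g2 := congrArg₂ (· * ·) e1 e2
    linear_combination g1 + g2 - Real.cosh (dist a z) * hN2 - s * t * q0
  rw [← Real.arcosh_cosh (add_nonneg (dist_nonneg (x := a) (y := p)) dist_nonneg), hcc,
    Real.arcosh_cosh dist_nonneg]

/-- If the angle at `w` in the triangle `w a z` is obtuse, `w` is close to `[a, z]`. -/
lemma sq_close (a z w : UpperHalfPlane)
    (h : Real.cosh (dist a w) * Real.cosh (dist w z) ≤ Real.cosh (dist a z)) :
    ∃ p : UpperHalfPlane, dist a p + dist p z = dist a z ∧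
      dist w p ≤ Real.log (1 + Real.sqrt 2) := by
  obtain ⟨p, hp, hf⟩ := sq_exists_point a z (Real.cosh (dist w z)) (Real.cosh (dist a w))
    (Real.cosh_pos _) (Real.cosh_pos _)
  refine ⟨p, hp, ?_⟩
  have hf := hf w
  rw [dist_comm w a] at hf
  have hx := Real.cosh_pos (dist a w)
  have hy := Real.cosh_pos (dist w z)
  have hC := Real.cosh_pos (dist w p)
  have hle : Real.cosh (dist w p) ≤ √2 := by
    apply Real.le_sqrt_of_sq_le
    generalize Real.cosh (dist a w) = x at *
    generalize Real.cosh (dist w z) = y at *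
    generalize Real.cosh (dist a z) = c at *
    generalize Real.cosh (dist w p) = C at *
    have hc : 0 < c := lt_of_lt_of_le (by positivity) h
    have hpos : 0 < y ^ 2 + x ^ 2 + 2 * y * x * c := by positivity
    have e := congrArg (· ^ 2) hf
    simp only [mul_pow, Real.sq_sqrt hpos.le] at e
    have hxy : 0 < x * y := by positivity
    have h3 : 2 * (x * y) ^ 2 ≤ y ^ 2 + x ^ 2 + 2 * y * x * c := by
      nlinarith [mul_le_mul_of_nonneg_left h hxy.le, sq_nonneg x, sq_nonneg y]
    have h4 : C ^ 2 * (2 * (x * y) ^ 2) ≤ 2 * (2 * (x * y) ^ 2) := by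
      calc _ ≤ C ^ 2 * (y ^ 2 + x ^ 2 + 2 * y * x * c) := by gcongr
        _ = _ := by rw [e]; ring
    exact le_of_mul_le_mul_right h4 (by positivity)
  have h5 := (Real.arcosh_le_arcosh hC (by positivity)).2 hle
  rw [Real.arcosh_cosh dist_nonneg] at h5
  refine h5.trans (le_of_eq ?_)
  rw [Real.arcosh, Real.sq_sqrt (by norm_num)]
  norm_num [add_comm]

/-- Starlike subsets of the hyperbolic plane are `arccosh √2 = log (1 + √2)`-quasiconvex
(Lemma 3.3 of the paper, applied to `X = ℍ`). -/
theorem starlike_quasiconvex_upperHalfPlane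
    (A : Set UpperHalfPlane) (a : UpperHalfPlane) (ha : a ∈ A)
    (hstar : ∀ z ∈ A, ∀ w : UpperHalfPlane, dist a w + dist w z = dist a z → w ∈ A) :
    ∀ z₁ ∈ A, ∀ z₂ ∈ A, ∀ w : UpperHalfPlane,
      dist z₁ w + dist w z₂ = dist z₁ z₂ →
        Metric.infDist w A ≤ Real.log (1 + Real.sqrt 2) := by
  intro z₁ h₁ z₂ h₂ w hw
  have main : ∀ z ∈ A, Real.cosh (dist a w) * Real.cosh (dist w z) ≤ Real.cosh (dist a z) →
      Metric.infDist w A ≤ Real.log (1 + Real.sqrt 2) := by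
    intro z hz h
    obtain ⟨p, hp, hd⟩ := sq_close a z w h
    exact (Metric.infDist_le_dist_of_mem (hstar z hz p hp)).trans hd
  by_cases c1 : Real.cosh (dist a w) * Real.cosh (dist w z₁) ≤ Real.cosh (dist a z₁)
  · exact main z₁ h₁ c1
  by_cases c2 : Real.cosh (dist a w) * Real.cosh (dist w z₂) ≤ Real.cosh (dist a z₂)
  · exact main z₂ h₂ c2
  exfalso
  push Not at c1 c2
  have hst := sq_stewart a z₁ z₂ w hw
  rw [← hw, Real.sinh_add] at hst
  rw [dist_comm w z₁] at c1
  have p1 : 0 < Real.sinh (dist z₁ w) := by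
    rw [Real.sinh_pos_iff, dist_pos]
    rintro rfl
    simp at c1
  have p2 : 0 ≤ Real.sinh (dist w z₂) := Real.sinh_nonneg_iff.2 dist_nonneg
  nlinarith [mul_lt_mul_of_pos_right c2 p1, mul_le_mul_of_nonneg_right c1.le p2]
end

section
/- Let ℍ be the hyperbolic plane (the upper half-plane with its hyperbolic metric). For D ≥ 0 set c(D) := 8π·tanh(D/4)/(1 − tanh(D/4)²), and for ε > 0 set 𝔯(ε) := log( (c(11ε/10) + c(ε/5)) · 30/(7ε) ). Let ε > 0, let h be a bijective self-isometry of ℍ, and suppose there is an isometric embedding γ : ℝ → ℍ (a geodesic line, the axis of h) and a real number l with 0 < l ≤ ε/10 such that h(γ(s)) = γ(s + l) for all s ∈ ℝ and τ(h) := ⨅_{x∈ℍ} dist(x, h(x)) = l. If A ∈ ℍ satisfies dist(A, h(A)) = ε, then there exist B ∈ ℍ and s₀ ∈ ℝ such that, with C := γ(s₀): dist(A,C) = infDist(A, range γ); B lies between A and C (dist(A,B) + dist(B,C) = dist(A,C)); dist(B, h(B)) = ε/3; and dist(A,B) ≤ 𝔯(ε). -/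
open UpperHalfPlane

/-- The constant `c(D) = 8π tanh(D/4) / (1 - tanh(D/4)²)` from Lemma 3.6. -/
noncomputable def cFun (D : ℝ) : ℝ :=
  8 * Real.pi * Real.tanh (D / 4) / (1 - Real.tanh (D / 4) ^ 2)

/-- The constant `𝔯(ε) = log ((c(11ε/10) + c(ε/5)) ⬝ 30/(7ε))` from Corollary 3.9. -/
noncomputable def rFun (ε : ℝ) : ℝ :=
  Real.log ((cFun (11 * ε / 10) + cFun (ε / 5)) * 30 / (7 * ε))

/-- Point at height `exp s` on the imaginary axis. -/
noncomputable def vt (s : ℝ) : UpperHalfPlane := ⟨⟨0, Real.exp s⟩, Real.exp_pos s⟩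

lemma vt_re (s : ℝ) : (vt s).re = 0 := rfl
lemma vt_im (s : ℝ) : (vt s).im = Real.exp s := rfl

/-- Fermi parametrization of the half circle of radius `R`. -/
noncomputable def fm (R : ℝ) (hR : 0 < R) (t : ℝ) : UpperHalfPlane :=
  ⟨⟨R * Real.sinh t / Real.cosh t, R / Real.cosh t⟩, div_pos hR (Real.cosh_pos t)⟩

lemma fm_re (R : ℝ) (hR : 0 < R) (t : ℝ) :
    (fm R hR t).re = R * Real.sinh t / Real.cosh t := rfl
lemma fm_im (R : ℝ) (hR : 0 < R) (t : ℝ) : (fm R hR t).im = R / Real.cosh t := rfl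

lemma abs_eq_of_cosh {x y : ℝ} (hx : 0 ≤ x) (h : Real.cosh x = Real.cosh y) : x = |y| := by
  have := Real.cosh_injOn (Set.mem_Ici.2 hx) (Set.mem_Ici.2 (abs_nonneg y))
    (by rw [Real.cosh_abs, h])
  exact this

lemma fm_dist (R : ℝ) (hR : 0 < R) (t u : ℝ) : dist (fm R hR t) (fm R hR u) = |t - u| := by
  apply abs_eq_of_cosh dist_nonneg
  rw [cosh_dist', fm_re, fm_im, fm_re, fm_im, Real.cosh_sub]
  have h1 := Real.cosh_sq t
  have h2 := Real.cosh_sq u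
  have h3 := Real.cosh_pos t
  have h4 := Real.cosh_pos u
  field_simp
  grind

lemma h_image (h : UpperHalfPlane ≃ᵢ UpperHalfPlane) (l : ℝ)
    (htrans : ∀ s : ℝ, h (vt s) = vt (s + l)) (z : UpperHalfPlane) :
    (h z).im = Real.exp l * z.im ∧
      ((h z).re = Real.exp l * z.re ∨ (h z).re = - (Real.exp l * z.re)) := by
  have key : ∀ s, Real.cosh (dist (h z) (vt (s + l))) = Real.cosh (dist z (vt s)) := by
    intro s
    rw [← htrans, h.dist_eq]
  have k0 := key 0
  have k1 := key (Real.log 2)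
  have hL := Real.exp_pos l
  have hw := (h z).im_pos
  have hz := z.im_pos
  simp only [cosh_dist', vt_re, vt_im, Real.exp_add, Real.exp_zero,
    Real.exp_log (by norm_num : (0:ℝ) < 2)] at k0 k1
  generalize Real.exp l = L at *
  generalize (h z).im = v at *
  generalize (h z).re = u at *
  generalize z.im = y at *
  generalize z.re = x at *
  field_simp at k0 k1
  have e1 : v = L * y := by
    have : 3 * L * (v - L * y) = 0 := by linarith
    have := (mul_eq_zero.1 this).resolve_left (by positivity)
    linarith
  subst e1
  refine ⟨rfl, ?_⟩
  apply sq_eq_sq_iff_eq_or_eq_neg.1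
  have : y * (u ^ 2 - (L * x) ^ 2) = 0 := by
    linear_combination k0
  have := (mul_eq_zero.1 this).resolve_left hz.ne'
  linarith

/-- squared hyperbolic cosine of the distance to the axis -/
noncomputable def qf (z : UpperHalfPlane) : ℝ := (z.re ^ 2 + z.im ^ 2) / z.im ^ 2

lemma cosh_exp (l : ℝ) : Real.cosh l = (Real.exp l ^ 2 + 1) / (2 * Real.exp l) := by
  rw [Real.cosh_eq, Real.exp_neg]
  have := Real.exp_pos l
  field_simp

lemma disp_pos (z w : UpperHalfPlane) (l : ℝ) (hi : w.im = Real.exp l * z.im)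
    (hr : w.re = Real.exp l * z.re) :
    Real.cosh (dist z w) = qf z * (Real.cosh l - 1) + 1 := by
  rw [cosh_dist', qf, cosh_exp, hi, hr]
  have := Real.exp_pos l
  have := z.im_pos
  field_simp
  ring

lemma disp_neg (z w : UpperHalfPlane) (l : ℝ) (hi : w.im = Real.exp l * z.im)
    (hr : w.re = -(Real.exp l * z.re)) :
    Real.cosh (dist z w) = qf z * (Real.cosh l + 1) - 1 := by
  rw [cosh_dist', qf, cosh_exp, hi, hr]
  have := Real.exp_pos l
  have := z.im_pos
  field_simp
  ring

lemma qf_pos (z : UpperHalfPlane) : 0 < qf z := by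
  have := z.im_pos
  unfold qf
  positivity

lemma disp_zero (z w : UpperHalfPlane) (l : ℝ) (hl : 0 < l) (hi : w.im = Real.exp l * z.im)
    (hz : z.re = 0) (hr : w.re = 0) : dist z w = l := by
  have h1 := disp_pos z w l hi (by rw [hz, hr]; ring)
  have : qf z = 1 := by
    have := z.im_pos
    rw [qf, hz]; field_simp; ring
  rw [this] at h1
  rw [abs_eq_of_cosh dist_nonneg (y := l) (by linarith), abs_of_pos hl]

lemma key_ratio (ε : ℝ) (hε : 0 < ε) (h : UpperHalfPlane ≃ᵢ UpperHalfPlane) (l : ℝ)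
    (hl0 : 0 < l) (hl : l ≤ ε / 10)
    (htrans : ∀ s : ℝ, h (vt s) = vt (s + l)) (A B : UpperHalfPlane)
    (hA : dist A (h A) = ε) (hB : dist B (h B) = ε / 3) :
    qf A ≤ (2 * Real.cosh (ε / 3) + 1) ^ 2 * qf B := by
  obtain ⟨iA, cA⟩ := h_image h l htrans A
  obtain ⟨iB, cB⟩ := h_image h l htrans B
  have c3 : Real.cosh ε = 4 * Real.cosh (ε / 3) ^ 3 - 3 * Real.cosh (ε / 3) := by
    rw [← Real.cosh_three_mul]; congr 1; ring
  have hl1 : 1 < Real.cosh l := Real.one_lt_cosh.2 hl0.ne'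
  have hE : 1 < Real.cosh (ε / 3) := Real.one_lt_cosh.2 (by positivity)
  have qB := qf_pos B
  have qA := qf_pos A
  have nA : A.re ≠ 0 := by
    intro h0
    have := disp_zero A (h A) l hl0 iA h0 (by rcases cA with c | c <;> simp [c, h0])
    linarith
  have nB : B.re ≠ 0 := by
    intro h0
    have := disp_zero B (h B) l hl0 iB h0 (by rcases cB with c | c <;> simp [c, h0])
    linarith
  have hd := congrArg Real.cosh (h.dist_eq A B)
  have hL := Real.exp_pos l
  have pA := A.im_pos
  have pB := B.im_pos
  have mixed : (h A).re * (h B).re = Real.exp l ^ 2 * (A.re * B.re) := by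
    have sA : (h A).re ^ 2 = (Real.exp l * A.re) ^ 2 := by rcases cA with c | c <;> rw [c]; ring
    have sB : (h B).re ^ 2 = (Real.exp l * B.re) ^ 2 := by rcases cB with c | c <;> rw [c]; ring
    rw [cosh_dist', cosh_dist', iA, iB] at hd
    field_simp at hd
    nlinarith
  have nAB : Real.exp l ^ 2 * (A.re * B.re) ≠ 0 := by positivity
  rcases cA with cA | cA <;> rcases cB with cB | cB
  · have dA := disp_pos _ _ l iA cA
    have dB := disp_pos _ _ l iB cB
    rw [hA, c3] at dA
    rw [hB] at dB
    generalize Real.cosh (ε / 3) = E at *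
    apply le_of_eq
    have : (Real.cosh l - 1) * (qf A - (2 * E + 1) ^ 2 * qf B) = 0 := by
      linear_combination (-1) * dA + (2 * E + 1) ^ 2 * dB
    have := (mul_eq_zero.1 this).resolve_left (by linarith)
    linarith
  · exfalso; rw [cA, cB] at mixed; apply nAB; linarith
  · exfalso; rw [cA, cB] at mixed; apply nAB; linarith
  · have dA := disp_neg _ _ l iA cA
    have dB := disp_neg _ _ l iB cB
    rw [hA, c3] at dA
    rw [hB] at dB
    generalize Real.cosh (ε / 3) = E at *
    have : (Real.cosh l + 1) * (qf A - (2 * E - 1) ^ 2 * qf B) = 0 := by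
      linear_combination (-1) * dA + (2 * E - 1) ^ 2 * dB
    have := (mul_eq_zero.1 this).resolve_left (by linarith)
    nlinarith

lemma cFun_eq (D : ℝ) : cFun D = 4 * Real.pi * Real.sinh (D / 2) := by
  have h2 : Real.sinh (D / 2) = 2 * Real.sinh (D / 4) * Real.cosh (D / 4) := by
    rw [← Real.sinh_two_mul]; congr 1; ring
  have h1 := Real.cosh_sq (D / 4)
  have hc := Real.cosh_pos (D / 4)
  have : 1 - Real.tanh (D / 4) ^ 2 = 1 / Real.cosh (D / 4) ^ 2 := by
    rw [Real.tanh_eq_sinh_div_cosh]; field_simp; linarith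
  rw [cFun, this, h2, Real.tanh_eq_sinh_div_cosh]
  field_simp
  ring

lemma final_bound (ε : ℝ) (hε : 0 < ε) :
    2 * (2 * Real.cosh (ε / 3) + 1) ≤
      (cFun (11 * ε / 10) + cFun (ε / 5)) * 30 / (7 * ε) := by
  rw [cFun_eq, cFun_eq]
  have hs : ε / 6 ≤ Real.sinh (ε / 6) := Real.self_le_sinh_iff.2 (by positivity)
  have h3 : Real.sinh (ε / 2) = (2 * Real.cosh (ε / 3) + 1) * Real.sinh (ε / 6) := by
    have a : Real.sinh (ε / 2) = 4 * Real.sinh (ε / 6) ^ 3 + 3 * Real.sinh (ε / 6) := by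
      rw [← Real.sinh_three_mul]; congr 1; ring
    have b : Real.cosh (ε / 3) = Real.cosh (ε / 6) ^ 2 + Real.sinh (ε / 6) ^ 2 := by
      rw [← Real.cosh_two_mul]; congr 1; ring
    rw [a, b, Real.cosh_sq]; ring
  have hm : Real.sinh (ε / 2) ≤ Real.sinh (11 * ε / 10 / 2) :=
    Real.sinh_le_sinh.2 (by linarith)
  have hp : 0 < Real.sinh (ε / 5 / 2) := Real.sinh_pos_iff.2 (by positivity)
  have hp2 : 0 < Real.sinh (ε / 2) := Real.sinh_pos_iff.2 (by positivity)
  have hpi := Real.pi_gt_three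
  have hc := Real.cosh_pos (ε / 3)
  rw [le_div_iff₀ (by positivity)]
  have e1 : (2 * Real.cosh (ε / 3) + 1) * (ε / 6) ≤ Real.sinh (ε / 2) := by
    rw [h3]; gcongr
  have e2 : 3 * Real.sinh (ε / 2) ≤
      Real.pi * (Real.sinh (11 * ε / 10 / 2) + Real.sinh (ε / 5 / 2)) := by
    apply mul_le_mul <;> linarith
  nlinarith

lemma vertical_case (ε : ℝ) (hε : 0 < ε)
    (h : UpperHalfPlane ≃ᵢ UpperHalfPlane)
    (l : ℝ) (hl0 : 0 < l) (hl : l ≤ ε / 10)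
    (htrans : ∀ s : ℝ, h (vt s) = vt (s + l))
    (A : UpperHalfPlane) (hA : dist A (h A) = ε) :
    ∃ (B : UpperHalfPlane) (s₀ : ℝ),
      (∀ s, dist A (vt s₀) ≤ dist A (vt s)) ∧
      dist A B + dist B (vt s₀) = dist A (vt s₀) ∧
      dist B (h B) = ε / 3 ∧
      dist A B ≤ rFun ε := by
  have hy := A.im_pos
  set R := √(A.re ^ 2 + A.im ^ 2) with hRdef
  have hR : 0 < R := Real.sqrt_pos.2 (by positivity)
  have hR2 : R ^ 2 = A.re ^ 2 + A.im ^ 2 := Real.sq_sqrt (by positivity)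
  set a := Real.arsinh (A.re / A.im) with ha
  have hca : Real.cosh a = R / A.im := by
    rw [ha, Real.cosh_arsinh, hRdef, ← Real.sqrt_sq hy.le, ← Real.sqrt_div (by positivity),
      Real.sqrt_sq hy.le]
    congr 1
    field_simp
    ring
  have hsa : Real.sinh a = A.re / A.im := Real.sinh_arsinh _
  have hAf : A = fm R hR a := by
    apply ext_re_im
    · rw [fm_re, hca, hsa]; field_simp
    · rw [fm_im, hca]; field_simp
  have hCf : vt (Real.log R) = fm R hR 0 := by
    apply ext_re_im
    · rw [fm_re, vt_re]; simp
    · rw [fm_im, vt_im, Real.exp_log hR]; simp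
  have hiso : Isometry (fm R hR) := Isometry.of_dist_eq fun t u => by
    rw [fm_dist, Real.dist_eq]
  have hcont : Continuous fun t => dist (fm R hR t) (h (fm R hR t)) :=
    hiso.continuous.dist (h.continuous.comp hiso.continuous)
  have f0 : dist (fm R hR 0) (h (fm R hR 0)) = l := by
    rw [← hCf, htrans]
    apply disp_zero _ _ _ hl0 _ rfl rfl
    rw [vt_im, vt_im, Real.exp_add, mul_comm]
  have fa : dist (fm R hR a) (h (fm R hR a)) = ε := by rw [← hAf, hA]
  obtain ⟨t, ht, hft⟩ : ε / 3 ∈ (fun t => dist (fm R hR t) (h (fm R hR t))) '' Set.uIcc 0 a := by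
    apply intermediate_value_uIcc hcont.continuousOn
    simp only [f0, fa]
    rw [Set.uIcc_of_le (by linarith)]
    constructor <;> linarith
  simp only at hft
  have habs : |a| = |a - t| + |t| := by
    rcases Set.mem_uIcc.1 ht with ⟨h1, h2⟩ | ⟨h1, h2⟩
    · rw [abs_of_nonneg h1, abs_of_nonneg (by linarith : 0 ≤ a),
        abs_of_nonneg (by linarith : 0 ≤ a - t)]; ring
    · rw [abs_of_nonpos h2, abs_of_nonpos (by linarith : a ≤ 0),
        abs_of_nonpos (by linarith : a - t ≤ 0)]; ring
  have qfm : ∀ u, qf (fm R hR u) = Real.cosh u ^ 2 := by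
    intro u
    have := Real.cosh_pos u
    rw [qf, fm_re, fm_im]
    field_simp
    rw [Real.cosh_sq]
  refine ⟨fm R hR t, Real.log R, ?_, ?_, hft, ?_⟩
  · intro s
    have : Real.cosh (dist A (vt (Real.log R))) ≤ Real.cosh (dist A (vt s)) := by
      rw [hCf, hAf, fm_dist, Real.cosh_abs, sub_zero, cosh_dist', fm_re, fm_im, vt_re, vt_im]
      have hc := Real.cosh_pos a
      have hs := Real.exp_pos s
      have := Real.cosh_sq a
      rw [le_div_iff₀ (by positivity)]
      have e : (R * Real.sinh a / Real.cosh a - 0) ^ 2 + (R / Real.cosh a) ^ 2 = R ^ 2 := by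
        field_simp; rw [this]; ring
      rw [e]
      have : Real.cosh a * (2 * (R / Real.cosh a) * Real.exp s) = 2 * R * Real.exp s := by
        field_simp
      rw [this]
      nlinarith [sq_nonneg (R - Real.exp s)]
    rwa [Real.cosh_le_cosh, abs_of_nonneg dist_nonneg, abs_of_nonneg dist_nonneg] at this
  · rw [hCf, hAf, fm_dist, fm_dist, fm_dist, sub_zero, sub_zero, habs]
  · have hk := key_ratio ε hε h l hl0 hl htrans (fm R hR a) (fm R hR t) fa hft
    rw [qfm, qfm, ← mul_pow] at hk
    have hE := Real.cosh_pos (ε / 3)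
    have hk := abs_le_of_sq_le_sq hk (by have := Real.cosh_pos t; positivity)
    have hk : Real.cosh a ≤ (2 * Real.cosh (ε / 3) + 1) * Real.cosh t := (le_abs_self _).trans hk
    rw [hAf, fm_dist, rFun, Real.le_log_iff_exp_le
      (lt_of_lt_of_le (by positivity) (final_bound ε hε))]
    refine le_trans ?_ (final_bound ε hε)
    have h1 : Real.exp (|a - t|) * Real.exp |t| ≤ 2 * Real.cosh a := by
      rw [← Real.exp_add, ← habs, ← Real.cosh_abs a, Real.cosh_eq]
      have := Real.exp_pos (-|a|)
      linarith
    have h2 : Real.cosh t ≤ Real.exp |t| := by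
      rw [← Real.cosh_abs, Real.cosh_eq]
      have : Real.exp (-|t|) ≤ Real.exp |t| := Real.exp_le_exp.2 (by
        have := abs_nonneg t; linarith)
      linarith
    have h3 := Real.cosh_pos t
    have h4 : Real.exp (|a - t|) * Real.cosh t ≤
        (2 * (2 * Real.cosh (ε / 3) + 1)) * Real.cosh t := by
      have := mul_le_mul_of_nonneg_left h2 (Real.exp_pos (|a - t|)).le
      linarith
    exact le_of_mul_le_mul_right h4 h3

/-- translation -/
noncomputable def trE (a : ℝ) : UpperHalfPlane ≃ᵢ UpperHalfPlane :=
  IsometryEquiv.mk' (fun z => a +ᵥ z) (fun z => (-a) +ᵥ z) (fun z => by simp)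
    (isometry_real_vadd a)

/-- scaling -/
noncomputable def scE (a : {x : ℝ // 0 < x}) : UpperHalfPlane ≃ᵢ UpperHalfPlane :=
  IsometryEquiv.mk' (fun z => a • z) (fun z => a⁻¹ • z) (fun z => by simp)
    (isometry_pos_mul a)

/-- inversion -/
noncomputable def inE : UpperHalfPlane ≃ᵢ UpperHalfPlane :=
  IsometryEquiv.constSMul (ModularGroup.S : Matrix.SpecialLinearGroup (Fin 2) ℝ)

lemma trE_re (a : ℝ) (z : UpperHalfPlane) : (trE a z).re = a + z.re := vadd_re a z
lemma trE_im (a : ℝ) (z : UpperHalfPlane) : (trE a z).im = z.im := vadd_im a z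
lemma scE_re (a : {x : ℝ // 0 < x}) (z : UpperHalfPlane) : (scE a z).re = a * z.re :=
  pos_real_re a z
lemma scE_im (a : {x : ℝ // 0 < x}) (z : UpperHalfPlane) : (scE a z).im = a * z.im :=
  pos_real_im a z
lemma inE_re (z : UpperHalfPlane) : (inE z).re = - z.re / (z.re ^ 2 + z.im ^ 2) := by
  have : inE z = ModularGroup.S • z := rfl
  rw [this, modular_S_smul, mk_re, Complex.inv_re, Complex.normSq_apply]
  simp [pow_two]
lemma inE_im (z : UpperHalfPlane) : (inE z).im = z.im / (z.re ^ 2 + z.im ^ 2) := by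
  have : inE z = ModularGroup.S • z := rfl
  rw [this, modular_S_smul, mk_im, Complex.inv_im, Complex.normSq_apply]
  simp [pow_two]

lemma exists_same_re (p q : UpperHalfPlane) :
    ∃ φ : UpperHalfPlane ≃ᵢ UpperHalfPlane, (φ p).re = (φ q).re := by
  by_cases hpq : p.re = q.re
  · exact ⟨IsometryEquiv.refl _, hpq⟩
  have hne : p.re - q.re ≠ 0 := sub_ne_zero.2 hpq
  have hp := p.im_pos
  have hq := q.im_pos
  obtain ⟨c, hc⟩ : ∃ c, (p.re - c) ^ 2 + p.im ^ 2 = (q.re - c) ^ 2 + q.im ^ 2 := by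
    refine ⟨(p.re ^ 2 + p.im ^ 2 - q.re ^ 2 - q.im ^ 2) / (2 * (p.re - q.re)), ?_⟩
    field_simp
    ring
  obtain ⟨r, hr, hr2⟩ : ∃ r, 0 < r ∧ r ^ 2 = (p.re - c) ^ 2 + p.im ^ 2 :=
    ⟨√((p.re - c) ^ 2 + p.im ^ 2), Real.sqrt_pos.2 (by positivity), Real.sq_sqrt (by positivity)⟩
  have aux : ∀ z : UpperHalfPlane, r ^ 2 = (z.re - c) ^ 2 + z.im ^ 2 →
      (inE (trE (r - c) z)).re = -1 / (2 * r) := by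
    intro z hz
    have hzi := z.im_pos
    rw [inE_re, trE_re, trE_im, div_eq_div_iff (by positivity) (by positivity)]
    linear_combination (-1) * hz
  exact ⟨(trE (r - c)).trans inE, (aux p hr2).trans (aux q (hr2.trans hc)).symm⟩

lemma exists_norm (p q : UpperHalfPlane) (hpq : dist p q = 1) :
    ∃ φ : UpperHalfPlane ≃ᵢ UpperHalfPlane, φ p = vt 0 ∧ φ q = vt 1 := by
  obtain ⟨φ₁, h1⟩ := exists_same_re p q
  set φ₂ := (φ₁.trans (trE (-(φ₁ p).re))).trans (scE ⟨(φ₁ p).im⁻¹, inv_pos.2 (φ₁ p).im_pos⟩)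
    with hφ₂
  have hp := (φ₁ p).im_pos
  have e1 : φ₂ p = vt 0 := by
    apply ext_re_im
    · simp [hφ₂, scE_re, trE_re, vt_re]
    · simp [hφ₂, scE_im, trE_im, vt_im, hp.ne']
  have e2 : (φ₂ q).re = 0 := by
    simp [hφ₂, scE_re, trE_re, h1]
  have hd : dist (φ₂ p) (φ₂ q) = 1 := by rw [φ₂.dist_eq, hpq]
  have hqp := (φ₂ q).im_pos
  rw [dist_of_re_eq (by rw [e1, e2, vt_re]), e1, vt_im, Real.exp_zero, Real.log_one,
    Real.dist_eq, zero_sub, abs_neg] at hd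
  rcases (abs_eq (by norm_num)).1 hd with hd | hd
  · refine ⟨φ₂, e1, ext_re_im (by rw [e2, vt_re]) ?_⟩
    rw [vt_im, ← hd, Real.exp_log hqp]
  · refine ⟨φ₂.trans inE, ?_, ?_⟩
    · change inE (φ₂ p) = _
      rw [e1]
      apply ext_re_im
      · rw [inE_re, vt_re]; simp
      · rw [inE_im, vt_re, vt_im]; simp
    · change inE (φ₂ q) = _
      have : (φ₂ q).im = Real.exp (-1) := by rw [← hd, Real.exp_log hqp]
      apply ext_re_im
      · rw [inE_re, e2, vt_re]; simp
      · rw [inE_im, vt_im, e2, this, Real.exp_neg]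
        have := Real.exp_pos 1
        field_simp
        simp

lemma vt_unique (w : UpperHalfPlane) (s : ℝ) (h0 : dist w (vt 0) = |s|)
    (h1 : dist w (vt 1) = |s - 1|) : w = vt s := by
  have k0 := congrArg Real.cosh h0
  have k1 := congrArg Real.cosh h1
  rw [Real.cosh_abs, cosh_dist', vt_re, vt_im] at k0 k1
  rw [cosh_exp] at k0 k1
  rw [Real.exp_sub] at k1
  rw [Real.exp_zero] at k0
  have hw := w.im_pos
  have hs := Real.exp_pos s
  have he : 1 < Real.exp 1 := by
    have := Real.add_one_lt_exp (x := 1) one_ne_zero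
    linarith
  have he0 : 0 < Real.exp 1 := by linarith
  have hx : w.im = Real.exp s ∧ w.re ^ 2 = 0 := by
    generalize Real.exp 1 = e at *
    generalize Real.exp s = S at *
    generalize w.im = y at *
    generalize w.re = x at *
    field_simp at k0 k1
    have a1 : (e ^ 2 - 1) * (S - y) = 0 := by linarith
    have a2 : y = S := by
      have := (mul_eq_zero.1 a1).resolve_left (by nlinarith)
      linarith
    subst a2
    refine ⟨rfl, ?_⟩
    have : y * x ^ 2 = 0 := by linarith
    exact (mul_eq_zero.1 this).resolve_left hw.ne'
  exact ext_re_im (by rw [vt_re]; exact pow_eq_zero_iff (two_ne_zero) |>.1 hx.2) hx.1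

/-- Corollary 3.9 (margulis distance) for the hyperbolic plane: if `h` is a hyperbolic
isometry with axis `γ` and translation length `l ≤ ε/10`, and `dist A (h A) = ε`, then
on the shortest geodesic from `A` to the axis there is a point `B` with
`dist B (h B) = ε/3` and `dist A B ≤ 𝔯(ε)`. -/
theorem margulis_distance (ε : ℝ) (hε : 0 < ε)
    (h : UpperHalfPlane ≃ᵢ UpperHalfPlane) (γ : ℝ → UpperHalfPlane) (hγ : Isometry γ)
    (l : ℝ) (hl0 : 0 < l) (hl : l ≤ ε / 10)
    (htrans : ∀ s : ℝ, h (γ s) = γ (s + l))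
    (hτ : (⨅ x : UpperHalfPlane, dist x (h x)) = l)
    (A : UpperHalfPlane) (hA : dist A (h A) = ε) :
    ∃ (B : UpperHalfPlane) (s₀ : ℝ),
      dist A (γ s₀) = Metric.infDist A (Set.range γ) ∧
      dist A B + dist B (γ s₀) = dist A (γ s₀) ∧
      dist B (h B) = ε / 3 ∧
      dist A B ≤ rFun ε := by
  obtain ⟨φ, p0, p1⟩ := exists_norm (γ 0) (γ 1) (by rw [hγ.dist_eq]; simp)
  have hφγ : ∀ s, φ (γ s) = vt s := by
    intro s
    apply vt_unique
    · rw [← p0, φ.dist_eq, hγ.dist_eq, Real.dist_eq, sub_zero]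
    · rw [← p1, φ.dist_eq, hγ.dist_eq, Real.dist_eq]
  have hsymm : ∀ s, φ.symm (vt s) = γ s := by
    intro s
    rw [← hφγ, φ.symm_apply_apply]
  set k := (φ.symm.trans h).trans φ with hk
  have hkd : ∀ z, k z = φ (h (φ.symm z)) := fun z => rfl
  obtain ⟨B, s₀, b1, b2, b3, b4⟩ := vertical_case ε hε k l hl0 hl
    (by intro s; rw [hkd, hsymm, htrans, hφγ]) (φ A)
    (by rw [hkd, φ.symm_apply_apply, φ.dist_eq, hA])
  have hB : φ (φ.symm B) = B := φ.apply_symm_apply B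
  refine ⟨φ.symm B, s₀, ?_, ?_, ?_, ?_⟩
  · apply le_antisymm
    · refine (Metric.le_infDist (Set.range_nonempty γ)).2 ?_
      rintro _ ⟨s, rfl⟩
      rw [← φ.dist_eq, ← φ.dist_eq A (γ s), hφγ, hφγ]
      exact b1 s
    · exact Metric.infDist_le_dist_of_mem ⟨s₀, rfl⟩
  · rw [← φ.dist_eq, ← φ.dist_eq (φ.symm B), ← φ.dist_eq A (γ s₀), hφγ, hB]
    exact b2
  · rw [← φ.dist_eq, hB]
    exact b3
  · rw [← φ.dist_eq, hB]
    exact b4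
end

section
/- There exists a constant C > 0 with the following property. Let f, g ∈ SL(2,ℝ) be non-elliptic (|trace| ≥ 2 and not equal to ±identity), and suppose the subgroup Γ of SL(2,ℝ) generated by f and g is discrete and is not virtually abelian. Then there exist an element h ∈ Γ which is a product of at most C factors, each equal to f, f⁻¹, g, or g⁻¹, and a positive integer N ≤ C, such that the images of f^N and h in PSL(2,ℝ) = SL(2,ℝ)/{±1} generate a free group of rank two (the homomorphism from the free group on two generators to PSL(2,ℝ) determined by f^N and h is injective). -/
open UpperHalfPlane

/-- `SL(2,ℝ)`. -/
abbrev SL2R := Matrix.SpecialLinearGroup (Fin 2) ℝ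

/-- A group is virtually abelian if it has an abelian finite-index subgroup. -/
def VirtuallyAbelian (G : Type*) [Group G] : Prop :=
  ∃ H : Subgroup G, H.FiniteIndex ∧ ∀ a ∈ H, ∀ b ∈ H, a * b = b * a

/-- A subgroup of `SL(2,ℝ)` is discrete if the identity is isolated in it. -/
def IsDiscreteSubgroup (Γ : Subgroup SL2R) : Prop :=
  ∃ U : Set (Matrix (Fin 2) (Fin 2) ℝ), IsOpen U ∧ (1 : Matrix (Fin 2) (Fin 2) ℝ) ∈ U ∧
    ∀ γ ∈ Γ, (γ : Matrix (Fin 2) (Fin 2) ℝ) ∈ U → γ = 1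

/-- An element of `SL(2,ℝ)` is non-elliptic iff `|trace| ≥ 2` and it is not `±1`. -/
def NonElliptic (g : SL2R) : Prop :=
  2 ≤ |Matrix.trace (g : Matrix (Fin 2) (Fin 2) ℝ)| ∧
    (g : Matrix (Fin 2) (Fin 2) ℝ) ≠ 1 ∧ (g : Matrix (Fin 2) (Fin 2) ℝ) ≠ -1


namespace QTA

set_option linter.unusedSimpArgs false

/-- trace of an element of `SL(2,ℝ)`, written with entries -/
noncomputable def tr (A : SL2R) : ℝ := A.1 0 0 + A.1 1 1

theorem m00 (A B : SL2R) : (A * B).1 0 0 = A.1 0 0 * B.1 0 0 + A.1 0 1 * B.1 1 0 := by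
  simp [Matrix.mul_apply, Fin.sum_univ_two]
theorem m01 (A B : SL2R) : (A * B).1 0 1 = A.1 0 0 * B.1 0 1 + A.1 0 1 * B.1 1 1 := by
  simp [Matrix.mul_apply, Fin.sum_univ_two]
theorem m10 (A B : SL2R) : (A * B).1 1 0 = A.1 1 0 * B.1 0 0 + A.1 1 1 * B.1 1 0 := by
  simp [Matrix.mul_apply, Fin.sum_univ_two]
theorem m11 (A B : SL2R) : (A * B).1 1 1 = A.1 1 0 * B.1 0 1 + A.1 1 1 * B.1 1 1 := by
  simp [Matrix.mul_apply, Fin.sum_univ_two]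
theorem i00 (A : SL2R) : (A⁻¹).1 0 0 = A.1 1 1 := by
  simp [Matrix.SpecialLinearGroup.coe_inv, Matrix.adjugate_fin_two]
theorem i01 (A : SL2R) : (A⁻¹).1 0 1 = - A.1 0 1 := by
  simp [Matrix.SpecialLinearGroup.coe_inv, Matrix.adjugate_fin_two]
theorem i10 (A : SL2R) : (A⁻¹).1 1 0 = - A.1 1 0 := by
  simp [Matrix.SpecialLinearGroup.coe_inv, Matrix.adjugate_fin_two]
theorem i11 (A : SL2R) : (A⁻¹).1 1 1 = A.1 0 0 := by
  simp [Matrix.SpecialLinearGroup.coe_inv, Matrix.adjugate_fin_two]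
theorem o00 : (1 : SL2R).1 0 0 = 1 := by simp
theorem o01 : (1 : SL2R).1 0 1 = 0 := by simp
theorem o10 : (1 : SL2R).1 1 0 = 0 := by simp
theorem o11 : (1 : SL2R).1 1 1 = 1 := by simp
theorem dt (A : SL2R) : A.1 0 0 * A.1 1 1 - A.1 0 1 * A.1 1 0 = 1 := by
  have := A.2
  rwa [Matrix.det_fin_two] at this

theorem ext4 {A B : SL2R} (h0 : A.1 0 0 = B.1 0 0) (h1 : A.1 0 1 = B.1 0 1)
    (h2 : A.1 1 0 = B.1 1 0) (h3 : A.1 1 1 = B.1 1 1) : A = B := by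
  apply Subtype.ext
  ext i j
  fin_cases i <;> fin_cases j <;> assumption

/-- build an element from entries -/
def mk4 (a b c d : ℝ) (h : a * d - b * c = 1) : SL2R :=
  ⟨!![a, b; c, d], by rw [Matrix.det_fin_two_of]; exact h⟩

theorem mk00 (a b c d : ℝ) (h) : (mk4 a b c d h).1 0 0 = a := rfl
theorem mk01 (a b c d : ℝ) (h) : (mk4 a b c d h).1 0 1 = b := rfl
theorem mk10 (a b c d : ℝ) (h) : (mk4 a b c d h).1 1 0 = c := rfl
theorem mk11 (a b c d : ℝ) (h) : (mk4 a b c d h).1 1 1 = d := rfl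

theorem tr_mul_comm (A B : SL2R) : tr (A * B) = tr (B * A) := by
  simp only [tr, m00, m11]; ring

theorem tr_inv (A : SL2R) : tr A⁻¹ = tr A := by
  simp only [tr, i00, i11]; ring

theorem tr_mul_inv (A B : SL2R) : tr (A * B⁻¹) = tr A * tr B - tr (A * B) := by
  simp only [tr, m00, m11, i00, i11, i01, i10]; ring

theorem tr_conj (B A : SL2R) : tr (B * A * B⁻¹) = tr A := by
  rw [tr_mul_comm]; congr 1; group

theorem tr_conj' (B A : SL2R) : tr (B⁻¹ * A * B) = tr A := by
  rw [tr_mul_comm]; congr 1; group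

theorem tr_one : tr 1 = 2 := by simp only [tr, o00, o11]; norm_num

theorem tr_sq (A : SL2R) : tr (A * A) = tr A ^ 2 - 2 := by
  have h := tr_mul_inv A A
  rw [mul_inv_cancel, tr_one] at h
  linarith

theorem tr_sq_mul (A B : SL2R) : tr (A * A * B) = tr A * tr (A * B) - tr B := by
  have h := tr_mul_inv (A * B) A
  rw [show A * B * A⁻¹ = A * B * A⁻¹ from rfl, tr_conj, tr_mul_comm (A * B) A, ← mul_assoc] at h
  linarith

/-- trace of the commutator minus two -/
noncomputable def th (A B : SL2R) : ℝ := tr (A * B * A⁻¹ * B⁻¹) - 2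

theorem tr_mul_conj (A B : SL2R) : tr (A * (B * A * B⁻¹)) = tr A ^ 2 - 2 - th A B := by
  have h1 := tr_mul_inv A (B * A * B⁻¹)
  rw [tr_conj] at h1
  have h2 : A * (B * A * B⁻¹)⁻¹ = A * B * A⁻¹ * B⁻¹ := by group
  rw [h2] at h1
  unfold th
  linarith

theorem th_eq (A B : SL2R) :
    th A B = tr A ^ 2 + tr B ^ 2 + tr (A * B) ^ 2 - tr A * tr B * tr (A * B) - 4 := by
  have h1 := tr_mul_conj A B
  have h2 : A * (B * A * B⁻¹) = (A * B * A) * B⁻¹ := by group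
  rw [h2, tr_mul_inv] at h1
  have h3 : A * B * A * B = (A * B) * (A * B) := by group
  rw [h3, tr_sq, tr_mul_comm (A * B) A, ← mul_assoc, tr_sq_mul] at h1
  linarith

theorem th_conj (A B : SL2R) :
    th A (B * A * B⁻¹) = th A B * (th A B - (tr A ^ 2 - 4)) := by
  rw [th_eq A (B * A * B⁻¹), tr_conj, tr_mul_conj]
  ring

theorem th_sq_left (A B : SL2R) : th (A * A) B = tr A ^ 2 * th A B := by
  rw [th_eq, th_eq, tr_sq, tr_sq_mul]; ring

theorem th_sq_right (A B : SL2R) : th A (B * B) = tr B ^ 2 * th A B := by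
  have h : tr (A * (B * B)) = tr B * tr (A * B) - tr A := by
    rw [tr_mul_comm, tr_sq_mul, tr_mul_comm B A]
  rw [th_eq, th_eq, tr_sq, h]; ring

theorem th_comm_right (A B : SL2R) :
    th (A * B * A⁻¹ * B⁻¹) B = th A B * (th A B + 4 - tr B ^ 2) := by
  have h1 : tr (A * B * A⁻¹ * B⁻¹) = th A B + 2 := by unfold th; ring
  have h2 : tr (A * B * A⁻¹ * B⁻¹ * B) = tr B := by
    rw [inv_mul_cancel_right, tr_conj]
  rw [th_eq (A * B * A⁻¹ * B⁻¹) B, h1, h2]; ring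

theorem th_of_commute {A B : SL2R} (h : A * B = B * A) : th A B = 0 := by
  have : A * B * A⁻¹ * B⁻¹ = 1 := by rw [h]; group
  unfold th; rw [this, tr_one]; ring

/-- discreteness in coordinates conjugated by `P` -/
theorem disc {Γ : Subgroup SL2R} (hΓ : IsDiscreteSubgroup Γ) (P : SL2R) {A : SL2R} (hA : A ∈ Γ) :
    ∃ ε > 0, ∀ B ∈ Γ, |(P⁻¹ * B * P).1 0 0 - (P⁻¹ * A * P).1 0 0| < ε →
      |(P⁻¹ * B * P).1 0 1 - (P⁻¹ * A * P).1 0 1| < ε →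
      |(P⁻¹ * B * P).1 1 0 - (P⁻¹ * A * P).1 1 0| < ε →
      |(P⁻¹ * B * P).1 1 1 - (P⁻¹ * A * P).1 1 1| < ε → B = A := by
  obtain ⟨U, hU, h1, hd⟩ := hΓ
  let φ : ℝ × ℝ × ℝ × ℝ → Matrix (Fin 2) (Fin 2) ℝ :=
    fun x => P.1 * !![x.1, x.2.1; x.2.2.1, x.2.2.2] * (P⁻¹ * A⁻¹ : SL2R).1
  have hφ : Continuous φ := by
    refine Continuous.matrix_mul (Continuous.matrix_mul continuous_const ?_) continuous_const
    refine continuous_matrix ?_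
    intro i j
    fin_cases i <;> fin_cases j <;> simp <;> fun_prop
  let e : SL2R → ℝ × ℝ × ℝ × ℝ := fun M => (M.1 0 0, M.1 0 1, M.1 1 0, M.1 1 1)
  have hφB : ∀ B : SL2R, φ (e (P⁻¹ * B * P)) = (B * A⁻¹).1 := by
    intro B
    have h1 : B * A⁻¹ = P * (P⁻¹ * B * P) * (P⁻¹ * A⁻¹) := by group
    have h2 : !![(P⁻¹ * B * P).1 0 0, (P⁻¹ * B * P).1 0 1; (P⁻¹ * B * P).1 1 0,
        (P⁻¹ * B * P).1 1 1] = (P⁻¹ * B * P).1 := (Matrix.eta_fin_two _).symm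
    rw [h1]
    simp only [φ, e]
    rw [h2]
    simp only [Matrix.SpecialLinearGroup.coe_mul]
  have hopen : IsOpen (φ ⁻¹' U) := hU.preimage hφ
  have hmem : e (P⁻¹ * A * P) ∈ φ ⁻¹' U := by
    show φ _ ∈ U
    rw [hφB, mul_inv_cancel]; exact h1
  obtain ⟨ε, hε, hb⟩ := Metric.isOpen_iff.1 hopen _ hmem
  refine ⟨ε, hε, fun B hB e0 e1 e2 e3 => ?_⟩
  have hm : e (P⁻¹ * B * P) ∈ φ ⁻¹' U := by
    apply hb
    simp only [Metric.mem_ball, Prod.dist_eq, Real.dist_eq, max_lt_iff, e]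
    exact ⟨e0, e1, e2, e3⟩
  have hm' : (B * A⁻¹).1 ∈ U := by rw [← hφB]; exact hm
  have := hd (B * A⁻¹) (Γ.mul_mem hB (Γ.inv_mem hA)) hm'
  exact mul_inv_eq_one.1 this

/-- a real eigenvector can be moved to the first basis vector -/
theorem exists_tri (A : SL2R) (l : ℝ) (hl : l ^ 2 - tr A * l + 1 = 0) :
    ∃ P : SL2R, (P⁻¹ * A * P).1 1 0 = 0 ∧ (P⁻¹ * A * P).1 0 0 = l := by
  have hd := dt A
  obtain ⟨x, y, hxy, h1, h2⟩ : ∃ x y : ℝ, x ^ 2 + y ^ 2 ≠ 0 ∧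
      A.1 0 0 * x + A.1 0 1 * y = l * x ∧ A.1 1 0 * x + A.1 1 1 * y = l * y := by
    unfold tr at hl
    by_cases hb : A.1 0 1 = 0 ∧ A.1 0 0 - l = 0
    · by_cases hc : A.1 1 0 = 0 ∧ A.1 1 1 - l = 0
      · refine ⟨1, 0, by norm_num, ?_, ?_⟩
        · linear_combination hb.2
        · linear_combination hc.1
      · refine ⟨A.1 1 1 - l, - A.1 1 0, ?_, ?_, ?_⟩
        · intro h
          apply hc
          constructor
          · nlinarith [sq_nonneg (A.1 1 0), sq_nonneg (A.1 1 1 - l)]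
          · nlinarith [sq_nonneg (A.1 1 0), sq_nonneg (A.1 1 1 - l)]
        · linear_combination (A.1 1 1 - l) * hb.2 - A.1 1 0 * hb.1
        · ring
    · refine ⟨A.1 0 1, l - A.1 0 0, ?_, ?_, ?_⟩
      · intro h
        apply hb
        constructor
        · nlinarith [sq_nonneg (A.1 0 1), sq_nonneg (l - A.1 0 0)]
        · nlinarith [sq_nonneg (A.1 0 1), sq_nonneg (l - A.1 0 0)]
      · ring
      · linear_combination - hl - hd
  set r := x ^ 2 + y ^ 2 with hr
  refine ⟨mk4 x (-y / r) y (x / r) (by field_simp; rw [hr]; ring), ?_, ?_⟩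
  · simp only [m00, m01, m10, m11, i00, i01, i10, i11, mk00, mk01, mk10, mk11]
    linear_combination - y * h1 + x * h2
  · simp only [m00, m10, m01, m11, i00, i01, i10, i11, mk00, mk01, mk10, mk11]
    field_simp
    rw [hr]
    linear_combination x * h1 + y * h2

theorem exists_diag (A : SL2R) (hA : 4 < tr A ^ 2) :
    ∃ P : SL2R, (P⁻¹ * A * P).1 1 0 = 0 ∧ (P⁻¹ * A * P).1 0 1 = 0 ∧
      1 < (P⁻¹ * A * P).1 0 0 ^ 2 := by
  obtain ⟨l, hl, hl1⟩ : ∃ l : ℝ, l ^ 2 - tr A * l + 1 = 0 ∧ 1 < l ^ 2 := by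
    have hs := Real.sq_sqrt (show 0 ≤ tr A ^ 2 - 4 by linarith)
    have hp := Real.sqrt_pos.2 (show 0 < tr A ^ 2 - 4 by linarith)
    set s := Real.sqrt (tr A ^ 2 - 4)
    rcases le_total 0 (tr A) with h | h
    · exact ⟨(tr A + s) / 2, by nlinarith, by nlinarith [mul_nonneg h hp.le]⟩
    · exact ⟨(tr A - s) / 2, by nlinarith, by nlinarith [mul_nonneg (neg_nonneg.2 h) hp.le]⟩
  obtain ⟨P, h1, h2⟩ := exists_tri A l hl
  set M := P⁻¹ * A * P with hM
  have hd := dt M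
  rw [h1, h2] at hd
  have hne : l - M.1 1 1 ≠ 0 := by
    intro h
    have : M.1 1 1 = l := by linarith
    rw [this] at hd
    nlinarith
  let Q : SL2R := mk4 1 (- M.1 0 1 / (l - M.1 1 1)) 0 1 (by ring)
  have hQ : (P * Q)⁻¹ * A * (P * Q) = Q⁻¹ * M * Q := by rw [hM]; group
  refine ⟨P * Q, ?_, ?_, ?_⟩
  · rw [hQ]
    simp only [Q, m00, m10, m01, m11, i00, i01, i10, i11, mk00, mk01, mk10, mk11, h1]; ring
  · rw [hQ]
    simp only [Q, m00, m10, m01, m11, i00, i01, i10, i11, mk00, mk01, mk10, mk11, h1, h2]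
    field_simp; ring
  · rw [hQ]
    simp only [Q, m00, m10, m01, m11, i00, i01, i10, i11, mk00, mk01, mk10, mk11, h1, h2]
    nlinarith

theorem exists_rot (A : SL2R) (hA : tr A ^ 2 < 4) :
    ∃ (P : SL2R) (s : ℝ), s ≠ 0 ∧ s ^ 2 = 1 - tr A ^ 2 / 4 ∧
      (P⁻¹ * A * P).1 0 0 = tr A / 2 ∧ (P⁻¹ * A * P).1 1 1 = tr A / 2 ∧
      (P⁻¹ * A * P).1 0 1 = - s ∧ (P⁻¹ * A * P).1 1 0 = s := by
  have hd := dt A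
  have hc : A.1 1 0 ≠ 0 := by
    intro h
    rw [h] at hd
    unfold tr at hA
    nlinarith [sq_nonneg (A.1 0 0 - A.1 1 1)]
  obtain ⟨s, hs, hs0, hsc⟩ : ∃ s : ℝ, s ^ 2 = 1 - tr A ^ 2 / 4 ∧ s ≠ 0 ∧ 0 < s / A.1 1 0 := by
    have hq := Real.sq_sqrt (show 0 ≤ 1 - tr A ^ 2 / 4 by linarith)
    have hp := Real.sqrt_pos.2 (show 0 < 1 - tr A ^ 2 / 4 by linarith)
    set s := Real.sqrt (1 - tr A ^ 2 / 4)
    rcases lt_or_gt_of_ne hc with h | h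
    · exact ⟨-s, by rw [neg_sq]; exact hq, by linarith [neg_ne_zero.2 hp.ne'] , div_pos_of_neg_of_neg (by linarith) h⟩
    · exact ⟨s, hq, hp.ne', div_pos hp h⟩
  have hr := Real.sq_sqrt hsc.le
  set r := Real.sqrt (s / A.1 1 0)
  have hr0 : r ^ 2 * A.1 1 0 = s := by rw [hr]; field_simp
  obtain ⟨q, hq⟩ : ∃ q, q = s⁻¹ := ⟨_, rfl⟩
  have hsq : s * q = 1 := by rw [hq]; exact mul_inv_cancel₀ hs0
  clear_value r
  have hk : r ^ 2 * A.1 1 0 * q = 1 := by rw [hr0]; exact hsq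
  refine ⟨mk4 r (r * (A.1 0 0 - tr A / 2) * q) 0 (r * A.1 1 0 * q) ?_, s, hs0, hs, ?_, ?_, ?_, ?_⟩
  · linear_combination hk
  all_goals
    simp only [m00, m10, m01, m11, i00, i01, i10, i11, mk00, mk01, mk10, mk11]
    simp only [tr] at hs ⊢
  · linear_combination ((A.1 0 0 + A.1 1 1) / 2) * hk
  · linear_combination ((A.1 0 0 + A.1 1 1) / 2) * hk
  · linear_combination (-s) * hk + (-s * r ^ 2 * A.1 1 0 * q) * hsq -
      (r ^ 2 * A.1 1 0 * q) * q * hd  + (r ^ 2 * A.1 1 0 * q) * q * hs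
  · linear_combination hr0

/-- conjugation by `P⁻¹` -/
def cj (P : SL2R) : SL2R →* SL2R := (MulAut.conj P⁻¹).toMonoidHom

theorem cj_apply (P B : SL2R) : cj P B = P⁻¹ * B * P := by
  simp [cj]

theorem tr_cj (P B : SL2R) : tr (cj P B) = tr B := by rw [cj_apply, tr_conj']

theorem cj_inj {P A B : SL2R} (h : cj P A = cj P B) : A = B := by
  simpa [cj_apply] using h

/-- powers of a triangular element conjugating a unipotent one -/
theorem tri_conj_pow (E X : SL2R) (u : ℝ) (hE : E.1 1 0 = 0) (h0 : X.1 0 0 = 1) (h1 : X.1 0 1 = u)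
    (h2 : X.1 1 0 = 0) (h3 : X.1 1 1 = 1) (n : ℕ) :
    (E ^ n * X * (E ^ n)⁻¹).1 0 0 = 1 ∧
    (E ^ n * X * (E ^ n)⁻¹).1 0 1 = (E.1 0 0 ^ 2) ^ n * u ∧
    (E ^ n * X * (E ^ n)⁻¹).1 1 0 = 0 ∧ (E ^ n * X * (E ^ n)⁻¹).1 1 1 = 1 := by
  induction n with
  | zero => simp [h0, h1, h2, h3]
  | succ n ih =>
    obtain ⟨a0, a1, a2, a3⟩ := ih
    have hs : E ^ (n + 1) * X * (E ^ (n + 1))⁻¹ = E * (E ^ n * X * (E ^ n)⁻¹) * E⁻¹ := by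
      rw [pow_succ']; group
    rw [hs]
    set Y := E ^ n * X * (E ^ n)⁻¹
    have hd := dt E
    simp only [m00, m10, m01, m11, i00, i01, i10, i11, a0, a1, a2, a3, hE] at hd ⊢
    refine ⟨by linear_combination hd, by ring, by ring, by linear_combination hd⟩

theorem no_loxo {Γ : Subgroup SL2R} (hΓ : IsDiscreteSubgroup Γ) (P : SL2R) {X E : SL2R}
    (hX : X ∈ Γ) (hE : E ∈ Γ) (hE0 : (cj P E).1 1 0 = 0) (h0 : (cj P X).1 0 0 = 1)
    (h2 : (cj P X).1 1 0 = 0) (h3 : (cj P X).1 1 1 = 1) (hlt : (cj P E).1 0 0 ^ 2 < 1) : X = 1 := by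
  obtain ⟨ε, hε, H⟩ := disc hΓ P Γ.one_mem
  set u := (cj P X).1 0 1 with hu
  have hpos : 0 < ε / (|u| + 1) := div_pos hε (by linarith [abs_nonneg u])
  obtain ⟨n, hn⟩ : ∃ n : ℕ, ((cj P E).1 0 0 ^ 2) ^ n < ε / (|u| + 1) :=
    exists_pow_lt_of_lt_one hpos hlt
  obtain ⟨a0, a1, a2, a3⟩ := tri_conj_pow (cj P E) (cj P X) u hE0 h0 hu.symm h2 h3 n
  have hY : E ^ n * X * (E ^ n)⁻¹ ∈ Γ :=
    Γ.mul_mem (Γ.mul_mem (Γ.pow_mem hE n) hX) (Γ.inv_mem (Γ.pow_mem hE n))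
  have hc : P⁻¹ * (E ^ n * X * (E ^ n)⁻¹) * P = (cj P E) ^ n * cj P X * ((cj P E) ^ n)⁻¹ := by
    rw [← cj_apply]; simp only [map_mul, map_inv, map_pow]
  have h1 := H _ hY
  rw [hc, a0, a1, a2, a3] at h1
  have ho : P⁻¹ * 1 * P = 1 := by group
  rw [ho, o00, o01, o10, o11] at h1
  have hq : 0 ≤ ((cj P E).1 0 0 ^ 2) ^ n := pow_nonneg (sq_nonneg _) _
  generalize ((cj P E).1 0 0 ^ 2) ^ n = q at *
  have hz : |(0 : ℝ)| < ε := by rw [abs_zero]; exact hε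
  have h4 := h1 (by rw [sub_self]; exact hz) (by
    rw [sub_zero, abs_mul, abs_of_nonneg hq]
    rw [lt_div_iff₀ (by linarith [abs_nonneg u])] at hn
    nlinarith [abs_nonneg u]) (by rw [sub_self]; exact hz) (by rw [sub_self]; exact hz)
  exact conj_eq_one_iff.1 h4

theorem comm_of_th_zero {Γ : Subgroup SL2R} (hΓ : IsDiscreteSubgroup Γ) {A B : SL2R}
    (hA : A ∈ Γ) (hB : B ∈ Γ) (h : th A B = 0) : A * B = B * A := by
  by_contra hne
  set X := A * B * A⁻¹ * B⁻¹ with hX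
  have hXΓ : X ∈ Γ := Γ.mul_mem (Γ.mul_mem (Γ.mul_mem hA hB) (Γ.inv_mem hA)) (Γ.inv_mem hB)
  have hX1 : X ≠ 1 := by
    intro h1
    apply hne
    have : A * B = X * (B * A) := by rw [hX]; group
    rw [this, h1, one_mul]
  have htX : tr X = 2 := by
    have : tr X - 2 = 0 := h
    linarith
  obtain ⟨P, p1, p2⟩ := exists_tri X 1 (by rw [htX]; norm_num)
  rw [← cj_apply] at p1 p2
  have p3 : (cj P X).1 1 1 = 1 := by
    have := tr_cj P X
    rw [htX] at this
    unfold tr at this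
    linarith
  set u := (cj P X).1 0 1 with hu
  have hu0 : u ≠ 0 := by
    intro h0
    apply hX1
    apply cj_inj (P := P)
    rw [map_one]
    apply ext4
    · rw [p2, o00]
    · rw [← hu, h0, o01]
    · rw [p1, o10]
    · rw [p3, o11]
  have cB : (cj P B).1 1 0 = 0 := by
    have h1 : tr (cj P X * cj P B) = tr (cj P B) := by
      rw [← map_mul, tr_cj, tr_cj, hX, inv_mul_cancel_right, tr_conj]
    simp only [tr, m00, m11, p1, p2, p3, ← hu] at h1
    have : u * (cj P B).1 1 0 = 0 := by linarith
    exact (mul_eq_zero.1 this).resolve_left hu0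
  have cA : (cj P A).1 1 0 = 0 := by
    have h1 : tr ((cj P X)⁻¹ * cj P A) = tr (cj P A) := by
      rw [← map_inv, ← map_mul, tr_cj, tr_cj, hX]
      have : (A * B * A⁻¹ * B⁻¹)⁻¹ * A = B * A * B⁻¹ := by group
      rw [this, tr_conj]
    simp only [tr, m00, m11, i00, i01, i10, i11, p1, p2, p3, ← hu] at h1
    have : u * (cj P A).1 1 0 = 0 := by linarith
    exact (mul_eq_zero.1 this).resolve_left hu0
  have key : ∀ E ∈ Γ, (cj P E).1 1 0 = 0 → (cj P E).1 0 0 ^ 2 = 1 := by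
    intro E hE hE0
    rcases lt_trichotomy ((cj P E).1 0 0 ^ 2) 1 with hl | hl | hl
    · exact absurd (no_loxo hΓ P hXΓ hE hE0 p2 p1 p3 hl) hX1
    · exact hl
    · refine absurd (no_loxo hΓ P hXΓ (Γ.inv_mem hE) ?_ p2 p1 p3 ?_) hX1
      · rw [map_inv, i10, hE0, neg_zero]
      · rw [map_inv, i00]
        have hd := dt (cj P E)
        rw [hE0] at hd
        have h2 : (cj P E).1 0 0 ^ 2 * (cj P E).1 1 1 ^ 2 = 1 := by
          rw [← mul_pow]
          have : (cj P E).1 0 0 * (cj P E).1 1 1 = 1 := by linarith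
          rw [this, one_pow]
        by_contra h3
        push Not at h3
        nlinarith
  have kA := key A hA cA
  have kB := key B hB cB
  have dA := dt (cj P A)
  have dB := dt (cj P B)
  rw [cA] at dA
  rw [cB] at dB
  have eA : (cj P A).1 1 1 = (cj P A).1 0 0 := by
    linear_combination (cj P A).1 0 0 * dA - (cj P A).1 1 1 * kA
  have eB : (cj P B).1 1 1 = (cj P B).1 0 0 := by
    linear_combination (cj P B).1 0 0 * dB - (cj P B).1 1 1 * kB
  apply hne
  apply cj_inj (P := P)
  rw [map_mul, map_mul]
  apply ext4 <;> simp only [m00, m01, m10, m11, cA, cB, eA, eB] <;> ring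

theorem inv_of_comm {A G : SL2R} (hc : A * G = G * A) (ht : tr G = tr A) (hD : tr A ^ 2 ≠ 4)
    (h2 : tr (A * G) = tr A ^ 2 - 2) : A = G := by
  have e00 := congrArg (fun M : SL2R => M.1 0 0) hc
  have e01 := congrArg (fun M : SL2R => M.1 0 1) hc
  have e10 := congrArg (fun M : SL2R => M.1 1 0) hc
  simp only [m00, m01, m10, m11] at e00 e01 e10
  have dA := dt A
  have dG := dt G
  simp only [tr, m00, m11] at ht h2 hD
  obtain ⟨a, ha⟩ : ∃ x, A.1 0 0 = x := ⟨_, rfl⟩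
  obtain ⟨b, hb⟩ : ∃ x, A.1 0 1 = x := ⟨_, rfl⟩
  obtain ⟨c, hc'⟩ : ∃ x, A.1 1 0 = x := ⟨_, rfl⟩
  obtain ⟨d, hd⟩ : ∃ x, A.1 1 1 = x := ⟨_, rfl⟩
  obtain ⟨x, hx⟩ : ∃ x, x = a - G.1 0 0 := ⟨_, rfl⟩
  obtain ⟨y, hy⟩ : ∃ y, y = b - G.1 0 1 := ⟨_, rfl⟩
  obtain ⟨z, hz⟩ : ∃ z, z = c - G.1 1 0 := ⟨_, rfl⟩
  have g0 : G.1 0 0 = a - x := by linarith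
  have g1 : G.1 0 1 = b - y := by linarith
  have g2 : G.1 1 0 = c - z := by linarith
  have g3 : G.1 1 1 = d + x := by linarith
  simp only [g0, g1, g2, g3, ha, hb, hc', hd] at e00 e01 e10 dG dA h2 hD
  have q1 : b * z = c * y := by linear_combination -e00
  have q2 : (a - d) * y = 2 * b * x := by linear_combination -e01
  have q3 : (a - d) * z = 2 * c * x := by linear_combination e10
  have q4 : x ^ 2 + y * z = 0 := by linear_combination -dA - dG - h2
  have hne : (a - d) ^ 2 + 4 * b * c ≠ 0 := by
    intro h; apply hD; linear_combination h + 4 * dA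
  have x0 : x = 0 := by
    have : x ^ 2 * ((a - d) ^ 2 + 4 * b * c) = 0 := by
      linear_combination (a - d) ^ 2 * q4 - (a - d) * z * q2 - 2 * b * x * q3
    exact pow_eq_zero_iff (two_ne_zero) |>.1 ((mul_eq_zero.1 this).resolve_right hne)
  have y0 : y = 0 := by
    have : y ^ 2 * ((a - d) ^ 2 + 4 * b * c) = 0 := by
      linear_combination 4 * b ^ 2 * q4 + ((a - d) * y + 2 * b * x) * q2 - 4 * b * y * q1
    exact pow_eq_zero_iff (two_ne_zero) |>.1 ((mul_eq_zero.1 this).resolve_right hne)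
  have z0 : z = 0 := by
    have : z ^ 2 * ((a - d) ^ 2 + 4 * b * c) = 0 := by
      linear_combination 4 * c ^ 2 * q4 + ((a - d) * z + 2 * c * x) * q3 + 4 * c * z * q1
    exact pow_eq_zero_iff (two_ne_zero) |>.1 ((mul_eq_zero.1 this).resolve_right hne)
  apply ext4
  · rw [g0, ha, x0, sub_zero]
  · rw [g1, hb, y0, sub_zero]
  · rw [g2, hc', z0, sub_zero]
  · rw [g3, hd, x0, add_zero]

theorem tr_zero_of_invert {A B : SL2R} (h : B * A = A⁻¹ * B) (hD : tr A ^ 2 ≠ 4) : tr B = 0 := by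
  have e00 := congrArg (fun M : SL2R => M.1 0 0) h
  have e01 := congrArg (fun M : SL2R => M.1 0 1) h
  have e10 := congrArg (fun M : SL2R => M.1 1 0) h
  have e11 := congrArg (fun M : SL2R => M.1 1 1) h
  simp only [m00, m01, m10, m11, i00, i01, i10, i11] at e00 e01 e10 e11
  have dA := dt A
  by_contra hne
  unfold tr at hne hD
  have hb : A.1 0 1 = 0 := by
    have : A.1 0 1 * (B.1 0 0 + B.1 1 1) = 0 := by linear_combination e01
    exact (mul_eq_zero.1 this).resolve_right hne
  have hc : A.1 1 0 = 0 := by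
    have : A.1 1 0 * (B.1 0 0 + B.1 1 1) = 0 := by linear_combination e10
    exact (mul_eq_zero.1 this).resolve_right hne
  rw [hb, hc] at e00 e11
  rw [hb, hc] at dA
  have : (A.1 0 0 - A.1 1 1) * (B.1 0 0 + B.1 1 1) = 0 := by linear_combination e00 - e11
  have h2 := (mul_eq_zero.1 this).resolve_right hne
  apply hD
  linear_combination (A.1 0 0 - A.1 1 1) * h2 + 4 * dA

theorem desc {A B : SL2R} (h0 : th A B ≠ 0) (hB : tr B ≠ 0) :
    A * (B * A * B⁻¹) ≠ (B * A * B⁻¹) * A := by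
  intro hc
  have h1 := th_of_commute hc
  rw [th_conj] at h1
  have h2 := (mul_eq_zero.1 h1).resolve_left h0
  have hD : tr A ^ 2 ≠ 4 := by
    intro h; apply h0; linarith
  have h3 : A = (B * A * B⁻¹)⁻¹ := by
    apply inv_of_comm _ _ hD
    · rw [tr_mul_inv, tr_conj, tr_mul_conj]; linarith
    · have : Commute A (B * A * B⁻¹) := hc
      exact this.inv_right
    · rw [tr_inv, tr_conj]
  apply hB
  apply tr_zero_of_invert (A := A) _ hD
  have h4 : A⁻¹ = B * A * B⁻¹ := by rw [← inv_inv (B * A * B⁻¹), ← h3]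
  rw [h4]; group


theorem disc' {Γ : Subgroup SL2R} (hΓ : IsDiscreteSubgroup Γ) (P : SL2R) {A : SL2R} (hA : A ∈ Γ) :
    ∃ ε > 0, ∀ B ∈ Γ, |(cj P B).1 0 0 - (cj P A).1 0 0| < ε →
      |(cj P B).1 0 1 - (cj P A).1 0 1| < ε → |(cj P B).1 1 0 - (cj P A).1 1 0| < ε →
      |(cj P B).1 1 1 - (cj P A).1 1 1| < ε → B = A := by
  simpa only [cj_apply] using disc hΓ P hA

theorem ell_real (s t ε : ℝ) (hs : s ≠ 0) (hst : s ^ 2 = 1 - t ^ 2 / 4) (hε : 0 < ε) :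
    ∃ δ > 0, ∀ a b c d η : ℝ, a + d = t → a * d - b * c = 1 → η = s * (b - c) + 2 * s ^ 2 →
      |η| < δ → |a - t / 2| < ε ∧ |b + s| < ε ∧ |c - s| < ε ∧ |d - t / 2| < ε := by
  have hs2 : 0 < s ^ 2 := by positivity
  refine ⟨s ^ 2 * min 1 (ε ^ 2 / 4) / (s ^ 2 + 1), by positivity, ?_⟩
  intro a b c d η h1 h2 h3 h4
  rw [lt_div_iff₀ (by positivity)] at h4
  have hm1 : min 1 (ε ^ 2 / 4) ≤ 1 := min_le_left _ _
  have hm2 : min 1 (ε ^ 2 / 4) ≤ ε ^ 2 / 4 := min_le_right _ _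
  have k1 : |η| * (s ^ 2 + 1) < s ^ 2 * (ε ^ 2 / 4) := by nlinarith
  have k2 : |η| ≤ 1 := by
    by_contra h; push Not at h
    nlinarith
  have k3 : η ^ 2 ≤ |η| := by rw [← sq_abs]; nlinarith [abs_nonneg η]
  have k4 : -|η| ≤ η := neg_abs_le η
  obtain ⟨x, hx⟩ : ∃ x, x = a - t / 2 := ⟨_, rfl⟩
  obtain ⟨p, hp⟩ : ∃ x, x = (b + c) / 2 := ⟨_, rfl⟩
  obtain ⟨r, hr⟩ : ∃ x, x = (b - c) / 2 + s := ⟨_, rfl⟩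
  have e1 : s * r = η / 2 := by rw [h3, hr]; ring
  have e2 : x ^ 2 + p ^ 2 = r ^ 2 - 2 * (s * r) := by
    have : d = t - a := by linarith
    subst this
    rw [hx, hp, hr]
    linear_combination -h2 + hst
  have e3 : s ^ 2 * (x ^ 2 + p ^ 2) = η ^ 2 / 4 - s ^ 2 * η := by
    rw [e2]; linear_combination (s * r + η / 2) * e1 - 2 * s ^ 2 * e1
  have e4 : s ^ 2 * r ^ 2 = η ^ 2 / 4 := by linear_combination (s * r + η / 2) * e1
  have bx : |x| < ε / 2 := by
    apply abs_lt_of_sq_lt_sq _ (by positivity)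
    by_contra h; push Not at h
    nlinarith [mul_le_mul_of_nonneg_left h hs2.le, mul_nonneg hs2.le (sq_nonneg p), abs_nonneg η]
  have bp : |p| < ε / 2 := by
    apply abs_lt_of_sq_lt_sq _ (by positivity)
    by_contra h; push Not at h
    nlinarith [mul_le_mul_of_nonneg_left h hs2.le, mul_nonneg hs2.le (sq_nonneg x), abs_nonneg η]
  have br : |r| < ε / 2 := by
    apply abs_lt_of_sq_lt_sq _ (by positivity)
    by_contra h; push Not at h
    nlinarith [mul_le_mul_of_nonneg_left h hs2.le, mul_nonneg hs2.le (abs_nonneg η), abs_nonneg η]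
  rw [abs_lt] at bx bp br
  refine ⟨?_, ?_, ?_, ?_⟩ <;> rw [abs_lt] <;> constructor <;> linarith

theorem L_ell {Γ : Subgroup SL2R} (hΓ : IsDiscreteSubgroup Γ) {A : SL2R} (hA : A ∈ Γ)
    (ht : tr A ^ 2 < 4) : ∃ δ > 0, ∀ B ∈ Γ, tr B = tr A → |tr (A * B) - (tr A ^ 2 - 2)| < δ →
      tr (A * B) = tr A ^ 2 - 2 := by
  obtain ⟨P, s, hs, hst, a0, a3, a1, a2⟩ := exists_rot A ht
  rw [← cj_apply] at a0 a1 a2 a3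
  obtain ⟨ε, hε, H⟩ := disc' hΓ P hA
  obtain ⟨δ, hδ, K⟩ := ell_real s (tr A) ε hs hst hε
  refine ⟨δ, hδ, ?_⟩
  intro B hB htB hlt
  have hz : tr (A * B) = tr (cj P A * cj P B) := by rw [← map_mul, tr_cj]
  have htB' : (cj P B).1 0 0 + (cj P B).1 1 1 = tr A := by rw [← htB, ← tr_cj P B]; rfl
  obtain ⟨b0, b1, b2, b3⟩ := K _ _ _ _ (tr (A * B) - (tr A ^ 2 - 2)) htB' (dt (cj P B)) (by
    rw [hz]
    conv_lhs => simp only [tr, m00, m11]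
    rw [a0, a1, a2, a3]
    have : (cj P A).1 0 0 + (cj P A).1 1 1 = tr A := by rw [← tr_cj P A]; rfl
    have h2 : A.1 0 0 + A.1 1 1 = tr A := rfl
    rw [h2]
    linear_combination tr A / 2 * htB' - 2 * hst) hlt
  have : B = A := by
    apply H B hB
    · rw [a0]; exact b0
    · rw [a1, sub_neg_eq_add]; exact b1
    · rw [a2]; exact b2
    · rw [a3]; exact b3
  rw [this, tr_sq]

theorem hyp_real (l m ε κ : ℝ) (hlm : l * m = 1) (hl : 1 < l ^ 2) (hε : 0 < ε) (hκ : 0 < κ) :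
    ∃ δ > 0, ∀ a b c d η : ℝ, a + d = l + m → a * d - b * c = 1 → η = l * a + m * d - (l ^ 2 + m ^ 2) →
      |η| < δ → |a - l| < ε ∧ |d - m| < ε ∧ |b * c| < κ ∧ (b = 0 → η = 0) := by
  have hw : l - m ≠ 0 := by
    intro h
    have : l = m := by linarith
    subst this
    nlinarith
  obtain ⟨w, hwd⟩ : ∃ w, w = l - m := ⟨_, rfl⟩
  rw [← hwd] at hw
  have hw2 : 0 < w ^ 2 := by positivity
  refine ⟨w ^ 2 * min 1 (min κ (ε ^ 2)) / (w ^ 2 + 1), by positivity, ?_⟩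
  intro a b c d η h1 h2 h3 h4
  rw [lt_div_iff₀ (by positivity)] at h4
  have hm1 : min 1 (min κ (ε ^ 2)) ≤ 1 := min_le_left _ _
  have hm2 : min 1 (min κ (ε ^ 2)) ≤ κ := (min_le_right _ _).trans (min_le_left _ _)
  have hm3 : min 1 (min κ (ε ^ 2)) ≤ ε ^ 2 := (min_le_right _ _).trans (min_le_right _ _)
  generalize min 1 (min κ (ε ^ 2)) = n at *
  have k1 : |η| * (w ^ 2 + 1) < w ^ 2 * 1 := by nlinarith
  have k2 : |η| * (w ^ 2 + 1) < w ^ 2 * κ := by nlinarith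
  have k3 : |η| * (w ^ 2 + 1) < w ^ 2 * ε ^ 2 := by nlinarith
  have hη := abs_nonneg η
  have k4 : |η| < 1 := by
    by_contra h; push Not at h
    nlinarith
  have k5 : |η| < w ^ 2 := by nlinarith
  have k6 : η ^ 2 ≤ |η| := by rw [← sq_abs]; nlinarith
  obtain ⟨e, he⟩ : ∃ e, e = a - l := ⟨_, rfl⟩
  have hd : d = m - e := by linarith
  have e1 : w * e = η := by
    rw [h3, hd, hwd]
    have : a = l + e := by linarith
    rw [this]; ring
  have e2 : b * c = -η - e ^ 2 := by
    have : a = l + e := by linarith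
    rw [this, hd] at h2
    rw [← e1, hwd]
    linear_combination -h2 + hlm
  have e3 : w ^ 2 * e ^ 2 = η ^ 2 := by rw [← e1]; ring
  have be : |e| < ε := by
    apply abs_lt_of_sq_lt_sq _ (by positivity)
    by_contra h; push Not at h
    nlinarith [mul_le_mul_of_nonneg_left h hw2.le, mul_nonneg hw2.le hη]
  refine ⟨by rw [← he]; exact be, by rw [hd, ← abs_neg]; convert be using 2; ring, ?_, ?_⟩
  · have h5 : |b * c| ≤ |η| + e ^ 2 := by
      rw [e2, abs_le]
      constructor <;> nlinarith [neg_abs_le η, le_abs_self η, sq_nonneg e]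
    by_contra h; push Not at h
    nlinarith [mul_le_mul_of_nonneg_left (h.trans h5) hw2.le]
  · intro hb
    rw [hb, zero_mul] at e2
    have : η * (w ^ 2 + η) = 0 := by linear_combination w ^ 2 * e2 - e3
    rcases mul_eq_zero.1 this with h | h
    · exact h
    · nlinarith [neg_abs_le η]

/-- diagonal subgroup -/
noncomputable def diagHom : ℝˣ →* SL2R where
  toFun u := mk4 (u : ℝ) 0 0 ((u⁻¹ : ℝˣ) : ℝ) (by simp)
  map_one' := by
    apply ext4 <;> simp [mk00, mk01, mk10, mk11]
  map_mul' u v := by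
    apply ext4 <;> simp only [mk00, mk01, mk10, mk11, m00, m01, m10, m11] <;> simp [mul_comm]

theorem diag_conj (D : SL2R) (h01 : D.1 0 1 = 0) (h10 : D.1 1 0 = 0) (k : ℤ) (B : SL2R) :
    (D ^ k * B * (D ^ k)⁻¹).1 0 0 = B.1 0 0 ∧
    (D ^ k * B * (D ^ k)⁻¹).1 0 1 = (D.1 0 0 ^ 2) ^ k * B.1 0 1 ∧
    (D ^ k * B * (D ^ k)⁻¹).1 1 0 = ((D.1 0 0 ^ 2) ^ k)⁻¹ * B.1 1 0 ∧
    (D ^ k * B * (D ^ k)⁻¹).1 1 1 = B.1 1 1 := by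
  have hd := dt D
  rw [h01, zero_mul, sub_zero] at hd
  have hne : D.1 0 0 ≠ 0 := left_ne_zero_of_mul_eq_one hd
  have hD : D = diagHom (Units.mk0 _ hne) := by
    apply ext4
    · simp [diagHom, mk00]
    · simp [diagHom, mk01, h01]
    · simp [diagHom, mk10, h10]
    · simp only [diagHom, MonoidHom.coe_mk, OneHom.coe_mk, mk11]
      rw [Units.val_inv_eq_inv_val, Units.val_mk0]
      exact eq_inv_of_mul_eq_one_right hd
  have e : ∀ v : ℝˣ, (diagHom v).1 0 0 = v ∧ (diagHom v).1 0 1 = 0 ∧ (diagHom v).1 1 0 = 0 ∧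
      (diagHom v).1 1 1 = (v : ℝ)⁻¹ := by
    intro v
    refine ⟨?_, ?_, ?_, ?_⟩ <;> simp [diagHom, mk00, mk01, mk10, mk11]
  have hk : D ^ k = diagHom (Units.mk0 _ hne ^ k) := by rw [map_zpow, ← hD]
  obtain ⟨e0, e1, e2, e3⟩ := e (Units.mk0 _ hne ^ k)
  rw [hk]
  have hx : ((D.1 0 0 ^ 2) ^ k) = (((Units.mk0 _ hne ^ k : ℝˣ) : ℝ)) ^ 2 := by
    rw [Units.val_zpow_eq_zpow_val, Units.val_mk0, ← zpow_natCast, ← zpow_natCast, ← zpow_mul, ← zpow_mul, mul_comm]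
  rw [hx]
  simp only [m00, m01, m10, m11, i00, i01, i10, i11, e0, e1, e2, e3]
  have hv : (((Units.mk0 _ hne ^ k : ℝˣ) : ℝ)) ≠ 0 := Units.ne_zero _
  generalize (((Units.mk0 _ hne ^ k : ℝˣ) : ℝ)) = v at *
  refine ⟨?_, ?_, ?_, ?_⟩ <;> field_simp <;> ring

theorem L_hyp {Γ : Subgroup SL2R} (hΓ : IsDiscreteSubgroup Γ) {A : SL2R} (hA : A ∈ Γ)
    (ht : 4 < tr A ^ 2) : ∃ δ > 0, ∀ B ∈ Γ, tr B = tr A → |tr (A * B) - (tr A ^ 2 - 2)| < δ →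
      tr (A * B) = tr A ^ 2 - 2 := by
  obtain ⟨P, a2, a1, hl⟩ := exists_diag A ht
  rw [← cj_apply] at a1 a2 hl
  obtain ⟨ε, hε, H⟩ := disc' hΓ P hA
  have hd := dt (cj P A)
  rw [a1, zero_mul, sub_zero] at hd
  have htA : tr A = (cj P A).1 0 0 + (cj P A).1 1 1 := by rw [← tr_cj P A]; rfl
  obtain ⟨l, hl0⟩ : ∃ l, l = (cj P A).1 0 0 := ⟨_, rfl⟩
  obtain ⟨m, hm0⟩ : ∃ l, l = (cj P A).1 1 1 := ⟨_, rfl⟩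
  rw [← hl0, ← hm0] at hd htA
  rw [← hl0] at hl
  have hq : 0 < l ^ 2 := by linarith
  obtain ⟨δ, hδ, K⟩ := hyp_real l m ε (ε ^ 2 / l ^ 2) hd hl hε (by positivity)
  refine ⟨δ, hδ, ?_⟩
  intro B hB htB hlt
  have hz : tr (A * B) = tr (cj P A * cj P B) := by rw [← map_mul, tr_cj]
  have htB' : (cj P B).1 0 0 + (cj P B).1 1 1 = l + m := by rw [← htA, ← htB, ← tr_cj P B]; rfl
  have hz2 : tr (A * B) - (tr A ^ 2 - 2) =
      l * (cj P B).1 0 0 + m * (cj P B).1 1 1 - (l ^ 2 + m ^ 2) := by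
    rw [hz, htA]
    simp only [tr, m00, m11]
    rw [a1, a2, ← hl0, ← hm0]
    linear_combination -2 * hd
  obtain ⟨b0, b3, b12, bz⟩ := K _ _ _ _ (tr (A * B) - (tr A ^ 2 - 2)) htB' (dt (cj P B)) hz2 hlt
  by_cases hb : (cj P B).1 0 1 = 0
  · linarith [bz hb]
  have hbp : 0 < |(cj P B).1 0 1| := abs_pos.2 hb
  obtain ⟨n, hn1, hn2⟩ := exists_mem_Ico_zpow (div_pos hbp hε) hl
  obtain ⟨c0, c1, c2, c3⟩ := diag_conj (cj P A) a1 a2 (-(n + 1)) (cj P B)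
  rw [← hl0] at c1 c2
  have hY : A ^ (-(n + 1)) * B * (A ^ (-(n + 1)))⁻¹ ∈ Γ :=
    Γ.mul_mem (Γ.mul_mem (Γ.zpow_mem hA _) hB) (Γ.inv_mem (Γ.zpow_mem hA _))
  have hc : cj P (A ^ (-(n + 1)) * B * (A ^ (-(n + 1)))⁻¹) =
      (cj P A) ^ (-(n + 1)) * cj P B * ((cj P A) ^ (-(n + 1)))⁻¹ := by
    simp only [map_mul, map_inv, map_zpow]
  have hq1 : (0 : ℝ) < (l ^ 2) ^ n := zpow_pos hq n
  have hq2 : (l ^ 2) ^ (n + 1) = (l ^ 2) ^ n * l ^ 2 := zpow_add_one₀ hq.ne' n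
  have hYA := H _ hY
  rw [hc, c0, c1, c2, c3, a1, a2, ← hl0, ← hm0, zpow_neg, inv_inv, hq2] at hYA
  rw [hq2] at hn2
  rw [abs_mul] at b12
  have hYA2 := hYA b0 (by
      rw [sub_zero, abs_mul, abs_of_pos (inv_pos.2 (mul_pos hq1 hq)), inv_mul_lt_iff₀ (mul_pos hq1 hq)]
      rwa [div_lt_iff₀ hε] at hn2) (by
      rw [sub_zero, abs_mul, abs_of_pos (mul_pos hq1 hq)]
      rw [le_div_iff₀ hε] at hn1
      rw [lt_div_iff₀ hq] at b12
      have hcn := abs_nonneg ((cj P B).1 1 0)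
      generalize |(cj P B).1 1 0| = y at *
      generalize |(cj P B).1 0 1| = x at *
      generalize (l ^ 2) ^ n = r at *
      by_contra h; push Not at h
      have h1 : r * ε * (y * l ^ 2) ≤ x * (y * l ^ 2) :=
        mul_le_mul_of_nonneg_right hn1 (mul_nonneg hcn hq.le)
      have h2 : ε * ε ≤ ε * (r * l ^ 2 * y) := mul_le_mul_of_nonneg_left h hε.le
      nlinarith) b3
  have hfin : B = A := by
    have h1 : B = (A ^ (-(n + 1)))⁻¹ * (A ^ (-(n + 1)) * B * (A ^ (-(n + 1)))⁻¹) * A ^ (-(n + 1)) := by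
      group
    rw [hYA2] at h1
    rw [h1]; group
  rw [hfin, tr_sq]

/-- unipotent upper triangular subgroup -/
theorem uni_conj (D : SL2R) (v : ℝ) (h00 : D.1 0 0 = 1) (h01 : D.1 0 1 = v) (h10 : D.1 1 0 = 0)
    (h11 : D.1 1 1 = 1) (k : ℤ) :
    (D ^ k).1 0 0 = 1 ∧ (D ^ k).1 0 1 = k * v ∧ (D ^ k).1 1 0 = 0 ∧ (D ^ k).1 1 1 = 1 := by
  induction k using Int.induction_on with
  | zero => simp
  | succ n ih =>
    obtain ⟨e0, e1, e2, e3⟩ := ih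
    rw [zpow_add_one]
    simp only [m00, m01, m10, m11, e0, e1, e2, e3, h00, h01, h10, h11]
    push_cast
    refine ⟨?_, ?_, ?_, ?_⟩ <;> ring
  | pred n ih =>
    obtain ⟨e0, e1, e2, e3⟩ := ih
    rw [zpow_sub_one]
    simp only [m00, m01, m10, m11, i00, i01, i10, i11, e0, e1, e2, e3, h00, h01, h10, h11]
    push_cast
    refine ⟨?_, ?_, ?_, ?_⟩ <;> ring

theorem exists_shift (x w : ℝ) (hw : w ≠ 0) : ∃ k : ℤ, |x + k * w| ≤ |w| := by
  refine ⟨-⌊x / w⌋, ?_⟩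
  have h1 : x + ((-⌊x / w⌋ : ℤ) : ℝ) * w = Int.fract (x / w) * w := by
    rw [Int.fract]; push_cast; field_simp; ring
  rw [h1, abs_mul, abs_of_nonneg (Int.fract_nonneg _)]
  nlinarith [Int.fract_lt_one (x / w), abs_nonneg w]

set_option maxHeartbeats 1000000 in
theorem L_par {Γ : Subgroup SL2R} (hΓ : IsDiscreteSubgroup Γ) {A : SL2R} (hA : A ∈ Γ)
    (ht : tr A ^ 2 = 4) : ∃ δ > 0, ∀ B ∈ Γ, tr B = tr A → |tr (A * B) - (tr A ^ 2 - 2)| < δ →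
      tr (A * B) = tr A ^ 2 - 2 := by
  obtain ⟨e, he⟩ : ∃ e, e = tr A / 2 := ⟨_, rfl⟩
  have he2 : e ^ 2 = 1 := by rw [he]; linarith
  have htA : tr A = 2 * e := by linarith
  obtain ⟨P, a2, a0⟩ := exists_tri A e (by rw [htA]; linarith)
  rw [← cj_apply] at a0 a2
  have a3 : (cj P A).1 1 1 = e := by
    have : (cj P A).1 0 0 + (cj P A).1 1 1 = 2 * e := by rw [← htA, ← tr_cj P A]; rfl
    linarith
  obtain ⟨u, a1⟩ : ∃ u, (cj P A).1 0 1 = u := ⟨_, rfl⟩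
  obtain ⟨ε, hε, H⟩ := disc' hΓ P Γ.one_mem
  have hz : ∀ B, tr B = tr A → tr (A * B) - (tr A ^ 2 - 2) = u * (cj P B).1 1 0 := by
    intro B hB
    have hz : tr (A * B) = tr (cj P A * cj P B) := by rw [← map_mul, tr_cj]
    have htB' : (cj P B).1 0 0 + (cj P B).1 1 1 = 2 * e := by rw [← htA, ← hB, ← tr_cj P B]; rfl
    rw [hz, htA]
    simp only [tr, m00, m11]
    rw [a0, a1, a2, a3]
    linear_combination e * htB' - 2 * he2
  by_cases hu : u = 0
  · refine ⟨1, one_pos, fun B hB htB _ => ?_⟩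
    have := hz B htB
    rw [hu, zero_mul] at this
    linarith
  have hup : 0 < |u| := abs_pos.2 hu
  refine ⟨ε / (5 + 9 * |u| + 3 / |u|), by positivity, ?_⟩
  intro B hB htB hlt
  have hz1 := hz B htB
  by_contra hne
  have hc0 : (cj P B).1 1 0 ≠ 0 := by
    intro h; rw [h, mul_zero] at hz1; apply hne; linarith
  rw [hz1] at hlt
  clear hz hne hz1
  obtain ⟨a, b0⟩ : ∃ u, (cj P B).1 0 0 = u := ⟨_, rfl⟩
  obtain ⟨b, b1⟩ : ∃ u, (cj P B).1 0 1 = u := ⟨_, rfl⟩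
  obtain ⟨c, b2⟩ : ∃ u, (cj P B).1 1 0 = u := ⟨_, rfl⟩
  obtain ⟨d, b3⟩ : ∃ u, (cj P B).1 1 1 = u := ⟨_, rfl⟩
  rw [b2] at hlt hc0
  have he0 : e ≠ 0 := by rintro rfl; norm_num at he2
  obtain ⟨k, hk⟩ := exists_shift (a - e) (2 * e * u * c) (by positivity)
  have habs : |e| = 1 := by
    rw [← sq_abs] at he2
    nlinarith [abs_nonneg e]
  have hkk : |2 * e * u * c| = 2 * |u * c| := by
    rw [mul_assoc, abs_mul, abs_mul, habs]; norm_num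
  rw [hkk] at hk
  obtain ⟨q0, q1, q2, q3⟩ := uni_conj (cj P A * cj P A) (2 * e * u)
    (by rw [m00, a0, a1, a2]; linear_combination he2)
    (by rw [m01, a0, a1, a3]; ring) (by rw [m10, a0, a2, a3]; ring)
    (by rw [m11, a1, a2, a3]; linear_combination he2) k
  set T := (A * A) ^ k with hT
  have hTΓ : T ∈ Γ := Γ.zpow_mem (Γ.mul_mem hA hA) _
  have hcT : cj P T = (cj P A * cj P A) ^ k := by rw [hT, map_zpow, map_mul]
  rw [← hcT] at q0 q1 q2 q3
  obtain ⟨Y, hY⟩ : ∃ Y, Y = T * B * T⁻¹ := ⟨_, rfl⟩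
  have hYΓ : Y ∈ Γ := by
    rw [hY]; exact Γ.mul_mem (Γ.mul_mem hTΓ hB) (Γ.inv_mem hTΓ)
  have hcY : cj P Y = cj P T * cj P B * (cj P T)⁻¹ := by
    rw [hY]; simp only [map_mul, map_inv]
  have y0 : (cj P Y).1 0 0 = a + k * (2 * e * u * c) := by
    rw [hcY]; simp only [m00, m01, m10, m11, i00, i01, i10, i11, q0, q1, q2, q3, b0, b1, b2, b3]; ring
  have y2 : (cj P Y).1 1 0 = c := by
    rw [hcY]; simp only [m00, m01, m10, m11, i00, i01, i10, i11, q0, q1, q2, q3, b0, b1, b2, b3]; ring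
  have htY : (cj P Y).1 0 0 + (cj P Y).1 1 1 = 2 * e := by
    rw [← htA, ← htB, ← tr_conj T B, ← hY, ← tr_cj P Y]; rfl
  have dY := dt (cj P Y)
  obtain ⟨x, hx⟩ : ∃ x, x = (cj P Y).1 0 0 - e := ⟨_, rfl⟩
  obtain ⟨y, hy⟩ : ∃ x, (cj P Y).1 0 1 = x := ⟨_, rfl⟩
  have y0' : (cj P Y).1 0 0 = e + x := by linarith
  have y3' : (cj P Y).1 1 1 = e - x := by linarith
  have hxb : |x| ≤ 2 * |u * c| := by
    rw [hx, y0]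
    convert hk using 2
    ring
  rw [y0', y3', y2, hy] at dY
  have hyc : x ^ 2 = - (y * c) := by linear_combination he2 - dY
  have hcp : 0 < |c| := abs_pos.2 hc0
  rw [abs_mul] at hxb hlt
  have hyb : |y| ≤ 4 * |u| * (|u| * |c|) := by
    have h1 : |y| * |c| = |x| ^ 2 := by rw [← abs_mul, sq_abs, hyc, ← abs_neg, abs_of_nonneg]; nlinarith [sq_nonneg x]
    have h2 : |x| ^ 2 ≤ (2 * (|u| * |c|)) ^ 2 := pow_le_pow_left₀ (abs_nonneg _) hxb 2
    by_contra h; push Not at h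
    have h3 := mul_lt_mul_of_pos_right h hcp
    have h4 : (2 * (|u| * |c|)) ^ 2 = 4 * |u| * (|u| * |c|) * |c| := by ring
    rw [h4] at h2
    linarith
  have hu3 : 0 < 3 / |u| := by positivity
  have hu3' : 3 / |u| * (|u| * |c|) = 3 * |c| := by field_simp
  rw [lt_div_iff₀ (by positivity)] at hlt
  have huc : 0 < |u| * |c| := by positivity
  have hlt2 : 5 * (|u| * |c|) + 9 * |u| * (|u| * |c|) + 3 * |c| < ε := by
    rw [← hu3']; linarith
  have hYY := H (Y * Y) (Γ.mul_mem hYΓ hYΓ)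
  have p9 : 0 < |u| * (|u| * |c|) := by positivity
  rw [map_mul, map_one, m00, m01, m10, m11, o00, o01, o10, o11, y0', hy, y2, y3'] at hYY
  have hYY1 : Y * Y = 1 := by
    apply hYY
    · have : (e + x) * (e + x) + y * c - 1 = 2 * (e * x) := by linear_combination hyc + he2
      rw [this, abs_mul, abs_mul, habs]; norm_num; linarith
    · have : (e + x) * y + y * (e - x) - 0 = 2 * (e * y) := by ring
      rw [this, abs_mul, abs_mul, habs]; norm_num; linarith
    · have : c * (e + x) + (e - x) * c - 0 = 2 * (e * c) := by ring
      rw [this, abs_mul, abs_mul, habs]; norm_num; linarith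
    · have : c * y + (e - x) * (e - x) - 1 = - (2 * (e * x)) := by linear_combination hyc + he2
      rw [this, abs_neg, abs_mul, abs_mul, habs]; norm_num; linarith
  have h9 : (cj P (Y * Y)).1 1 0 = 0 := by rw [hYY1, map_one, o10]
  rw [map_mul, m10, y0', y2, y3'] at h9
  have : e * c = 0 := by linarith
  exact (mul_ne_zero he0 hc0) this

theorem L_all {Γ : Subgroup SL2R} (hΓ : IsDiscreteSubgroup Γ) {A : SL2R} (hA : A ∈ Γ) :
    ∃ δ > 0, ∀ B ∈ Γ, tr B = tr A → |tr (A * B) - (tr A ^ 2 - 2)| < δ →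
      tr (A * B) = tr A ^ 2 - 2 := by
  rcases lt_trichotomy (tr A ^ 2) 4 with h | h | h
  · exact L_ell hΓ hA h
  · exact L_par hΓ hA h
  · exact L_hyp hΓ hA h

/-- the Jørgensen sequence -/
def jseq (A B : SL2R) : ℕ → SL2R
  | 0 => B
  | n + 1 => jseq A B n * A * (jseq A B n)⁻¹

theorem jorgensen {Γ : Subgroup SL2R} (hΓ : IsDiscreteSubgroup Γ) {A B : SL2R} (hA : A ∈ Γ)
    (hB : B ∈ Γ) (hne : A * B ≠ B * A) (htB : tr B ≠ 0) : 1 ≤ |tr A ^ 2 - 4| + |th A B| := by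
  by_contra hlt
  push Not at hlt
  have hmem : ∀ n, jseq A B n ∈ Γ := by
    intro n
    induction n with
    | zero => exact hB
    | succ n ih => exact Γ.mul_mem (Γ.mul_mem ih hA) (Γ.inv_mem ih)
  have htA : tr A ≠ 0 := by
    intro h
    rw [h] at hlt
    norm_num at hlt
    linarith [abs_nonneg (th A B)]
  have htr : ∀ n, tr (jseq A B n) ≠ 0 := by
    intro n
    cases n with
    | zero => exact htB
    | succ n => rw [jseq, tr_conj]; exact htA
  have hth : ∀ n, th A (jseq A B n) ≠ 0 := by
    intro n
    induction n with
    | zero => intro h; exact hne (comm_of_th_zero hΓ hA hB h)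
    | succ n ih =>
      intro h
      exact desc ih (htr n) (comm_of_th_zero hΓ hA (hmem (n + 1)) h)
  set K := |tr A ^ 2 - 4| + |th A B| with hK
  have hK0 : 0 ≤ K := by positivity
  have hbd : ∀ n, |th A (jseq A B n)| ≤ K ^ n * |th A B| := by
    intro n
    induction n with
    | zero => simp [jseq]
    | succ n ih =>
      rw [jseq, th_conj, abs_mul]
      have h1 : |th A (jseq A B n) - (tr A ^ 2 - 4)| ≤ K := by
        have h2 : |th A (jseq A B n)| ≤ |th A B| :=
          ih.trans (mul_le_of_le_one_left (abs_nonneg _) (pow_le_one₀ hK0 hlt.le))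
        have h3 := abs_sub (th A (jseq A B n)) (tr A ^ 2 - 4)
        linarith
      calc _ ≤ K ^ n * |th A B| * K := mul_le_mul ih h1 (abs_nonneg _) (by positivity)
        _ = _ := by ring
  obtain ⟨δ, hδ, H⟩ := L_all hΓ hA
  have hpos : 0 < δ / (|th A B| + 1) := by positivity
  obtain ⟨n, hn⟩ := exists_pow_lt_of_lt_one hpos hlt
  rw [lt_div_iff₀ (by positivity)] at hn
  have h1 := H (jseq A B (n + 1)) (hmem _) (by rw [jseq, tr_conj]) (by
    rw [jseq, tr_mul_conj]
    have h2 : tr A ^ 2 - 2 - th A (jseq A B n) - (tr A ^ 2 - 2) = - th A (jseq A B n) := by ring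
    rw [h2, abs_neg]
    have := hbd n
    have h3 : 0 ≤ K ^ n := pow_nonneg hK0 n
    linarith)
  rw [jseq, tr_mul_conj] at h1
  exact hth n (by linarith)

open scoped Pointwise in
theorem pingpong2 {G α : Type} [Group G] [MulAction G α] (a : Fin 2 → G) (X : Fin 2 → Set α)
    (hne : ∀ i, (X i).Nonempty) (hdis : Disjoint (X 0) (X 1))
    (h01 : ∀ n : ℤ, n ≠ 0 → ∀ x ∈ X 1, a 0 ^ n • x ∈ X 0)
    (h10 : ∀ n : ℤ, n ≠ 0 → ∀ x ∈ X 0, a 1 ^ n • x ∈ X 1) :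
    Function.Injective (FreeGroup.lift a) := by
  have : FreeGroup.lift a =
      (Monoid.CoprodI.lift fun i => FreeGroup.lift fun _ => a i).comp
        (@freeGroupEquivCoprodI (Fin 2)).toMonoidHom := by
    ext i
    simp
  rw [this, MonoidHom.coe_comp]
  clear this
  refine Function.Injective.comp ?_ (MulEquiv.injective freeGroupEquivCoprodI)
  change Function.Injective (Monoid.CoprodI.lift fun i : Fin 2 => FreeGroup.lift fun _ => a i)
  let H : Fin 2 → Type _ := fun _i => FreeGroup Unit
  let f : ∀ i, H i →* G := fun i => FreeGroup.lift fun _ => a i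
  apply Monoid.CoprodI.lift_injective_of_ping_pong f _ X hne
  · intro i j hij
    fin_cases i <;> fin_cases j
    · exact absurd rfl hij
    · exact hdis
    · exact hdis.symm
    · exact absurd rfl hij
  · change Pairwise fun i j => ∀ h : H i, h ≠ 1 → f i h • X j ⊆ X i
    rintro i j hij
    refine FreeGroup.freeGroupUnitEquivInt.forall_congr_left.mpr ?_
    intro n hne1
    change FreeGroup.lift (fun _ => a i) (FreeGroup.of () ^ n) • X j ⊆ X i
    simp only [map_zpow, FreeGroup.lift_apply_of]
    change a i ^ n • X j ⊆ X i
    have hnne0 : n ≠ 0 := by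
      rintro rfl
      apply hne1
      simp [H, FreeGroup.freeGroupUnitEquivInt]
    rintro _ ⟨x, hx, rfl⟩
    fin_cases i <;> fin_cases j
    · exact absurd rfl hij
    · exact h01 n hnne0 x hx
    · exact h10 n hnne0 x hx
    · exact absurd rfl hij
  right
  use 0
  simp only [H]
  rw [FreeGroup.freeGroupUnitEquivInt.cardinal_eq, Cardinal.mk_denumerable]
  exact Cardinal.natCast_le_aleph0

theorem iter_pow (a : SL2R) (S T : SL2R → Prop) (h : ∀ M, S M → S (a * M) ∧ T (a * M)) (n : ℕ) :
    ∀ M, S M → T (a ^ (n + 1) * M) := by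
  induction n with
  | zero => intro M hM; rw [zero_add, pow_one]; exact (h M hM).2
  | succ n ih => intro M hM; rw [pow_succ, mul_assoc]; exact ih _ (h M hM).1

theorem iter_zpow (a : SL2R) (S S' T : SL2R → Prop) (h : ∀ M, S M → S (a * M) ∧ T (a * M))
    (h' : ∀ M, S' M → S' (a⁻¹ * M) ∧ T (a⁻¹ * M)) (n : ℤ) (hn : n ≠ 0) (M : SL2R) (hM : S M)
    (hM' : S' M) : T (a ^ n * M) := by
  rcases lt_or_gt_of_ne hn with hlt | hgt
  · obtain ⟨k, rfl⟩ : ∃ k : ℕ, n = -((k + 1 : ℕ) : ℤ) := ⟨(-n - 1).toNat, by omega⟩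
    rw [zpow_neg, zpow_natCast, ← inv_pow]
    exact iter_pow _ _ _ h' k M hM'
  · obtain ⟨k, rfl⟩ : ∃ k : ℕ, n = ((k + 1 : ℕ) : ℤ) := ⟨(n - 1).toNat, by omega⟩
    rw [zpow_natCast]
    exact iter_pow _ _ _ h k M hM

theorem exists_col (p q : ℝ) (h : p ^ 2 + q ^ 2 ≠ 0) : ∃ M : SL2R, M.1 0 0 = p ∧ M.1 1 0 = q := by
  refine ⟨mk4 p (-q / (p ^ 2 + q ^ 2)) q (p / (p ^ 2 + q ^ 2)) ?_, ?_, ?_⟩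
  · field_simp
    ring
  · rw [mk00]
  · rw [mk10]

/-- sign lemma for the dynamics -/
theorem sgn1 {t x y : ℝ} (ht : 2 ≤ t) (h : 0 < y * (x + y)) :
    0 < (x + t * y) * (-y + (x + t * y)) ∧ -y * (x + t * y) < 0 := by
  rcases pos_and_pos_or_neg_and_neg_of_mul_pos h with ⟨h1, h2⟩ | ⟨h1, h2⟩
  · have h3 : 0 < x + t * y := by nlinarith
    exact ⟨mul_pos h3 (by nlinarith), by nlinarith [mul_pos h1 h3]⟩
  · have h3 : x + t * y < 0 := by nlinarith
    exact ⟨mul_pos_of_neg_of_neg h3 (by nlinarith), by nlinarith [mul_pos_of_neg_of_neg h1 h3]⟩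

theorem pp_abs (F h : SL2R) (x y : SL2R → ℝ) (t t' κ : ℝ) (ht : 2 ≤ t) (ht' : 2 ≤ t') (hκ : 0 < κ)
    (hF1 : ∀ M, x (F * M) = - y M) (hF2 : ∀ M, y (F * M) = x M + t * y M)
    (hh1 : ∀ M, x (h * M) = t' * x M - κ * y M) (hh2 : ∀ M, κ * y (h * M) = x M)
    (hn1 : ∃ M, x M * y M < 0) (hn2 : ∃ M, 0 < x M * y M) :
    Function.Injective (FreeGroup.lift ![F, h]) := by
  have hF1' : ∀ M, x M = - y (F⁻¹ * M) := by
    intro M; rw [← hF1, mul_inv_cancel_left]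
  have hF2' : ∀ M, y M = x (F⁻¹ * M) + t * y (F⁻¹ * M) := by
    intro M; rw [← hF2, mul_inv_cancel_left]
  have hh1' : ∀ M, x M = t' * x (h⁻¹ * M) - κ * y (h⁻¹ * M) := by
    intro M; rw [← hh1, mul_inv_cancel_left]
  have hh2' : ∀ M, κ * y M = x (h⁻¹ * M) := by
    intro M; rw [← hh2, mul_inv_cancel_left]
  apply pingpong2 _ ![{M | x M * y M < 0}, {M | 0 < x M * y M}]
  · intro i
    fin_cases i
    · exact hn1
    · exact hn2
  · rw [Set.disjoint_left]
    intro M h1 h2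
    have h1' : x M * y M < 0 := h1
    have h2' : 0 < x M * y M := h2
    linarith
  · intro n hn M hM
    have hM' : 0 < x M * y M := hM
    change x (F ^ n * M) * y (F ^ n * M) < 0
    refine iter_zpow F (fun M => 0 < y M * (x M + y M)) (fun M => 0 < x M * (y M + x M))
      (fun M => x M * y M < 0) ?_ ?_ n hn M ?_ ?_
    · intro M hM
      simp only [hF1, hF2]
      exact sgn1 ht hM
    · intro M hM
      have e1 : y (F⁻¹ * M) = - x M := by linarith [hF1' M]
      have e2 : x (F⁻¹ * M) = y M + t * x M := by
        have := hF2' M; rw [e1] at this; linarith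
      simp only [e1, e2]
      have := sgn1 ht hM
      exact ⟨by linarith [this.1], by linarith [this.2]⟩
    · nlinarith [sq_nonneg (y M)]
    · nlinarith [sq_nonneg (x M)]
  · intro n hn M hM
    have hM' : x M * y M < 0 := hM
    change 0 < x (h ^ n * M) * y (h ^ n * M)
    have hT : ∀ M, 0 < x M * (κ * y M) → 0 < x M * y M := by
      intro M hM
      by_contra hc
      push Not at hc
      nlinarith
    apply hT
    have hM2 : x M * (κ * y M) < 0 := by
      have := mul_neg_of_pos_of_neg hκ hM'
      linarith
    refine iter_zpow h (fun M => 0 < x M * (x M - κ * y M)) (fun M => 0 < (κ * y M) * (κ * y M - x M))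
      (fun M => 0 < x M * (κ * y M)) ?_ ?_ n hn M ?_ ?_
    · intro M hM
      simp only [hh1, hh2]
      have := sgn1 (x := - (κ * y M)) (y := x M) ht' (by linarith)
      exact ⟨by linarith [this.1], by linarith [this.2]⟩
    · intro M hM
      have e1 : x (h⁻¹ * M) = κ * y M := (hh2' M).symm
      have e2 : κ * y (h⁻¹ * M) = t' * (κ * y M) - x M := by
        have := hh1' M; rw [e1] at this; linarith
      simp only [e1, e2]
      have := sgn1 (x := - x M) (y := κ * y M) ht' (by linarith)
      exact ⟨by linarith [this.1], by linarith [this.2]⟩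
    · nlinarith [sq_nonneg (x M)]
    · nlinarith [sq_nonneg (κ * y M)]

theorem pp_sl (F h : SL2R) (ht : 2 ≤ tr F) (ht' : 2 ≤ tr h) (hz : tr (F * h) ≤ -2) :
    Function.Injective (FreeGroup.lift ![F, h]) := by
  obtain ⟨κ, hκ, hκ2⟩ : ∃ κ : ℝ, 0 < κ ∧ κ ^ 2 + tr (F * h) * κ + 1 = 0 := by
    have h4 : 0 ≤ tr (F * h) ^ 2 - 4 := by nlinarith
    refine ⟨(-tr (F * h) + √(tr (F * h) ^ 2 - 4)) / 2, ?_, ?_⟩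
    · have := Real.sqrt_nonneg (tr (F * h) ^ 2 - 4)
      linarith
    · have := Real.sq_sqrt h4
      linear_combination this / 4
  obtain ⟨P, k2, k0⟩ := exists_tri (h * F) (-κ) (by rw [tr_mul_comm]; linear_combination hκ2)
  rw [← cj_apply] at k0 k2
  rw [map_mul] at k0 k2
  have hcomm : ∀ a M : SL2R, P⁻¹ * (a * M) = cj P a * (P⁻¹ * M) := by
    intro a M; rw [cj_apply]; group
  have htF : (cj P F).1 0 0 + (cj P F).1 1 1 = tr F := by rw [← tr_cj P F]; rfl
  have hth : (cj P h).1 0 0 + (cj P h).1 1 1 = tr h := by rw [← tr_cj P h]; rfl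
  have dF := dt (cj P F)
  have dh := dt (cj P h)
  rw [m00] at k0
  rw [m10] at k2
  obtain ⟨p, f0⟩ : ∃ u, (cj P F).1 0 0 = u := ⟨_, rfl⟩
  obtain ⟨q, f1⟩ : ∃ u, (cj P F).1 0 1 = u := ⟨_, rfl⟩
  obtain ⟨r, f2⟩ : ∃ u, (cj P F).1 1 0 = u := ⟨_, rfl⟩
  obtain ⟨s, f3⟩ : ∃ u, (cj P F).1 1 1 = u := ⟨_, rfl⟩
  obtain ⟨a, h0⟩ : ∃ u, (cj P h).1 0 0 = u := ⟨_, rfl⟩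
  obtain ⟨b, h1⟩ : ∃ u, (cj P h).1 0 1 = u := ⟨_, rfl⟩
  obtain ⟨c, h2⟩ : ∃ u, (cj P h).1 1 0 = u := ⟨_, rfl⟩
  obtain ⟨d, h3⟩ : ∃ u, (cj P h).1 1 1 = u := ⟨_, rfl⟩
  rw [f0, f2, h0, h1] at k0
  rw [f0, f2, h2, h3] at k2
  rw [f0, f3] at htF
  rw [h0, h3] at hth
  rw [f0, f1, f2, f3] at dF
  rw [h0, h1, h2, h3] at dh
  have hr : r ≠ 0 := by
    rintro rfl
    have hp : 0 < p := by
      have : p * s = 1 := by linarith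
      by_contra hc; push Not at hc
      have hs : 0 < s := by linarith
      nlinarith
    have ha : a < 0 := by by_contra hc; push Not at hc; nlinarith
    have hc0 : c = 0 := by
      have : c * p = 0 := by linarith
      exact (mul_eq_zero.1 this).resolve_right hp.ne'
    rw [hc0] at dh
    have hd : d < 0 := by by_contra hc; push Not at hc; nlinarith
    linarith
  have hcol : ∀ u v : ℝ, u ^ 2 + v ^ 2 ≠ 0 →
      ∃ M : SL2R, (P⁻¹ * M).1 0 0 = u ∧ (P⁻¹ * M).1 1 0 = v := by
    intro u v huv
    obtain ⟨M, hM1, hM2⟩ := exists_col u v huv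
    exact ⟨P * M, by rw [inv_mul_cancel_left]; exact hM1, by rw [inv_mul_cancel_left]; exact hM2⟩
  apply pp_abs F h (fun M => r * (P⁻¹ * M).1 0 0 - p * (P⁻¹ * M).1 1 0) (fun M => (P⁻¹ * M).1 1 0)
    (tr F) (tr h) κ ht ht' hκ
  · intro M
    simp only [hcomm, m00 (cj P F), m10 (cj P F), f0, f1, f2, f3]
    linear_combination -(P⁻¹ * M).1 1 0 * dF
  · intro M
    simp only [hcomm, m00 (cj P F), m10 (cj P F), f0, f1, f2, f3]
    rw [← htF]; ring
  · intro M
    simp only [hcomm, m00 (cj P h), m10 (cj P h), h0, h1, h2, h3]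
    rw [← hth]
    linear_combination -(P⁻¹ * M).1 0 0 * k2 + (P⁻¹ * M).1 1 0 * k0
  · intro M
    simp only [hcomm, m00 (cj P h), m10 (cj P h), h0, h1, h2, h3]
    have e1 : κ * c = r := by
      linear_combination c * k0 - a * k2 + r * dh
    have e2 : κ * d = -p := by
      linear_combination d * k0 - b * k2 - p * dh
    linear_combination (P⁻¹ * M).1 0 0 * e1 + (P⁻¹ * M).1 1 0 * e2
  · obtain ⟨M, hM1, hM2⟩ := hcol (1 - p) (-r) (by
      intro h; have : 0 < r ^ 2 := by positivity
      nlinarith [sq_nonneg (1 - p)])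
    refine ⟨M, ?_⟩
    simp only [hM1, hM2]
    have : 0 < r ^ 2 := by positivity
    linarith
  · obtain ⟨M, hM1, hM2⟩ := hcol (1 + p) r (by
      intro h; have : 0 < r ^ 2 := by positivity
      nlinarith [sq_nonneg (1 + p)])
    refine ⟨M, ?_⟩
    simp only [hM1, hM2]
    have : 0 < r ^ 2 := by positivity
    linarith

theorem pp_psl (F h : SL2R) (ht : 2 ≤ tr F) (ht' : 2 ≤ tr h) (hz : tr (F * h) ≤ -2) :
    Function.Injective
      ⇑(FreeGroup.lift ![QuotientGroup.mk' (Subgroup.center SL2R) F,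
          QuotientGroup.mk' (Subgroup.center SL2R) h] :
        FreeGroup (Fin 2) →* SL2R ⧸ Subgroup.center SL2R) := by
  have hinj := pp_sl F h ht ht' hz
  have e : (FreeGroup.lift ![QuotientGroup.mk' (Subgroup.center SL2R) F,
          QuotientGroup.mk' (Subgroup.center SL2R) h] :
        FreeGroup (Fin 2) →* SL2R ⧸ Subgroup.center SL2R) =
      (QuotientGroup.mk' (Subgroup.center SL2R)).comp (FreeGroup.lift ![F, h]) := by
    ext i
    fin_cases i <;> simp
  rw [e, injective_iff_map_eq_one]
  intro w hw
  have hc : FreeGroup.lift ![F, h] w ∈ Subgroup.center SL2R := by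
    rw [← QuotientGroup.eq_one_iff]; exact hw
  obtain ⟨r, hr1, hr2⟩ := Matrix.SpecialLinearGroup.mem_center_iff.1 hc
  have hsq : FreeGroup.lift ![F, h] (w ^ 2) = 1 := by
    rw [map_pow]
    apply Subtype.ext
    rw [Matrix.SpecialLinearGroup.coe_pow, ← hr2, ← map_pow]
    simp only [Fintype.card_fin] at hr1
    rw [hr1, map_one]
    rfl
  have h2 : w ^ 2 = 1 := hinj (by rw [hsq, map_one])
  exact (pow_eq_one_iff_left two_ne_zero).1 h2

/-- `h` is a word of length at most `n` in `f, f⁻¹, g, g⁻¹` -/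
def Wd (f g : SL2R) (n : ℕ) (h : SL2R) : Prop :=
  ∃ l : List SL2R, (∀ x ∈ l, x ∈ ({f, f⁻¹, g, g⁻¹} : Set SL2R)) ∧ l.length ≤ n ∧ l.prod = h

theorem Wd.mul {f g : SL2R} {m n : ℕ} {h k : SL2R} (h1 : Wd f g m h) (h2 : Wd f g n k) :
    Wd f g (m + n) (h * k) := by
  obtain ⟨l, hl, hl2, rfl⟩ := h1
  obtain ⟨l', hl', hl2', rfl⟩ := h2
  refine ⟨l ++ l', ?_, ?_, List.prod_append⟩
  · intro x hx
    rcases List.mem_append.1 hx with h | h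
    · exact hl x h
    · exact hl' x h
  · rw [List.length_append]; omega

theorem Wd.inv {f g : SL2R} {m : ℕ} {h : SL2R} (h1 : Wd f g m h) : Wd f g m h⁻¹ := by
  obtain ⟨l, hl, hl2, rfl⟩ := h1
  refine ⟨(l.map fun x => x⁻¹).reverse, ?_, ?_, (List.prod_inv_reverse l).symm⟩
  · intro x hx
    rw [List.mem_reverse, List.mem_map] at hx
    obtain ⟨y, hy, rfl⟩ := hx
    have := hl y hy
    simp only [Set.mem_insert_iff, Set.mem_singleton_iff] at this ⊢
    rcases this with rfl | rfl | rfl | rfl <;> simp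
  · simpa using hl2

theorem Wd.mono {f g : SL2R} {m n : ℕ} {h : SL2R} (h1 : Wd f g m h) (hmn : m ≤ n) : Wd f g n h := by
  obtain ⟨l, hl, hl2, rfl⟩ := h1
  exact ⟨l, hl, hl2.trans hmn, rfl⟩

theorem Wd.f (f g : SL2R) : Wd f g 1 f := ⟨[f], by simp, by simp, by simp⟩
theorem Wd.g (f g : SL2R) : Wd f g 1 g := ⟨[g], by simp, by simp, by simp⟩

theorem Wd.fin {f g : SL2R} {m : ℕ} {h : SL2R} (h1 : Wd f g m h) :
    h ∈ Subgroup.closure ({f, g} : Set SL2R) ∧ ∃ (n : ℕ) (w : Fin n → SL2R), n ≤ m ∧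
      (∀ i, w i ∈ ({f, f⁻¹, g, g⁻¹} : Set SL2R)) ∧ h = (List.ofFn w).prod := by
  obtain ⟨l, hl, hl2, rfl⟩ := h1
  refine ⟨?_, l.length, l.get, hl2, fun i => hl _ (List.get_mem l i), by rw [List.ofFn_get]⟩
  apply Subgroup.list_prod_mem
  intro x hx
  have hf : f ∈ Subgroup.closure ({f, g} : Set SL2R) := Subgroup.subset_closure (by simp)
  have hg : g ∈ Subgroup.closure ({f, g} : Set SL2R) := Subgroup.subset_closure (by simp)
  have := hl x hx
  simp only [Set.mem_insert_iff, Set.mem_singleton_iff] at this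
  rcases this with rfl | rfl | rfl | rfl
  · exact hf
  · exact Subgroup.inv_mem _ hf
  · exact hg
  · exact Subgroup.inv_mem _ hg

theorem choose_h (F k : SL2R) (hF : 2 ≤ tr F) (hk : th F k ≤ -4 ∨ tr F ^ 2 ≤ th F k) :
    ∃ h, (h = k * F⁻¹ * k⁻¹ ∨ h = k * F * k⁻¹) ∧ 2 ≤ tr h ∧ tr (F * h) ≤ -2 := by
  rcases hk with hk | hk
  · refine ⟨_, Or.inl rfl, ?_, ?_⟩
    · rw [tr_conj, tr_inv]; exact hF
    · have : F * (k * F⁻¹ * k⁻¹) = F * k * F⁻¹ * k⁻¹ := by group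
      rw [this]
      unfold th at hk
      linarith
  · refine ⟨_, Or.inr rfl, ?_, ?_⟩
    · rw [tr_conj]; exact hF
    · rw [tr_mul_conj]; linarith

theorem trAbs {f : SL2R} (hf : NonElliptic f) : 4 ≤ tr f ^ 2 := by
  have h := hf.1
  rw [Matrix.trace_fin_two] at h
  have h2 : 2 ≤ |tr f| := h
  rw [← sq_abs]
  nlinarith

theorem not_comm {f g : SL2R} (h : ¬ VirtuallyAbelian ↥(Subgroup.closure ({f, g} : Set SL2R))) :
    f * g ≠ g * f := by
  intro hc
  apply h
  have hcl : ∀ a ∈ Subgroup.closure ({f, g} : Set SL2R), ∀ b ∈ Subgroup.closure ({f, g} : Set SL2R),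
      a * b = b * a := by
    intro a ha b hb
    refine Subgroup.closure_induction₂ (p := fun x y _ _ => x * y = y * x) ?_ ?_ ?_ ?_ ?_ ?_ ?_ ha hb
    · intro x y hx hy
      simp only [Set.mem_insert_iff, Set.mem_singleton_iff] at hx hy
      rcases hx with rfl | rfl <;> rcases hy with rfl | rfl
      · rfl
      · exact hc
      · exact hc.symm
      · rfl
    · intro x _; simp
    · intro x _; simp
    · intro x y z _ _ _ h1 h2
      exact Commute.mul_left h1 h2
    · intro x y z _ _ _ h1 h2
      exact Commute.mul_right h1 h2
    · intro x y _ _ h1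
      exact Commute.inv_left h1
    · intro x y _ _ h1
      exact Commute.inv_right h1
  refine ⟨⊤, inferInstance, ?_⟩
  intro a _ b _
  exact Subtype.ext (hcl a a.2 b b.2)

theorem th_symm (A B : SL2R) : th B A = th A B := by
  rw [th_eq, th_eq, tr_mul_comm B A]; ring

theorem theta_lower {Γ : Subgroup SL2R} (hΓ : IsDiscreteSubgroup Γ) {f g : SL2R} (hf : f ∈ Γ)
    (hg : g ∈ Γ) (hne : f * g ≠ g * f) (htf : 4 ≤ tr f ^ 2) (htg : 4 ≤ tr g ^ 2) :
    2 / 3 ≤ |tr g ^ 2 * th f g| := by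
  have h0 : th f g ≠ 0 := fun h => hne (comm_of_th_zero hΓ hf hg h)
  have hX : f * g * f⁻¹ * g⁻¹ ∈ Γ :=
    Γ.mul_mem (Γ.mul_mem (Γ.mul_mem hf hg) (Γ.inv_mem hf)) (Γ.inv_mem hg)
  have hXg : (f * g * f⁻¹ * g⁻¹) * g ≠ g * (f * g * f⁻¹ * g⁻¹) := by
    intro h
    have h1 := desc (A := g) (B := f) (by rw [th_symm]; exact h0) (by
      intro h; rw [h] at htf; norm_num at htf)
    apply h1
    have h2 : f * g * f⁻¹ = g * (f * g * f⁻¹ * g⁻¹) := by rw [← h]; group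
    calc g * (f * g * f⁻¹) = g * (f * g * f⁻¹ * g⁻¹) * g := by group
      _ = f * g * f⁻¹ * g := by rw [← h2]
  have hJ := jorgensen hΓ hX hg hXg (by intro h; rw [h] at htg; norm_num at htg)
  rw [th_comm_right] at hJ
  have htX : tr (f * g * f⁻¹ * g⁻¹) = th f g + 2 := by unfold th; ring
  rw [htX] at hJ
  generalize th f g = θ at *
  generalize tr g ^ 2 = Y at *
  have e1 : (θ + 2) ^ 2 - 4 = θ * (θ + 4) := by ring
  rw [e1, abs_mul, abs_mul] at hJ
  rw [abs_mul, abs_of_nonneg (by linarith : (0 : ℝ) ≤ Y)]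
  by_contra hlt
  push Not at hlt
  have hu := abs_nonneg θ
  have b1 : |θ + 4| ≤ |θ| + 4 := by
    have := abs_add_le θ 4
    norm_num at this
    exact this
  have b2 : |θ + 4 - Y| ≤ |θ| + (Y - 4) := by
    rw [abs_le]; constructor <;> linarith [neg_abs_le θ, le_abs_self θ]
  have b3 : |θ| < 1 / 6 := by nlinarith
  have c1 := mul_le_mul_of_nonneg_left b1 hu
  have c2 := mul_le_mul_of_nonneg_left b2 hu
  nlinarith

theorem numeric (T V D θ₂ θ₄ : ℝ) (hT : 4 ≤ T) (hV : V = T * (T - 2) ^ 2) (hD : D = T - 4)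
    (h2 : 2 / 3 ≤ |θ₂|) (h4 : ∃ q, 4 ≤ q ∧ θ₄ = q * θ₂) :
    (V * θ₂ ≤ -4 ∨ V * D + 4 ≤ V * θ₂) ∨ (V * θ₂ * (V * θ₂ - V * D) ≤ -4) ∨ V * D + 4 ≤ V * θ₄ := by
  have hV16 : 16 ≤ V := by rw [hV]; nlinarith [mul_nonneg (by linarith : (0:ℝ) ≤ T - 4) (sq_nonneg (T - 2))]
  obtain ⟨q, hq, rfl⟩ := h4
  rcases le_total 0 θ₂ with hs | hs
  · rw [abs_of_nonneg hs] at h2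
    rcases le_total (D + 1 / 4) θ₂ with c1 | c1
    · left; right; nlinarith
    rcases le_total θ₂ (D - 1 / 4) with c2 | c2
    · right; left
      have a1 : 16 * (2 / 3) ≤ V * θ₂ := by nlinarith
      have a2 : V * θ₂ - V * D ≤ -4 := by nlinarith
      nlinarith
    · right; right
      have : D + 1 / 4 ≤ q * θ₂ := by nlinarith
      nlinarith
  · rw [abs_of_nonpos hs] at h2
    left; left; nlinarith
end QTA
/-- Main Theorem 1.1 of the paper for `X = ℍ²`: a uniform constant `C` such that any
nonelementary discrete two-generated subgroup of `SL(2,ℝ)` with non-elliptic generators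
`f, g` contains, within word length `C`, an element `h` and a power `f^N` (`N ≤ C`)
whose images in `PSL(2,ℝ) = SL(2,ℝ)/{±1}` generate a free group of rank two. -/
theorem quantitative_tits_alternative :
    ∃ C : ℕ, 0 < C ∧ ∀ f g : SL2R,
      NonElliptic f → NonElliptic g →
      IsDiscreteSubgroup (Subgroup.closure {f, g}) →
      ¬ VirtuallyAbelian ↥(Subgroup.closure ({f, g} : Set SL2R)) →
      ∃ h ∈ Subgroup.closure ({f, g} : Set SL2R),
        (∃ (n : ℕ) (w : Fin n → SL2R), n ≤ C ∧
          (∀ i, w i ∈ ({f, f⁻¹, g, g⁻¹} : Set SL2R)) ∧ h = (List.ofFn w).prod) ∧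
        ∃ N : ℕ, 0 < N ∧ N ≤ C ∧
          Function.Injective
            ⇑(FreeGroup.lift
                ![QuotientGroup.mk' (Subgroup.center SL2R) (f ^ N),
                  QuotientGroup.mk' (Subgroup.center SL2R) h] :
              FreeGroup (Fin 2) →* SL2R ⧸ Subgroup.center SL2R) := by
  refine ⟨20, by norm_num, ?_⟩
  intro f g hf hg hΓ hva
  have htf := QTA.trAbs hf
  have htg := QTA.trAbs hg
  have hfm : f ∈ Subgroup.closure ({f, g} : Set SL2R) := Subgroup.subset_closure (by simp)
  have hgm : g ∈ Subgroup.closure ({f, g} : Set SL2R) := Subgroup.subset_closure (by simp)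
  have hθ := QTA.theta_lower hΓ hfm hgm (QTA.not_comm hva) htf htg
  obtain ⟨F, hFd⟩ : ∃ F, F = (f * f) * (f * f) := ⟨_, rfl⟩
  have hF4 : f ^ 4 = F := by rw [hFd]; simp only [pow_succ, pow_zero, one_mul, mul_assoc]
  have htF : QTA.tr F = (QTA.tr f ^ 2 - 2) ^ 2 - 2 := by rw [hFd, QTA.tr_sq, QTA.tr_sq]
  have htF2 : 2 ≤ QTA.tr F := by rw [htF]; nlinarith
  have hthF : ∀ k, QTA.th F k = QTA.tr f ^ 2 * (QTA.tr f ^ 2 - 2) ^ 2 * QTA.th f k := by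
    intro k
    rw [hFd, QTA.th_sq_left, QTA.th_sq_left, QTA.tr_sq]; ring
  have hk2 : QTA.th f (g * g) = QTA.tr g ^ 2 * QTA.th f g := by rw [QTA.th_sq_right]
  have hk4 : QTA.th f ((g * g) * (g * g)) = (QTA.tr g ^ 2 - 2) ^ 2 * QTA.th f (g * g) := by
    rw [QTA.th_sq_right, QTA.tr_sq]
  have wf := QTA.Wd.f f g
  have wg := QTA.Wd.g f g
  have wF : QTA.Wd f g 4 F := by rw [hFd]; exact (wf.mul wf).mul (wf.mul wf)
  have hVD : QTA.tr F ^ 2 = QTA.tr f ^ 2 * (QTA.tr f ^ 2 - 2) ^ 2 * (QTA.tr f ^ 2 - 4) + 4 := by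
    rw [htF]; ring
  have hk : ∃ k, QTA.Wd f g 8 k ∧ (QTA.th F k ≤ -4 ∨ QTA.tr F ^ 2 ≤ QTA.th F k) := by
    rw [← hk2] at hθ
    rcases QTA.numeric (QTA.tr f ^ 2) _ _ (QTA.th f (g * g)) (QTA.th f ((g * g) * (g * g))) htf rfl rfl
      hθ ⟨(QTA.tr g ^ 2 - 2) ^ 2, by nlinarith, hk4⟩ with h | h | h
    · refine ⟨g * g, (wg.mul wg).mono (by norm_num), ?_⟩
      rw [hthF, hVD]; exact h
    · refine ⟨(g * g) * F * (g * g)⁻¹, ((wg.mul wg).mul wF).mul (wg.mul wg).inv, Or.inl ?_⟩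
      rw [QTA.th_conj, hVD, hthF]
      linarith
    · refine ⟨(g * g) * (g * g), ((wg.mul wg).mul (wg.mul wg)).mono (by norm_num), Or.inr ?_⟩
      rw [hthF, hVD]; exact h
  obtain ⟨k, wk, hkk⟩ := hk
  obtain ⟨h, hh, hth, hFh⟩ := QTA.choose_h F k htF2 hkk
  have wh : QTA.Wd f g 20 h := by
    rcases hh with rfl | rfl
    · exact (wk.mul wF.inv).mul wk.inv
    · exact (wk.mul wF).mul wk.inv
  obtain ⟨hmem, hw⟩ := wh.fin
  refine ⟨h, hmem, hw, 4, by norm_num, by norm_num, ?_⟩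
  rw [hF4]
  exact QTA.pp_psl F h htF2 hth hFh
end

section
/- Let ℍ be the hyperbolic plane on which SL(2,ℝ) acts by Möbius isometries, and let ε > 0 be a Margulis constant for ℍ, i.e. assume: for every discrete subgroup Δ of SL(2,ℝ) and every x ∈ ℍ, the subgroup of Δ generated by {γ ∈ Δ : dist(x, γ·x) ≤ ε} is virtually abelian. Set δ := arccosh(√2) = log(1+√2) and let L₁ > 0 be defined by sinh(L₁)·sinh(ε/100) = 1. Let λ > 0 and let g, h ∈ SL(2,ℝ) be hyperbolic elements (|trace| > 2) whose translation lengths τ(g) := ⨅_{x∈ℍ} dist(x, g·x) and τ(h) are equal to a common value τ ≥ λ, and suppose the subgroup of SL(2,ℝ) generated by g and h is discrete and not virtually abelian. Then for every natural number N ≥ max( (5 + 2δ + 3L₁)/λ , 27 + 9(5 + 2δ)/L₁ ), the images of g^N and h^N in PSL(2,ℝ) generate a free group of rank two. -/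
open UpperHalfPlane

/-- `ε` is a Margulis constant for `ℍ`: for every discrete subgroup `Δ ≤ SL(2,ℝ)` and
every `x ∈ ℍ`, the subgroup generated by the elements of `Δ` moving `x` at most `ε` is
virtually abelian. -/
def IsMargulisConstant (ε : ℝ) : Prop :=
  ∀ Δ : Subgroup SL2R, IsDiscreteSubgroup Δ → ∀ x : UpperHalfPlane,
    VirtuallyAbelian ↥(Subgroup.closure {γ : SL2R | γ ∈ Δ ∧ dist x (γ • x) ≤ ε})

/-- The translation length of `g ∈ SL(2,ℝ)` acting on `ℍ`. -/
noncomputable def translationLength (g : SL2R) : ℝ :=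
  ⨅ x : UpperHalfPlane, dist x (g • x)

def PP (G H : SL2R) : Prop := ∃ f : SL2R → ℝ,
  (∀ M, 2 * f M < f (G * M) + f (G⁻¹ * M)) ∧ (∀ M, 2 * f M < f (H * M) + f (H⁻¹ * M)) ∧
  (∀ M, 2 * f M < f (G * M) + f (H * M)) ∧ (∀ M, 2 * f M < f (G * M) + f (H⁻¹ * M)) ∧
  (∀ M, 2 * f M < f (G⁻¹ * M) + f (H * M)) ∧ (∀ M, 2 * f M < f (G⁻¹ * M) + f (H⁻¹ * M))

lemma PP.inv {G H : SL2R} (h : PP G H) : PP G H⁻¹ := by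
  obtain ⟨f, h1, h2, h3, h4, h5, h6⟩ := h
  refine ⟨f, h1, fun M => ?_, h4, ?_, h6, ?_⟩
  · have := h2 M
    rw [inv_inv]; linarith
  · simpa using h3
  · simpa using h5

lemma PP.conj {G H M : SL2R} (h : PP (M * G * M⁻¹) (M * H * M⁻¹)) : PP G H := by
  obtain ⟨f, h1, h2, h3, h4, h5, h6⟩ := h
  refine ⟨fun X => f (M * X), fun X => ?_, fun X => ?_, fun X => ?_, fun X => ?_, fun X => ?_,
    fun X => ?_⟩
  · simpa [mul_assoc] using h1 (M * X)
  · simpa [mul_assoc] using h2 (M * X)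
  · simpa [mul_assoc] using h3 (M * X)
  · simpa [mul_assoc] using h4 (M * X)
  · simpa [mul_assoc] using h5 (M * X)
  · simpa [mul_assoc] using h6 (M * X)

open scoped Pointwise in
lemma PP.injective {G H : SL2R} (h : PP G H) :
    Function.Injective (FreeGroup.lift ![G, H] : FreeGroup (Fin 2) →* SL2R) := by
  obtain ⟨f, h1, h2, h3, h4, h5, h6⟩ := h
  let a : Fin 2 → SL2R := ![G, H]
  let X : Fin 2 → Set SL2R := fun i => {M | f ((a i)⁻¹ * M) ≤ f M}
  let Y : Fin 2 → Set SL2R := fun i => {M | f ((a i) * M) < f M}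
  have hX : ∀ i, a i • (Y i)ᶜ ⊆ X i := by
    rintro i _ ⟨M, hM, rfl⟩
    simpa [X, Y] using hM
  have hY : ∀ i, a⁻¹ i • (X i)ᶜ ⊆ Y i := by
    rintro i _ ⟨M, hM, rfl⟩
    simpa [X, Y] using hM
  have hXd : Pairwise (Function.onFun Disjoint X) := by
    intro i j hij
    rw [Function.onFun, Set.disjoint_left]
    intro M hi hj
    fin_cases i <;> fin_cases j <;> simp [X, a] at hij hi hj
    · linarith [h6 M]
    · linarith [h6 M]
  have hYd : Pairwise (Function.onFun Disjoint Y) := by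
    intro i j hij
    rw [Function.onFun, Set.disjoint_left]
    intro M hi hj
    fin_cases i <;> fin_cases j <;> simp [Y, a] at hij hi hj
    · linarith [h3 M]
    · linarith [h3 M]
  have hXY : ∀ i j, Disjoint (X i) (Y j) := by
    intro i j
    rw [Set.disjoint_left]
    intro M hi hj
    fin_cases i <;> fin_cases j <;> simp [X, Y, a] at hi hj
    · linarith [h1 M]
    · linarith [h5 M]
    · linarith [h4 M]
    · linarith [h2 M]
  refine FreeGroup.injective_lift_of_ping_pong (α := SL2R) a X Y ?_ hXd hYd hXY hX hY
  intro i
  by_contra hne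
  rw [Set.not_nonempty_iff_eq_empty] at hne
  have hYi : ∀ M, M ∈ Y i := by
    intro M
    by_contra hM
    have : a i • M ∈ X i := hX i ⟨M, hM, rfl⟩
    rw [hne] at this
    exact this
  obtain ⟨j, hj⟩ := exists_ne i
  by_cases h1j : (1 : SL2R) ∈ Y j
  · exact Set.disjoint_left.1 (hYd hj) h1j (hYi 1)
  · have : a j • 1 ∈ X j := hX j ⟨1, h1j, rfl⟩
    exact Set.disjoint_left.1 (hXY j i) this (hYi _)

lemma PP.injective' {G H G' H' : SL2R} (h : PP G H)
    (hG : QuotientGroup.mk' (Subgroup.center SL2R) G' = QuotientGroup.mk' (Subgroup.center SL2R) G)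
    (hH : QuotientGroup.mk' (Subgroup.center SL2R) H' = QuotientGroup.mk' (Subgroup.center SL2R) H) :
    Function.Injective
      ⇑(FreeGroup.lift
          ![QuotientGroup.mk' (Subgroup.center SL2R) G',
            QuotientGroup.mk' (Subgroup.center SL2R) H'] :
        FreeGroup (Fin 2) →* SL2R ⧸ Subgroup.center SL2R) := by
  rw [hG, hH]
  have hl : (FreeGroup.lift
          ![QuotientGroup.mk' (Subgroup.center SL2R) G,
            QuotientGroup.mk' (Subgroup.center SL2R) H] :
        FreeGroup (Fin 2) →* SL2R ⧸ Subgroup.center SL2R) =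
      (QuotientGroup.mk' (Subgroup.center SL2R)).comp (FreeGroup.lift ![G, H]) := by
    ext i
    fin_cases i <;> simp
  rw [hl, injective_iff_map_eq_one]
  intro w hw
  rw [MonoidHom.comp_apply, QuotientGroup.mk'_apply, QuotientGroup.eq_one_iff] at hw
  have hinj := h.injective
  have hc : ∀ u, u * w = w * u := by
    intro u
    apply hinj
    rw [map_mul, map_mul]
    exact Subgroup.mem_center_iff.1 hw _
  have hsq : (FreeGroup.lift ![G, H] w) ^ 2 = 1 := by
    obtain ⟨r, hr, hr2⟩ := Matrix.SpecialLinearGroup.mem_center_iff.1 hw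
    ext i j
    rw [Matrix.SpecialLinearGroup.coe_pow, ← hr2]
    simp at hr
    rw [← map_pow]
    rcases hr with rfl | rfl <;> simp
  have : w ^ 2 = 1 := by
    apply hinj
    rw [map_pow, hsq, map_one]
  exact (pow_eq_one_iff_left (by norm_num)).1 this

lemma SL2R_det (g : SL2R) : g 0 0 * g 1 1 - g 0 1 * g 1 0 = 1 := by
  have := g.2
  rwa [Matrix.det_fin_two] at this

lemma cosh_dist_smul (g : SL2R) (z : ℍ) :
    Real.cosh (dist z (g • z)) = (g 0 0 + g 1 1) ^ 2 / 2 - 1 +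
      (g 1 0 * (z.re ^ 2 + z.im ^ 2) + (g 1 1 - g 0 0) * z.re - g 0 1) ^ 2 / (2 * z.im ^ 2) := by
  have hd := SL2R_det g
  have hy := z.im_pos
  set a := g 0 0
  set b := g 0 1
  set c := g 1 0
  set d := g 1 1
  set X := z.re with hX
  set Y := z.im with hY
  have hD : 0 < (c * X + d) ^ 2 + (c * Y) ^ 2 := by
    by_cases hc : c = 0
    · have : d ≠ 0 := by intro h0; simp [hc, h0] at hd
      rw [hc]; simp; positivity
    · positivity
  have hco : ((g • z : ℍ) : ℂ) = ((a : ℂ) * z + b) / ((c : ℂ) * z + d) :=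
    coe_specialLinearGroup_apply g z
  have hns : Complex.normSq ((c : ℂ) * z + d) = (c * X + d) ^ 2 + (c * Y) ^ 2 := by
    simp [Complex.normSq_apply, X, Y]; ring
  have hre : (g • z : ℍ).re = ((a * X + b) * (c * X + d) + a * c * Y ^ 2) / ((c * X + d) ^ 2 + (c * Y) ^ 2) := by
    rw [← UpperHalfPlane.coe_re, hco, Complex.div_re, hns]
    simp [← hX, ← hY]
    field_simp
    try ring
  have him : (g • z : ℍ).im = Y / ((c * X + d) ^ 2 + (c * Y) ^ 2) := by
    rw [← UpperHalfPlane.coe_im, hco, Complex.div_im, hns]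
    simp [← hX, ← hY]
    field_simp
    linear_combination (((c * X + d) ^ 2 + (c * Y) ^ 2)⁻¹) * hd
  rw [UpperHalfPlane.cosh_dist', hre, him, ← hX, ← hY]
  have key : (X * ((c * X + d) ^ 2 + (c * Y) ^ 2) - ((a * X + b) * (c * X + d) + a * c * Y ^ 2)) ^ 2
      + (Y * ((c * X + d) ^ 2 + (c * Y) ^ 2) - Y) ^ 2 = ((c * X + d) ^ 2 + (c * Y) ^ 2) *
      ((c * (X ^ 2 + Y ^ 2) + (d - a) * X - b) ^ 2 + Y ^ 2 * ((a + d) ^ 2 - 4)) := by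
    have hb : (a * d - b * c) ^ 2 = 1 := by rw [hd]; norm_num
    linear_combination (-2 * Y ^ 2 * ((c * X + d) ^ 2 + (c * Y) ^ 2) + 4 * Y ^ 2 * ((c * X + d) ^ 2 + (c * Y) ^ 2)) * hd * (-1) - Y ^ 2 * hb
  generalize (c * X + d) ^ 2 + (c * Y) ^ 2 = D at *
  generalize (a * X + b) * (c * X + d) + a * c * Y ^ 2 = n at *
  generalize c * (X ^ 2 + Y ^ 2) + (d - a) * X - b = F at *
  have : (X - n / D) ^ 2 + Y ^ 2 + (Y / D) ^ 2 =
      ((X * D - n) ^ 2 + (Y * D - Y) ^ 2) / D ^ 2 + 2 * Y ^ 2 / D := by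
    field_simp
    ring
  rw [this, key]
  field_simp
  ring

lemma trace_eq (g : SL2R) (hg : 2 < |Matrix.trace (g : Matrix (Fin 2) (Fin 2) ℝ)|) :
    |g 0 0 + g 1 1| = 2 * Real.cosh (translationLength g / 2) := by
  have htr : Matrix.trace (g : Matrix (Fin 2) (Fin 2) ℝ) = g 0 0 + g 1 1 := Matrix.trace_fin_two _
  rw [htr] at hg
  have hdet := SL2R_det g
  have hsq : 4 < (g 0 0 + g 1 1) ^ 2 := by
    rw [← sq_abs]; nlinarith
  have hz : ∃ z : ℍ, g 1 0 * (z.re ^ 2 + z.im ^ 2) + (g 1 1 - g 0 0) * z.re - g 0 1 = 0 := by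
    by_cases hc : g 1 0 = 0
    · have hne : g 1 1 - g 0 0 ≠ 0 := by
        intro h0
        have : g 1 1 = g 0 0 := by linarith
        rw [hc, this] at hdet; rw [this] at hsq; nlinarith
      refine ⟨⟨⟨g 0 1 / (g 1 1 - g 0 0), 1⟩, by simp⟩, ?_⟩
      simp [hc]
      field_simp
      try ring
    · have hp : 0 < ((g 0 0 + g 1 1) ^ 2 - 4) / (4 * (g 1 0) ^ 2) := by
        apply div_pos <;> [linarith; positivity]
      refine ⟨⟨⟨(g 0 0 - g 1 1) / (2 * g 1 0), √(((g 0 0 + g 1 1) ^ 2 - 4) / (4 * (g 1 0) ^ 2))⟩,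
        by simpa using Real.sqrt_pos.2 hp⟩, ?_⟩
      simp only [UpperHalfPlane.re, UpperHalfPlane.im]
      rw [Real.sq_sqrt hp.le]
      field_simp
      linear_combination 16 * hdet
  obtain ⟨z, hz⟩ := hz
  have hle : ∀ w : ℍ, dist z (g • z) ≤ dist w (g • w) := by
    intro w
    rw [← abs_of_nonneg (dist_nonneg (x := z) (y := g • z)),
      ← abs_of_nonneg (dist_nonneg (x := w) (y := g • w)), ← Real.cosh_le_cosh,
      cosh_dist_smul, cosh_dist_smul, hz]
    have := w.im_pos
    have : 0 ≤ (g 1 0 * (w.re ^ 2 + w.im ^ 2) + (g 1 1 - g 0 0) * w.re - g 0 1) ^ 2 / (2 * w.im ^ 2) := by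
      positivity
    simpa using this
  have htl : translationLength g = dist z (g • z) := by
    apply le_antisymm
    · exact ciInf_le ⟨0, by rintro _ ⟨w, rfl⟩; exact dist_nonneg⟩ z
    · exact le_ciInf hle
  have h1 := cosh_dist_smul g z
  rw [hz, ← htl] at h1
  have h2 : Real.cosh (translationLength g) = 2 * Real.cosh (translationLength g / 2) ^ 2 - 1 := by
    have := Real.cosh_sq' (translationLength g / 2)
    have h3 := Real.cosh_two_mul (translationLength g / 2)
    rw [mul_div_cancel₀ _ (by norm_num : (2:ℝ) ≠ 0)] at h3
    linarith
  have h3 : |g 0 0 + g 1 1| ^ 2 = (2 * Real.cosh (translationLength g / 2)) ^ 2 := by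
    rw [sq_abs]; simp at h1; linarith
  have := Real.cosh_pos (translationLength g / 2)
  exact (sq_eq_sq₀ (abs_nonneg _) (by positivity)).1 h3

/-- Normal form matrix. -/
def NF (c s p y z : ℝ) : Matrix (Fin 2) (Fin 2) ℝ := !![c + s * p, s * y; s * z, c - s * p]

lemma NF_pow (x p y z : ℝ) (hp : p ^ 2 + y * z = 1) (n : ℕ) :
    NF (Real.cosh x) (Real.sinh x) p y z ^ n = NF (Real.cosh (n * x)) (Real.sinh (n * x)) p y z := by
  induction n with
  | zero => ext i j; fin_cases i <;> fin_cases j <;> simp [NF]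
  | succ n ih =>
    rw [pow_succ, ih]
    push_cast
    rw [add_mul, one_mul, Real.cosh_add, Real.sinh_add]
    ext i j
    fin_cases i <;> fin_cases j <;> simp [NF, Matrix.mul_apply, Fin.sum_univ_two]
    · linear_combination (Real.sinh (n * x) * Real.sinh x) * hp
    · ring
    · ring
    · linear_combination (Real.sinh (n * x) * Real.sinh x) * hp

lemma NF_inv {G : SL2R} {c s p y z : ℝ} (h : (G : Matrix (Fin 2) (Fin 2) ℝ) = NF c s p y z) :
    ((G⁻¹ : SL2R) : Matrix (Fin 2) (Fin 2) ℝ) = NF c (-s) p y z := by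
  rw [Matrix.SpecialLinearGroup.coe_inv, h, NF, Matrix.adjugate_fin_two_of]
  ext i j
  fin_cases i <;> fin_cases j <;> simp [NF, sub_eq_add_neg]

lemma quad_pos {P R : ℝ} (hP : |R| < P) {u v : ℝ} (h : u ≠ 0 ∨ v ≠ 0) :
    0 < P * (u ^ 2 + v ^ 2) + R * (u ^ 2 - v ^ 2) := by
  obtain ⟨h1, h2⟩ := abs_lt.1 hP
  rcases h with h | h
  · have := sq_nonneg v
    have := sq_pos_of_ne_zero h
    nlinarith
  · have := sq_nonneg u
    have := sq_pos_of_ne_zero h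
    nlinarith

lemma quad_pos' {P R : ℝ} (hP : |R| < P) {u v : ℝ} (h : u ≠ 0 ∨ v ≠ 0) :
    0 < P * (u ^ 2 + v ^ 2) + R * (2 * u * v) := by
  have h' : u + v ≠ 0 ∨ u - v ≠ 0 := by
    by_contra hh
    push Not at hh
    rcases h with h | h <;> apply h <;> linarith [hh.1, hh.2]
  have := quad_pos hP h'
  nlinarith

/-- squared norm of the first column of `A * M`. -/
lemma PP_of_NF {G H : SL2R} {c s p y z : ℝ}
    (hG : (G : Matrix (Fin 2) (Fin 2) ℝ) = NF c s p y z)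
    (hH : (H : Matrix (Fin 2) (Fin 2) ℝ) = NF c s p (-y) (-z))
    (hc : 0 < c) (hcs : c ^ 2 = 1 + s ^ 2) (hs : 1 < s) (hp : 0 < p) (hp2 : 1 ≤ 2 * p ^ 2)
    (hpyz : p ^ 2 + y * z = 1) (hyz : |y| = |z|) (hq : 1 < s * |y|) : PP G H := by
  have hGi := NF_inv hG
  have hHi := NF_inv hH
  have hy0 : 0 < |y| := by
    by_contra h0
    have : |y| = 0 := le_antisymm (not_lt.1 h0) (abs_nonneg _)
    rw [this] at hq; norm_num at hq
  have hq2 : 1 < s ^ 2 * y ^ 2 := by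
    rw [← sq_abs y]; nlinarith
  have hne : ∀ M : SL2R, M 0 0 ≠ 0 ∨ M 1 0 ≠ 0 := by
    intro M
    by_contra hh
    push Not at hh
    have := SL2R_det M
    rw [hh.1, hh.2] at this
    norm_num at this
  have hy2 : 0 < y ^ 2 := by rw [← sq_abs]; positivity
  have hz2 : z ^ 2 = y ^ 2 := by rw [← sq_abs, ← hyz, sq_abs]
  have hcp : z = y → c * p < s := by
    intro h
    subst h
    apply lt_of_pow_lt_pow_left₀ 2 (by linarith)
    rw [mul_pow]
    nlinarith
  have hcy : z = y → c * |y| < s := by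
    intro h
    subst h
    apply lt_of_pow_lt_pow_left₀ 2 (by linarith)
    rw [mul_pow, sq_abs]
    nlinarith
  have hcp' : z = -y → c < s * p := by
    intro h
    subst h
    apply lt_of_pow_lt_pow_left₀ 2 (by positivity)
    nlinarith
  have hzy : z = y ∨ z = -y := sq_eq_sq_iff_eq_or_eq_neg.1 hz2
  refine ⟨fun M => M 0 0 ^ 2 + M 1 0 ^ 2, fun M => ?_, fun M => ?_, fun M => ?_, fun M => ?_,
    fun M => ?_, fun M => ?_⟩
  all_goals
    simp only [Matrix.SpecialLinearGroup.coe_mul, hG, hH, hGi, hHi, NF, Matrix.mul_apply,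
      Fin.sum_univ_two, Matrix.of_apply, Matrix.cons_val', Matrix.cons_val_zero,
      Matrix.cons_val_one, Matrix.cons_val_fin_one]
    have hM := hne M
    generalize M 0 0 = u at *
    generalize M 1 0 = v at *
    have huv : 0 < u ^ 2 + v ^ 2 := by
      rcases hM with h | h <;> positivity
  · have : 0 < s ^ 2 * (u ^ 2 + v ^ 2) := by positivity
    nlinarith [sq_nonneg (s * (p * u + y * v)), sq_nonneg (s * (z * u - p * v))]
  · have : 0 < s ^ 2 * (u ^ 2 + v ^ 2) := by positivity
    nlinarith [sq_nonneg (s * (p * u - y * v)), sq_nonneg (s * (z * u + p * v))]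
  · rcases hzy with h | h
    · have h1 := hcp h
      subst h
      have h2 := quad_pos (P := s * s) (R := (s * (c * p)))
        (by rw [abs_of_pos (by positivity)]; nlinarith) hM
      linear_combination 4 * h2 - 2 * (u ^ 2 + v ^ 2) * hcs - 2 * s ^ 2 * (u ^ 2 + v ^ 2) * hpyz
    · have h1 := hcp' h
      subst h
      have h2 := quad_pos (P := (s * p) * (s * p)) (R := (s * p * c))
        (by rw [abs_of_pos (by positivity)]; exact mul_lt_mul_of_pos_left h1 (by positivity)) hM
      linear_combination 4 * h2 - 2 * (u ^ 2 + v ^ 2) * hcs + 2 * s ^ 2 * (u ^ 2 + v ^ 2) * hpyz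
  · rcases hzy with h | h
    · have h1 := hcy h
      subst h
      have h2 := quad_pos' (P := s * s) (R := (s * (c * z)))
        (by rw [abs_mul, abs_mul, abs_of_pos hc, abs_of_pos (by linarith : 0 < s)]; nlinarith) hM
      linear_combination 4 * h2 - 2 * (u ^ 2 + v ^ 2) * hcs - 2 * s ^ 2 * (u ^ 2 + v ^ 2) * hpyz
    · subst h
      have h2 : 0 < s ^ 2 * p ^ 2 * (u ^ 2 + v ^ 2) := by positivity
      linear_combination 4 * h2 - 2 * (u ^ 2 + v ^ 2) * hcs + 2 * s ^ 2 * (u ^ 2 + v ^ 2) * hpyz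
  · rcases hzy with h | h
    · have h1 := hcy h
      subst h
      have h2 := quad_pos' (P := s * s) (R := -(s * (c * z)))
        (by rw [abs_neg]; rw [abs_mul, abs_mul, abs_of_pos hc, abs_of_pos (by linarith : 0 < s)]; nlinarith) hM
      linear_combination 4 * h2 - 2 * (u ^ 2 + v ^ 2) * hcs - 2 * s ^ 2 * (u ^ 2 + v ^ 2) * hpyz
    · subst h
      have h2 : 0 < s ^ 2 * p ^ 2 * (u ^ 2 + v ^ 2) := by positivity
      linear_combination 4 * h2 - 2 * (u ^ 2 + v ^ 2) * hcs + 2 * s ^ 2 * (u ^ 2 + v ^ 2) * hpyz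
  · rcases hzy with h | h
    · have h1 := hcp h
      subst h
      have h2 := quad_pos (P := s * s) (R := -(s * (c * p)))
        (by rw [abs_neg]; rw [abs_of_pos (by positivity)]; nlinarith) hM
      linear_combination 4 * h2 - 2 * (u ^ 2 + v ^ 2) * hcs - 2 * s ^ 2 * (u ^ 2 + v ^ 2) * hpyz
    · have h1 := hcp' h
      subst h
      have h2 := quad_pos (P := (s * p) * (s * p)) (R := -(s * p * c))
        (by rw [abs_neg]; rw [abs_of_pos (by positivity)]; exact mul_lt_mul_of_pos_left h1 (by positivity)) hM
      linear_combination 4 * h2 - 2 * (u ^ 2 + v ^ 2) * hcs + 2 * s ^ 2 * (u ^ 2 + v ^ 2) * hpyz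

lemma diag_exists (a b c m : ℝ) (hm : 0 < m) (h : a ^ 2 + b * c = m ^ 2) :
    ∃ M : SL2R, (M : Matrix (Fin 2) (Fin 2) ℝ) * !![a, b; c, -a] = !![m, 0; 0, -m] * M := by
  by_cases hc : c = 0
  · subst hc
    have : a = m ∨ a = -m := sq_eq_sq_iff_eq_or_eq_neg.1 (by linarith)
    rcases this with rfl | rfl
    · refine ⟨⟨!![1, b / (2 * a); 0, 1], by simp [Matrix.det_fin_two]⟩, ?_⟩
      ext i j
      fin_cases i <;> fin_cases j <;> simp [Matrix.mul_apply, Fin.sum_univ_two]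
      field_simp; ring
    · refine ⟨⟨!![0, 1; -1, b / (2 * m)], by simp [Matrix.det_fin_two]⟩, ?_⟩
      ext i j
      fin_cases i <;> fin_cases j <;> simp [Matrix.mul_apply, Fin.sum_univ_two]
      field_simp; ring
  · refine ⟨⟨!![-1 / (2 * m), -(m - a) / (2 * m * c); c, -m - a], ?_⟩, ?_⟩
    · simp [Matrix.det_fin_two]; field_simp; ring
    · ext i j
      fin_cases i <;> fin_cases j <;> simp [Matrix.mul_apply, Fin.sum_univ_two]
      · field_simp; ring
      · field_simp; linear_combination (-1) * h
      · ring
      · linear_combination h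

lemma frame {g h : SL2R} {c s : ℝ} (hs : 0 < s) (hcs : c ^ 2 = 1 + s ^ 2)
    (hg : g 0 0 + g 1 1 = 2 * c) (hh : h 0 0 + h 1 1 = 2 * c)
    (hgh : 2 * c ^ 2 ≤ (g * h) 0 0 + (g * h) 1 1) :
    ∃ (M : SL2R) (p y z : ℝ), 0 < p ∧ 1 ≤ 2 * p ^ 2 ∧ p ^ 2 + y * z = 1 ∧
      ((M * g * M⁻¹ : SL2R) : Matrix (Fin 2) (Fin 2) ℝ) = NF c s p y z ∧
      ((M * h * M⁻¹ : SL2R) : Matrix (Fin 2) (Fin 2) ℝ) = NF c s p (-y) (-z) ∧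
      (y = 0 ∨ z = 0 ∨ |y| = |z|) := by
  have step1 : ∃ (M : SL2R) (p y z : ℝ), 0 < p ∧ 1 ≤ 2 * p ^ 2 ∧ p ^ 2 + y * z = 1 ∧
      ((M * g * M⁻¹ : SL2R) : Matrix (Fin 2) (Fin 2) ℝ) = NF c s p y z ∧
      ((M * h * M⁻¹ : SL2R) : Matrix (Fin 2) (Fin 2) ℝ) = NF c s p (-y) (-z) := by
    have hdg := SL2R_det g
    have hdh := SL2R_det h
    simp only [Matrix.SpecialLinearGroup.coe_mul, Matrix.mul_apply, Fin.sum_univ_two] at hgh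
    set a := g 0 0 + h 0 0 - 2 * c with ha
    set b := g 0 1 + h 0 1 with hb
    set e := g 1 0 + h 1 0 with he
    have hdisc : 2 * s ^ 2 ≤ a ^ 2 + b * e := by
      have e1 : g 1 1 = 2 * c - g 0 0 := by linarith
      have e2 : h 1 1 = 2 * c - h 0 0 := by linarith
      rw [e1] at hdg hgh
      rw [e2] at hdh hgh
      rw [ha, hb, he]
      nlinarith
    obtain ⟨p, hp0, hp⟩ : ∃ p : ℝ, 0 < p ∧ (2 * s * p) ^ 2 = a ^ 2 + b * e := by
      have h0 : 0 < a ^ 2 + b * e := lt_of_lt_of_le (by positivity) hdisc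
      refine ⟨√(a ^ 2 + b * e) / (2 * s), by positivity, ?_⟩
      rw [mul_div_cancel₀ _ (by positivity), Real.sq_sqrt h0.le]
    obtain ⟨M, hM⟩ := diag_exists a b e (2 * s * p) (by positivity) hp.symm
    have hsum : (g : Matrix (Fin 2) (Fin 2) ℝ) + h = !![a, b; e, -a] + (2 * c) • 1 := by
      ext i j
      fin_cases i <;> fin_cases j <;> simp [ha, hb, he]
      linarith
    have hMM : (M : Matrix (Fin 2) (Fin 2) ℝ) * ((M⁻¹ : SL2R) : Matrix (Fin 2) (Fin 2) ℝ) = 1 := by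
      rw [← Matrix.SpecialLinearGroup.coe_mul, mul_inv_cancel, Matrix.SpecialLinearGroup.coe_one]
    have hconj : ((M * g * M⁻¹ : SL2R) : Matrix (Fin 2) (Fin 2) ℝ) + ((M * h * M⁻¹ : SL2R) : Matrix (Fin 2) (Fin 2) ℝ)
        = !![2 * s * p, 0; 0, -(2 * s * p)] + (2 * c) • 1 := by
      simp only [Matrix.SpecialLinearGroup.coe_mul]
      rw [← add_mul, ← mul_add, hsum, mul_add, add_mul, hM, mul_assoc, hMM, mul_one]
      rw [Matrix.mul_smul, Matrix.smul_mul, mul_one, hMM]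
    have tr1 : (M * g * M⁻¹) 0 0 + (M * g * M⁻¹) 1 1 = 2 * c := by
      rw [← hg, ← Matrix.trace_fin_two, ← Matrix.trace_fin_two, Matrix.SpecialLinearGroup.coe_mul,
        Matrix.trace_mul_comm, ← Matrix.SpecialLinearGroup.coe_mul, inv_mul_cancel_left]
    have tr2 : (M * h * M⁻¹) 0 0 + (M * h * M⁻¹) 1 1 = 2 * c := by
      rw [← hh, ← Matrix.trace_fin_two, ← Matrix.trace_fin_two, Matrix.SpecialLinearGroup.coe_mul,
        Matrix.trace_mul_comm, ← Matrix.SpecialLinearGroup.coe_mul, inv_mul_cancel_left]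
    have d1 := SL2R_det (M * g * M⁻¹)
    have d2 := SL2R_det (M * h * M⁻¹)
    obtain ⟨g', hg'⟩ : ∃ g' : SL2R, M * g * M⁻¹ = g' := ⟨_, rfl⟩
    obtain ⟨h', hh'⟩ : ∃ h' : SL2R, M * h * M⁻¹ = h' := ⟨_, rfl⟩
    rw [hg'] at tr1 d1 hconj
    rw [hh'] at tr2 d2 hconj
    have c00 := congr_fun (congr_fun hconj 0) 0
    have c01 := congr_fun (congr_fun hconj 0) 1
    have c10 := congr_fun (congr_fun hconj 1) 0
    have c11 := congr_fun (congr_fun hconj 1) 1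
    simp at c00 c01 c10 c11
    have e1 : g' 1 1 = 2 * c - g' 0 0 := by linarith
    have e2 : h' 1 1 = 2 * c - h' 0 0 := by linarith
    have e3 : h' 0 1 = - g' 0 1 := by linarith
    have e4 : h' 1 0 = - g' 1 0 := by linarith
    have e5 : h' 0 0 = 2 * s * p + 2 * c - g' 0 0 := by linarith
    rw [e2, e3, e4, e5] at d2
    rw [e1] at d1
    have e6 : g' 0 0 = c + s * p := by
      have : (4 * s * p) * (g' 0 0 - (c + s * p)) = 0 := by
        linear_combination d2 - d1
      rcases mul_eq_zero.1 this with h0 | h0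
      · exact absurd h0 (by positivity)
      · linarith
    refine ⟨M, p, g' 0 1 / s, g' 1 0 / s, hp0, ?_, ?_, ?_, ?_⟩
    · have : 2 * s ^ 2 * 1 ≤ 2 * s ^ 2 * (2 * p ^ 2) := by nlinarith
      exact le_of_mul_le_mul_left this (by positivity)
    · rw [e6] at d1
      field_simp
      linear_combination hcs - d1
    · rw [hg']
      ext i j
      fin_cases i <;> fin_cases j <;> simp [NF]
      · exact e6
      · field_simp
      · field_simp
      · rw [e1, e6]; ring
    · rw [hh']
      ext i j
      fin_cases i <;> fin_cases j <;> simp [NF]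
      · rw [e5, e6]; ring
      · rw [e3]; field_simp
      · rw [e4]; field_simp
      · rw [e2, e5, e6]; ring
  obtain ⟨M, p, y, z, hp, hp2, hpyz, h1, h2⟩ := step1
  by_cases hy : y = 0
  · exact ⟨M, p, y, z, hp, hp2, hpyz, h1, h2, Or.inl hy⟩
  by_cases hz : z = 0
  · exact ⟨M, p, y, z, hp, hp2, hpyz, h1, h2, Or.inr (Or.inl hz)⟩
  have hr : 0 < √(|z| / |y|) := by positivity
  obtain ⟨t, ht0, ht⟩ : ∃ t : ℝ, 0 < t ∧ t ^ 2 = √(|z| / |y|) :=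
    ⟨√(√(|z| / |y|)), by positivity, Real.sq_sqrt hr.le⟩
  have ht4 : t ^ 4 * |y| = |z| := by
    have : t ^ 4 = |z| / |y| := by
      rw [show t ^ 4 = (t ^ 2) ^ 2 by ring, ht, Real.sq_sqrt (by positivity)]
    rw [this]
    field_simp
  let D : SL2R := ⟨!![t, 0; 0, t⁻¹], by simp [Matrix.det_fin_two, ht0.ne']⟩
  have hD : ∀ (X : SL2R) (y z : ℝ), (X : Matrix (Fin 2) (Fin 2) ℝ) = NF c s p y z →
      ((D * X * D⁻¹ : SL2R) : Matrix (Fin 2) (Fin 2) ℝ) = NF c s p (t ^ 2 * y) (z / t ^ 2) := by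
    intro X y z hX
    have hDc : (D : Matrix (Fin 2) (Fin 2) ℝ) = !![t, 0; 0, t⁻¹] := rfl
    have hDi : ((D⁻¹ : SL2R) : Matrix (Fin 2) (Fin 2) ℝ) = !![t⁻¹, 0; 0, t] := by
      rw [Matrix.SpecialLinearGroup.coe_inv, hDc, Matrix.adjugate_fin_two_of]; simp
    rw [Matrix.SpecialLinearGroup.coe_mul, Matrix.SpecialLinearGroup.coe_mul, hX, hDc, hDi]
    ext i j
    fin_cases i <;> fin_cases j <;> simp [NF, Matrix.mul_apply, Fin.sum_univ_two] <;> field_simp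
  refine ⟨D * M, p, t ^ 2 * y, z / t ^ 2, hp, hp2, ?_, ?_, ?_, Or.inr (Or.inr ?_)⟩
  · rw [← hpyz]; field_simp
  · rw [← hD _ y z h1]; simp [mul_assoc]
  · rw [← mul_neg, ← neg_div, ← hD _ (-y) (-z) h2]; simp [mul_assoc]
  · rw [abs_mul, abs_div, abs_of_pos (by positivity : 0 < t ^ 2), ← ht4]
    field_simp

lemma IsDiscreteSubgroup.conj {Γ : Subgroup SL2R} (h : IsDiscreteSubgroup Γ) (M : SL2R) :
    IsDiscreteSubgroup (Γ.map (MulAut.conj M).toMonoidHom) := by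
  obtain ⟨U, hU, h1, hγ⟩ := h
  refine ⟨(fun X : Matrix (Fin 2) (Fin 2) ℝ =>
    ((M⁻¹ : SL2R) : Matrix (Fin 2) (Fin 2) ℝ) * X * (M : Matrix (Fin 2) (Fin 2) ℝ)) ⁻¹' U,
    hU.preimage (by fun_prop), ?_, ?_⟩
  · rw [Set.mem_preimage, mul_one, ← Matrix.SpecialLinearGroup.coe_mul, inv_mul_cancel,
      Matrix.SpecialLinearGroup.coe_one]
    exact h1
  · rintro _ ⟨γ, hγΓ, rfl⟩ hmem
    have : γ = 1 := by
      apply hγ γ hγΓ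
      rw [Set.mem_preimage, ← Matrix.SpecialLinearGroup.coe_mul,
        ← Matrix.SpecialLinearGroup.coe_mul] at hmem
      convert hmem using 2
      simp [mul_assoc]
    rw [this, map_one]

/-- A sequence in a discrete group converging entrywise to `1` hits `1`. -/
lemma IsDiscreteSubgroup.exists_eq_one {Γ : Subgroup SL2R} (h : IsDiscreteSubgroup Γ)
    (u : ℕ → SL2R) (hu : ∀ n, u n ∈ Γ)
    (hlim : ∀ i j, Filter.Tendsto (fun n => (u n) i j) Filter.atTop
      (nhds ((1 : Matrix (Fin 2) (Fin 2) ℝ) i j))) : ∃ n, u n = 1 := by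
  obtain ⟨U, hU, h1, hγ⟩ := h
  have : Filter.Tendsto (fun n => ((u n : SL2R) : Matrix (Fin 2) (Fin 2) ℝ)) Filter.atTop
      (nhds 1) := by
    refine tendsto_pi_nhds.2 fun i => tendsto_pi_nhds.2 fun j => hlim i j
  obtain ⟨n, hn⟩ := (this.eventually (hU.mem_nhds h1)).exists
  exact ⟨n, hγ _ (hu n) hn⟩

open scoped commutatorElement in
lemma backtrack {k C : SL2R} (hk : (k 0 0 + k 1 1) ^ 2 ≠ 4) (hC : C 0 0 + C 1 1 ≠ 0)
    (h : ⁅k, ⁅k, C⁆⁆ = 1) : ⁅k, C⁆ = 1 := by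
  rw [commutatorElement_eq_one_iff_mul_comm] at h ⊢
  obtain ⟨W, hW⟩ : ∃ W, W = C * k * C⁻¹ := ⟨_, rfl⟩
  have hWC : W * C = C * k := by rw [hW]; group
  have hkW : k * W = W * k := by
    have h' : k * (k * W⁻¹) = (k * W⁻¹) * k := by
      have : ⁅k, C⁆ = k * W⁻¹ := by rw [hW, commutatorElement_def]; group
      rwa [this] at h
    have : k * W⁻¹ = W⁻¹ * k := by
      apply mul_left_cancel (a := k)
      rw [h', mul_assoc]
    calc k * W = W * (W⁻¹ * k) * W := by group
      _ = W * (k * W⁻¹) * W := by rw [this]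
      _ = W * k := by group
  have htr : W 0 0 + W 1 1 = k 0 0 + k 1 1 := by
    rw [← Matrix.trace_fin_two, ← Matrix.trace_fin_two, hW, Matrix.SpecialLinearGroup.coe_mul,
      Matrix.trace_mul_comm, ← Matrix.SpecialLinearGroup.coe_mul, inv_mul_cancel_left]
  have hdW := SL2R_det W
  have hdk := SL2R_det k
  have E := congr_arg (fun X : SL2R => (X : Matrix (Fin 2) (Fin 2) ℝ)) hkW
  have F := congr_arg (fun X : SL2R => (X : Matrix (Fin 2) (Fin 2) ℝ)) hWC
  simp only [Matrix.SpecialLinearGroup.coe_mul] at E F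
  have E00 := congr_fun (congr_fun E 0) 0
  have E01 := congr_fun (congr_fun E 0) 1
  have E10 := congr_fun (congr_fun E 1) 0
  have F00 := congr_fun (congr_fun F 0) 0
  have F01 := congr_fun (congr_fun F 0) 1
  have F10 := congr_fun (congr_fun F 1) 0
  have F11 := congr_fun (congr_fun F 1) 1
  simp only [Matrix.mul_apply, Fin.sum_univ_two] at E00 E01 E10 F00 F01 F10 F11
  have hWk : W = k → k * C = C * k := fun h => by rw [← hWC, h]
  by_contra hne
  have hWk' : ¬ (W 0 0 = k 0 0 ∧ W 0 1 = k 0 1 ∧ W 1 0 = k 1 0 ∧ W 1 1 = k 1 1) := by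
    rintro ⟨h1, h2, h3, h4⟩
    apply hne
    apply hWk
    ext i j
    fin_cases i <;> fin_cases j
    exacts [h1, h2, h3, h4]
  clear hne hWk h hWC hkW E F hW
  generalize W 0 0 = e at *
  generalize W 0 1 = f at *
  generalize W 1 0 = g at *
  generalize W 1 1 = w at *
  generalize k 0 0 = a at *
  generalize k 0 1 = b at *
  generalize k 1 0 = c at *
  generalize k 1 1 = d at *
  generalize C 0 0 = α at *
  generalize C 0 1 = β at *
  generalize C 1 0 = γ at *
  generalize C 1 1 = δ at *
  have hQ : (a - d) ^ 2 + 4 * b * c ≠ 0 := by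
    intro h0; apply hk; linear_combination h0 + 4 * hdk
  have hQ' : (e - w) ^ 2 + 4 * f * g = (a - d) ^ 2 + 4 * b * c := by
    linear_combination (e + w + a + d) * htr - 4 * hdW + 4 * hdk
  have p1 : (a - d) * f = b * (e - w) := by linear_combination E01
  have p2 : (a - d) * g = c * (e - w) := by linear_combination -E10
  have p3 : b * g = f * c := by linear_combination E00
  have q1 : (e - w) ^ 2 = (a - d) ^ 2 := by
    apply mul_right_cancel₀ hQ
    linear_combination (a-d)^2 * hQ' - 4 * (a - d) * g * p1 - 4 * b * (e - w) * p2
  have q2 : f ^ 2 = b ^ 2 := by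
    apply mul_right_cancel₀ hQ
    linear_combination b^2 * hQ' + ((a - d) * f + b * (e - w)) * p1 - 4 * b * f * p3
  have q3 : g ^ 2 = c ^ 2 := by
    apply mul_right_cancel₀ hQ
    linear_combination c^2 * hQ' + ((a - d) * g + c * (e - w)) * p2 + 4 * c * g * p3
  have key : (e - w = a - d ∧ f = b ∧ g = c) ∨ (e - w = -(a - d) ∧ f = -b ∧ g = -c) := by
    by_cases hD : a - d = 0
    · have hE : e - w = 0 := by rw [hD] at q1; simpa using q1
      rw [hD] at hQ
      have hb : b ≠ 0 := by rintro rfl; simp at hQ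
      rcases sq_eq_sq_iff_eq_or_eq_neg.1 q2 with h | h
      · left
        refine ⟨by rw [hD, hE], h, mul_left_cancel₀ hb ?_⟩
        rw [p3, h]
      · right
        refine ⟨by rw [hD, hE]; simp, h, mul_left_cancel₀ hb ?_⟩
        rw [p3, h]; ring
    · rcases sq_eq_sq_iff_eq_or_eq_neg.1 q1 with h | h
      · left
        refine ⟨h, mul_left_cancel₀ hD ?_, mul_left_cancel₀ hD ?_⟩
        · rw [p1, h]; ring
        · rw [p2, h]; ring
      · right
        refine ⟨h, mul_left_cancel₀ hD ?_, mul_left_cancel₀ hD ?_⟩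
        · rw [p1, h]; ring
        · rw [p2, h]; ring
  rcases key with ⟨k1, k2, k3⟩ | ⟨k1, k2, k3⟩
  · exact hWk' ⟨by linarith, k2, k3, by linarith⟩
  · have he : e = d := by linarith
    have hw : w = a := by linarith
    subst he hw k2 k3
    have r1 : (α + δ) * b = 0 := by linear_combination -F01
    have r2 : (α + δ) * c = 0 := by linear_combination -F10
    have r3 : (α + δ) * (w - e) = 0 := by linear_combination F11 - F00
    have s1 := (mul_eq_zero.1 r1).resolve_left hC
    have s2 := (mul_eq_zero.1 r2).resolve_left hC
    have s3 := (mul_eq_zero.1 r3).resolve_left hC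
    apply hQ
    rw [s1, s3]; ring

section Zassenhaus

attribute [local instance] Matrix.linftyOpNormedRing

open scoped commutatorElement

lemma entry_le_norm (M : Matrix (Fin 2) (Fin 2) ℝ) (i j : Fin 2) : |M i j| ≤ ‖M‖ := by
  rw [Matrix.linfty_opNorm_def]
  have h1 : (∑ j, ‖M i j‖₊) ≤ Finset.univ.sup fun i => ∑ j, ‖M i j‖₊ :=
    Finset.le_sup (f := fun i => ∑ j, ‖M i j‖₊) (Finset.mem_univ i)
  have h2 : ‖M i j‖₊ ≤ ∑ j, ‖M i j‖₊ :=
    Finset.single_le_sum (f := fun j => ‖M i j‖₊) (fun _ _ => bot_le) (Finset.mem_univ j)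
  have := h2.trans h1
  exact_mod_cast this

lemma norm_le_of_rows (M : Matrix (Fin 2) (Fin 2) ℝ) (r : ℝ) (h0 : |M 0 0| + |M 0 1| ≤ r)
    (h1 : |M 1 0| + |M 1 1| ≤ r) : ‖M‖ ≤ r := by
  have hr : 0 ≤ r := le_trans (by positivity) h0
  lift r to NNReal using hr
  rw [Matrix.linfty_opNorm_def]
  refine NNReal.coe_le_coe.2 (Finset.sup_le fun i _ => ?_)
  rw [← NNReal.coe_le_coe, Fin.sum_univ_two]
  fin_cases i
  · simpa using h0
  · simpa using h1

lemma norm_NF_le {c s p y z R q : ℝ} (hc : 0 ≤ c) (hp : 0 ≤ p) (hp1 : p ≤ 1.1)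
    (hy : |y| ≤ q) (hz : |z| ≤ q) (hq : q ≤ 0.1) (hR : R = c + 1.2 * |s|) :
    ‖NF c s p y z‖ ≤ R := by
  have e1 : |s * p| ≤ 1.1 * |s| := by
    rw [abs_mul, abs_of_nonneg hp]; nlinarith [abs_nonneg s]
  have e2 : |s * y| ≤ 0.1 * |s| := by
    rw [abs_mul]; nlinarith [abs_nonneg s]
  have e3 : |s * z| ≤ 0.1 * |s| := by
    rw [abs_mul]; nlinarith [abs_nonneg s]
  have e4 : |c + s * p| ≤ c + |s * p| := (abs_add_le _ _).trans (by rw [abs_of_nonneg hc])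
  have e5 : |c - s * p| ≤ c + |s * p| := (abs_sub _ _).trans (by rw [abs_of_nonneg hc])
  apply norm_le_of_rows
  · simp only [NF, Matrix.of_apply, Matrix.cons_val_zero, Matrix.cons_val_one,
      Matrix.cons_val', Matrix.cons_val_fin_one]
    linarith
  · simp only [NF, Matrix.of_apply, Matrix.cons_val_zero, Matrix.cons_val_one,
      Matrix.cons_val', Matrix.cons_val_fin_one]
    linarith

/-- `⁅A, B⁆ - 1 = (AB - BA) A⁻¹ B⁻¹`. -/
lemma comm_sub_one (A B : SL2R) :
    ((⁅A, B⁆ : SL2R) : Matrix (Fin 2) (Fin 2) ℝ) - 1 =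
      ((A : Matrix (Fin 2) (Fin 2) ℝ) * (B : Matrix (Fin 2) (Fin 2) ℝ)
        - (B : Matrix (Fin 2) (Fin 2) ℝ) * (A : Matrix (Fin 2) (Fin 2) ℝ))
      * (((A⁻¹ : SL2R) : Matrix (Fin 2) (Fin 2) ℝ) * ((B⁻¹ : SL2R) : Matrix (Fin 2) (Fin 2) ℝ)) := by
  have h : (B : Matrix (Fin 2) (Fin 2) ℝ) * (A : Matrix (Fin 2) (Fin 2) ℝ) *
     (((A⁻¹ : SL2R) : Matrix (Fin 2) (Fin 2) ℝ) * ((B⁻¹ : SL2R) : Matrix (Fin 2) (Fin 2) ℝ)) = 1 := by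
    rw [← Matrix.SpecialLinearGroup.coe_mul, ← Matrix.SpecialLinearGroup.coe_mul,
      ← Matrix.SpecialLinearGroup.coe_mul,
      show B * A * (A⁻¹ * B⁻¹) = 1 by group, Matrix.SpecialLinearGroup.coe_one]
  rw [sub_mul, h, commutatorElement_def]
  simp only [Matrix.SpecialLinearGroup.coe_mul, mul_assoc]

lemma norm_comm_le {A B : SL2R} {D K L : ℝ}
    (hD : ‖(A : Matrix (Fin 2) (Fin 2) ℝ) * (B : Matrix (Fin 2) (Fin 2) ℝ)
        - (B : Matrix (Fin 2) (Fin 2) ℝ) * (A : Matrix (Fin 2) (Fin 2) ℝ)‖ ≤ D)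
    (hK : ‖((A⁻¹ : SL2R) : Matrix (Fin 2) (Fin 2) ℝ)‖ ≤ K)
    (hL : ‖((B⁻¹ : SL2R) : Matrix (Fin 2) (Fin 2) ℝ)‖ ≤ L) :
    ‖((⁅A, B⁆ : SL2R) : Matrix (Fin 2) (Fin 2) ℝ) - 1‖ ≤ D * (K * L) ∧
    ‖((⁅A, B⁆⁻¹ : SL2R) : Matrix (Fin 2) (Fin 2) ℝ) - 1‖ ≤ D * (K * L) := by
  have hD0 := (norm_nonneg _).trans hD
  have hK0 := (norm_nonneg _).trans hK
  have hL0 := (norm_nonneg _).trans hL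
  constructor
  · rw [comm_sub_one]
    refine (norm_mul_le _ _).trans (mul_le_mul hD ((norm_mul_le _ _).trans
      (mul_le_mul hK hL (norm_nonneg _) hK0)) (norm_nonneg _) hD0)
  · rw [commutatorElement_inv, comm_sub_one, mul_comm K L]
    rw [← norm_neg, neg_sub] at hD
    refine (norm_mul_le _ _).trans (mul_le_mul hD ((norm_mul_le _ _).trans
      (mul_le_mul hL hK (norm_nonneg _) hL0)) (norm_nonneg _) hD0)

lemma norm_le_one_add {A : Matrix (Fin 2) (Fin 2) ℝ} {a : ℝ} (h : ‖A - 1‖ ≤ a) : ‖A‖ ≤ 1 + a := by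
  have : A = 1 + (A - 1) := by abel
  rw [this]
  exact (norm_add_le _ _).trans (by rw [norm_one]; linarith)

lemma trace_near {A : Matrix (Fin 2) (Fin 2) ℝ} {a : ℝ} (h : ‖A - 1‖ ≤ a) :
    |A 0 0 + A 1 1 - 2| ≤ 2 * a := by
  have h0 := (entry_le_norm (A - 1) 0 0).trans h
  have h1 := (entry_le_norm (A - 1) 1 1).trans h
  simp only [Matrix.sub_apply, Matrix.one_apply_eq] at h0 h1
  have := abs_add_le (A 0 0 - 1) (A 1 1 - 1)
  rw [show A 0 0 + A 1 1 - 2 = A 0 0 - 1 + (A 1 1 - 1) by ring]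
  linarith

/-- Iterated commutators. -/
def Cs (k g : SL2R) : ℕ → SL2R
  | 0 => g
  | n + 1 => ⁅k, Cs k g n⁆

lemma zassenhaus {Γ : Subgroup SL2R} (hΓ : IsDiscreteSubgroup Γ) {g h : SL2R}
    {c s p y z q R : ℝ}
    (hg : (g : Matrix (Fin 2) (Fin 2) ℝ) = NF c s p y z)
    (hh : (h : Matrix (Fin 2) (Fin 2) ℝ) = NF c s p (-y) (-z))
    (hk : ⁅g, h⁆ ∈ Γ) (hn : ∀ γ ∈ Γ, g * γ * g⁻¹ ∈ Γ)
    (hs : 0 < s) (hc : 1 ≤ c) (hcs : c ^ 2 = 1 + s ^ 2) (hp : 0 < p) (hp1 : p ≤ 1.1)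
    (hy : |y| ≤ q) (hz : |z| ≤ q) (hq : q ≤ 0.1) (hR : R = c + 1.2 * s)
    (hsmall : 44 * q * s ^ 2 * R ^ 4 ≤ 1) (hyz : y * z ≠ 0) : ⁅g, h⁆ = 1 := by
  have hR' : R = c + 1.2 * |s| := by rw [hR, abs_of_pos hs]
  have hR'' : R = c + 1.2 * |-s| := by rw [hR, abs_neg, abs_of_pos hs]
  have hc0 : 0 ≤ c := by linarith
  have hq0 : 0 ≤ q := (abs_nonneg y).trans hy
  have hR1 : 1 ≤ R := by rw [hR]; linarith
  have ng : ‖(g : Matrix (Fin 2) (Fin 2) ℝ)‖ ≤ R := by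
    rw [hg]; exact norm_NF_le hc0 hp.le hp1 hy hz hq hR'
  have ngi : ‖((g⁻¹ : SL2R) : Matrix (Fin 2) (Fin 2) ℝ)‖ ≤ R := by
    rw [NF_inv hg]; exact norm_NF_le hc0 hp.le hp1 hy hz hq hR''
  have nhi : ‖((h⁻¹ : SL2R) : Matrix (Fin 2) (Fin 2) ℝ)‖ ≤ R := by
    rw [NF_inv hh]
    exact norm_NF_le hc0 hp.le hp1 (by rwa [abs_neg]) (by rwa [abs_neg]) hq hR''
  have hD : (g : Matrix (Fin 2) (Fin 2) ℝ) * (h : Matrix (Fin 2) (Fin 2) ℝ)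
        - (h : Matrix (Fin 2) (Fin 2) ℝ) * (g : Matrix (Fin 2) (Fin 2) ℝ)
        = !![0, -4 * p * s ^ 2 * y; 4 * p * s ^ 2 * z, 0] := by
    rw [hg, hh]
    ext i j
    fin_cases i <;> fin_cases j <;> simp [NF, Matrix.mul_apply, Fin.sum_univ_two] <;> ring
  have hDn : ‖(g : Matrix (Fin 2) (Fin 2) ℝ) * (h : Matrix (Fin 2) (Fin 2) ℝ)
        - (h : Matrix (Fin 2) (Fin 2) ℝ) * (g : Matrix (Fin 2) (Fin 2) ℝ)‖ ≤ 4.4 * q * s ^ 2 := by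
    have e (w : ℝ) (hw : |w| ≤ q) : 4 * p * s ^ 2 * |w| ≤ 4.4 * q * s ^ 2 := by
      have : p * |w| ≤ 1.1 * q := mul_le_mul hp1 hw (abs_nonneg _) (by norm_num)
      nlinarith [sq_nonneg s]
    rw [hD]
    apply norm_le_of_rows
    · simp only [Matrix.of_apply, Matrix.cons_val_zero, Matrix.cons_val_one,
        Matrix.cons_val', Matrix.cons_val_fin_one, abs_zero, zero_add]
      rw [show -4 * p * s ^ 2 * y = -(4 * p * s ^ 2 * y) by ring, abs_neg, abs_mul,
        abs_of_nonneg (by positivity : 0 ≤ 4 * p * s ^ 2)]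
      exact e y hy
    · simp only [Matrix.of_apply, Matrix.cons_val_zero, Matrix.cons_val_one,
        Matrix.cons_val', Matrix.cons_val_fin_one, abs_zero, add_zero]
      rw [abs_mul, abs_of_nonneg (by positivity : 0 ≤ 4 * p * s ^ 2)]
      exact e z hz
  obtain ⟨k, hkdef⟩ : ∃ k, k = ⁅g, h⁆ := ⟨_, rfl⟩
  obtain ⟨a, ha⟩ : ∃ a, a = 4.4 * q * s ^ 2 * (R * R) := ⟨_, rfl⟩
  obtain ⟨nk, nki⟩ := norm_comm_le hDn ngi nhi
  rw [← hkdef, ← ha] at nk nki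
  have ha0 : 0 ≤ a := (norm_nonneg _).trans nk
  have haR : 10 * a * (R * R) ≤ 1 := by rw [ha]; linarith [hsmall]
  have ha1 : a ≤ 1 / 10 := by nlinarith [mul_le_mul hR1 hR1 zero_le_one (by linarith)]
  have step (A : SL2R) (e : ℝ) (he : e ≤ 1 / 4)
      (hA : ‖(A : Matrix (Fin 2) (Fin 2) ℝ) - 1‖ ≤ e)
      (hA' : ‖((A⁻¹ : SL2R) : Matrix (Fin 2) (Fin 2) ℝ) - 1‖ ≤ e) :
      ‖((⁅k, A⁆ : SL2R) : Matrix (Fin 2) (Fin 2) ℝ) - 1‖ ≤ e / 2 ∧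
      ‖((⁅k, A⁆⁻¹ : SL2R) : Matrix (Fin 2) (Fin 2) ℝ) - 1‖ ≤ e / 2 := by
    have he0 : 0 ≤ e := (norm_nonneg _).trans hA
    have hd : ‖(k : Matrix (Fin 2) (Fin 2) ℝ) * (A : Matrix (Fin 2) (Fin 2) ℝ)
        - (A : Matrix (Fin 2) (Fin 2) ℝ) * (k : Matrix (Fin 2) (Fin 2) ℝ)‖ ≤ a * e + e * a := by
      rw [show (k : Matrix (Fin 2) (Fin 2) ℝ) * (A : Matrix (Fin 2) (Fin 2) ℝ)
        - (A : Matrix (Fin 2) (Fin 2) ℝ) * (k : Matrix (Fin 2) (Fin 2) ℝ) =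
          ((k : Matrix (Fin 2) (Fin 2) ℝ) - 1) * ((A : Matrix (Fin 2) (Fin 2) ℝ) - 1) -
          ((A : Matrix (Fin 2) (Fin 2) ℝ) - 1) * ((k : Matrix (Fin 2) (Fin 2) ℝ) - 1) by
          noncomm_ring]
      refine (norm_sub_le _ _).trans (add_le_add ?_ ?_)
      · exact (norm_mul_le _ _).trans (mul_le_mul nk hA (norm_nonneg _) ha0)
      · exact (norm_mul_le _ _).trans (mul_le_mul hA nk (norm_nonneg _) he0)
    have := norm_comm_le hd (norm_le_one_add nki) (norm_le_one_add hA')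
    have hb : (a * e + e * a) * ((1 + a) * (1 + e)) ≤ e / 2 := by
      have h1 : (1 + a) * (1 + e) ≤ 2 := by nlinarith
      have h2 : a * e ≤ e / 10 := by nlinarith
      have h3 : (a * e + e * a) * ((1 + a) * (1 + e)) ≤ (e / 5) * 2 :=
        mul_le_mul (by linarith) h1 (by positivity) (by positivity)
      linarith
    exact ⟨this.1.trans hb, this.2.trans hb⟩
  have base : ‖((⁅k, g⁆ : SL2R) : Matrix (Fin 2) (Fin 2) ℝ) - 1‖ ≤ 1 / 4 ∧
      ‖((⁅k, g⁆⁻¹ : SL2R) : Matrix (Fin 2) (Fin 2) ℝ) - 1‖ ≤ 1 / 4 := by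
    have hd : ‖(k : Matrix (Fin 2) (Fin 2) ℝ) * (g : Matrix (Fin 2) (Fin 2) ℝ)
        - (g : Matrix (Fin 2) (Fin 2) ℝ) * (k : Matrix (Fin 2) (Fin 2) ℝ)‖ ≤ a * R + R * a := by
      rw [show (k : Matrix (Fin 2) (Fin 2) ℝ) * (g : Matrix (Fin 2) (Fin 2) ℝ)
        - (g : Matrix (Fin 2) (Fin 2) ℝ) * (k : Matrix (Fin 2) (Fin 2) ℝ) =
          ((k : Matrix (Fin 2) (Fin 2) ℝ) - 1) * (g : Matrix (Fin 2) (Fin 2) ℝ) -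
          (g : Matrix (Fin 2) (Fin 2) ℝ) * ((k : Matrix (Fin 2) (Fin 2) ℝ) - 1) by
          noncomm_ring]
      refine (norm_sub_le _ _).trans (add_le_add ?_ ?_)
      · exact (norm_mul_le _ _).trans (mul_le_mul nk ng (norm_nonneg _) ha0)
      · exact (norm_mul_le _ _).trans (mul_le_mul ng nk (norm_nonneg _) (by linarith))
    have := norm_comm_le hd (norm_le_one_add nki) ngi
    have hb : (a * R + R * a) * ((1 + a) * R) ≤ 1 / 4 := by
      have h1 : (a * R + R * a) * ((1 + a) * R) = 2 * (a * (R * R)) * (1 + a) := by ring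
      rw [h1]
      have h2 : 0 ≤ a * (R * R) := by positivity
      nlinarith
    exact ⟨this.1.trans hb, this.2.trans hb⟩
  have iter (n : ℕ) : ‖((Cs k g (n + 1) : SL2R) : Matrix (Fin 2) (Fin 2) ℝ) - 1‖ ≤ 1 / 4 * (1 / 2) ^ n ∧
      ‖(((Cs k g (n + 1))⁻¹ : SL2R) : Matrix (Fin 2) (Fin 2) ℝ) - 1‖ ≤ 1 / 4 * (1 / 2) ^ n := by
    induction n with
    | zero => simpa [Cs] using base
    | succ n ih =>
      have := step _ _ (by
        have : (1 / 2 : ℝ) ^ n ≤ 1 := pow_le_one₀ (by norm_num) (by norm_num)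
        linarith) ih.1 ih.2
      rw [Cs, pow_succ]
      rw [show 1 / 4 * ((1 / 2 : ℝ) ^ n * (1 / 2)) = 1 / 4 * (1 / 2) ^ n / 2 by ring]
      exact this
  have mem (n : ℕ) : Cs k g (n + 1) ∈ Γ := by
    have hk' : k ∈ Γ := hkdef ▸ hk
    induction n with
    | zero =>
      rw [Cs, Cs, commutatorElement_def, mul_assoc, mul_assoc, ← mul_assoc g]
      exact Γ.mul_mem hk' (hn _ (Γ.inv_mem hk'))
    | succ n ih =>
      rw [Cs, commutatorElement_def]
      exact Γ.mul_mem (Γ.mul_mem (Γ.mul_mem hk' ih) (Γ.inv_mem hk')) (Γ.inv_mem ih)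
  have htrk : (k 0 0 + k 1 1) ^ 2 ≠ 4 := by
    have hdet : ((k : Matrix (Fin 2) (Fin 2) ℝ) - 1).det = 16 * p ^ 2 * s ^ 4 * (y * z) := by
      rw [hkdef, comm_sub_one, Matrix.det_mul, Matrix.det_mul, hD, (g⁻¹).det_coe, (h⁻¹).det_coe,
        Matrix.det_fin_two_of]
      ring
    rw [Matrix.det_fin_two] at hdet
    simp only [Matrix.sub_apply, Matrix.one_apply_eq] at hdet
    rw [Matrix.one_apply_ne (by decide), Matrix.one_apply_ne (by decide)] at hdet
    have hd1 := SL2R_det k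
    have htr : 2 - (k 0 0 + k 1 1) = 16 * p ^ 2 * s ^ 4 * (y * z) := by linarith
    have hne : 2 - (k 0 0 + k 1 1) ≠ 0 := by
      rw [htr]; exact mul_ne_zero (by positivity) hyz
    have := abs_le.1 (trace_near nk)
    intro h4
    have : (2 - (k 0 0 + k 1 1)) * (2 + (k 0 0 + k 1 1)) = 0 := by linear_combination -h4
    rcases mul_eq_zero.1 this with h | h
    · exact hne h
    · linarith
  have htrC (n : ℕ) : (Cs k g n) 0 0 + (Cs k g n) 1 1 ≠ 0 := by
    cases n with
    | zero =>
      rw [Cs, hg]; simp [NF]; linarith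
    | succ n =>
      have := abs_le.1 (trace_near (iter n).1)
      have h1 : (1 / 2 : ℝ) ^ n ≤ 1 := pow_le_one₀ (by norm_num) (by norm_num)
      intro h0
      linarith
  obtain ⟨n, hn1⟩ := hΓ.exists_eq_one (fun n => Cs k g (n + 1)) mem (by
    intro i j
    rw [tendsto_iff_norm_sub_tendsto_zero]
    have hl : Filter.Tendsto (fun n : ℕ => (1 / 4 : ℝ) * (1 / 2) ^ n) Filter.atTop (nhds 0) := by
      have := (tendsto_pow_atTop_nhds_zero_of_lt_one (r := (1 / 2 : ℝ)) (by norm_num)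
        (by norm_num)).const_mul (1 / 4 : ℝ)
      simpa using this
    refine squeeze_zero (fun _ => norm_nonneg _) (fun n => ?_) hl
    exact (entry_le_norm _ i j).trans (iter n).1)
  have desc : ∀ n, Cs k g (n + 1) = 1 → ⁅k, g⁆ = 1 := by
    intro n
    induction n with
    | zero => exact fun h => h
    | succ n ih => exact fun h => ih (backtrack htrk (htrC n) h)
  have hkg := desc n hn1
  rw [commutatorElement_eq_one_iff_commute] at hkg
  apply backtrack (k := g) (C := h)
  · rw [hg]; simp [NF]
    intro h4
    have : s ^ 2 = 0 := by linarith
    have := pow_pos hs 2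
    linarith
  · rw [hh]; simp [NF]; linarith
  · rw [commutatorElement_eq_one_iff_commute, ← hkdef]; exact hkg.symm

end Zassenhaus

section Numeric

lemma log_one_add_sqrt_two : 0.88 ≤ Real.log (1 + Real.sqrt 2) := by
  rw [Real.le_log_iff_exp_le (by positivity)]
  have h1 : (1.414 : ℝ) ≤ Real.sqrt 2 := Real.le_sqrt_of_sq_le (by norm_num)
  have h2 : Real.exp 0.88 ≤ 2.414 := by
    have h3 := Real.exp_bound' (x := 0.88) (by norm_num) (by norm_num) (n := 8) (by norm_num)
    refine h3.trans ?_
    norm_num [Finset.sum_range_succ, Nat.factorial]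
  linarith

lemma exp_ge_28 : 29 ≤ Real.exp 3.38 := by
  have h : Real.exp 3.38 = Real.exp 1 ^ 3 * Real.exp 0.38 := by
    rw [← Real.exp_nat_mul, ← Real.exp_add]; norm_num
  have h1 := Real.exp_one_gt_d9
  have h2 : 1 + 0.38 + 0.38 ^ 2 / 2 ≤ Real.exp 0.38 := Real.quadratic_le_exp_of_nonneg (by norm_num)
  have h3 : (2.718 : ℝ) ^ 3 ≤ Real.exp 1 ^ 3 := pow_le_pow_left₀ (by norm_num) (by linarith) 3
  rw [h]
  have := mul_le_mul h3 h2 (by norm_num) (by positivity)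
  refine le_trans ?_ this
  norm_num

lemma sinh_ge_14 {w : ℝ} (hw : 3.38 ≤ w) : 14 ≤ Real.sinh w := by
  have h1 : Real.exp 3.38 ≤ Real.exp w := Real.exp_le_exp.2 hw
  have h2 : Real.exp (-w) ≤ 1 := Real.exp_le_one_iff.2 (by linarith)
  have := exp_ge_28
  rw [Real.sinh_eq]
  linarith

lemma sinh_numeric {x : ℝ} {N : ℕ} (hx : 0 < x) (hN : 28 ≤ N) (hNx : 3.38 ≤ N * x) :
    44 * Real.sinh x ^ 2 * (Real.cosh x + 1.2 * Real.sinh x) ^ 4 ≤ Real.sinh (N * x) := by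
  have hs0 : 0 < Real.sinh x := Real.sinh_pos_iff.2 hx
  have hc0 : 0 < Real.cosh x := Real.cosh_pos x
  rcases le_total x 0.2 with h | h
  · have e1 : Real.exp x ≤ 1.2215 := by
      refine (Real.exp_le_exp.2 h).trans ?_
      have h3 := Real.exp_bound' (x := 0.2) (by norm_num) (by norm_num) (n := 5) (by norm_num)
      refine h3.trans ?_
      norm_num [Finset.sum_range_succ, Nat.factorial]
    have e2 : 0.8 ≤ Real.exp (-x) := by
      have := Real.add_one_le_exp (-x); linarith
    have e3 : Real.exp (-x) ≤ 1 := Real.exp_le_one_iff.2 (by linarith)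
    have s1 : Real.sinh x ≤ 0.22 := by rw [Real.sinh_eq]; linarith
    have r1 : Real.cosh x + 1.2 * Real.sinh x ≤ 1.4 := by
      rw [Real.sinh_eq, Real.cosh_eq]; linarith
    have s2 : Real.sinh x ^ 2 ≤ 0.22 ^ 2 := pow_le_pow_left₀ hs0.le s1 2
    have r2 : (Real.cosh x + 1.2 * Real.sinh x) ^ 4 ≤ 1.4 ^ 4 :=
      pow_le_pow_left₀ (by positivity) r1 4
    have := mul_le_mul s2 r2 (by positivity) (by positivity)
    have h14 := sinh_ge_14 hNx
    norm_num at this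
    linarith
  · obtain ⟨E, hE⟩ : ∃ E, E = Real.exp x := ⟨_, rfl⟩
    have e0 : 0 < Real.exp (-x) := Real.exp_pos _
    have e3 : Real.exp (-x) ≤ E := by rw [hE]; exact Real.exp_le_exp.2 (by linarith)
    have hE0 : 0 < E := hE ▸ Real.exp_pos _
    have hE1 : 1.2 ≤ E := by rw [hE]; have := Real.add_one_le_exp x; linarith
    have s1 : Real.sinh x ≤ E / 2 := by rw [Real.sinh_eq, ← hE]; linarith
    have r1 : Real.cosh x + 1.2 * Real.sinh x ≤ 1.1 * E := by
      rw [Real.sinh_eq, Real.cosh_eq, ← hE]; linarith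
    have s2 : Real.sinh x ^ 2 ≤ (E / 2) ^ 2 := pow_le_pow_left₀ hs0.le s1 2
    have r2 : (Real.cosh x + 1.2 * Real.sinh x) ^ 4 ≤ (1.1 * E) ^ 4 :=
      pow_le_pow_left₀ (by positivity) r1 4
    have h1 := mul_le_mul s2 r2 (by positivity) (by positivity)
    have hmono : Real.sinh (28 * x) ≤ Real.sinh (N * x) := by
      rw [Real.sinh_le_sinh]
      have : (28 : ℝ) ≤ N := by exact_mod_cast hN
      nlinarith
    have h28 : (E ^ 28 - 1) / 2 ≤ Real.sinh (28 * x) := by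
      have : Real.exp (28 * x) = E ^ 28 := by rw [hE, ← Real.exp_nat_mul]; norm_num
      rw [Real.sinh_eq, this]
      have : Real.exp (-(28 * x)) ≤ 1 := Real.exp_le_one_iff.2 (by linarith)
      linarith
    have h22 : 34 ≤ E ^ 22 := by
      have : (1.2 : ℝ) ^ 22 ≤ E ^ 22 := pow_le_pow_left₀ (by norm_num) hE1 22
      refine le_trans (by norm_num) this
    have h6 : 1 ≤ E ^ 6 := one_le_pow₀ (by linarith)
    have h4 : E ^ 28 = E ^ 6 * E ^ 22 := by ring
    nlinarith

end Numeric

section Null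

open scoped commutatorElement

/-- A unipotent element contracted by a hyperbolic element normalising a discrete group. -/
lemma null_upper {Γ : Subgroup SL2R} (hΓ : IsDiscreteSubgroup Γ) {g k : SL2R}
    (hk : k ∈ Γ) (hn : ∀ γ ∈ Γ, g * γ * g⁻¹ ∈ Γ) {t : ℝ} (r : ℝ) (hr0 : 0 ≤ r) (hr : r < 1) (i j : Fin 2)
    (hkf : (k : Matrix (Fin 2) (Fin 2) ℝ) = 1 + Matrix.single i j t)
    (hgf : ∀ t : ℝ, (g : Matrix (Fin 2) (Fin 2) ℝ) * (1 + Matrix.single i j t) *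
      ((g⁻¹ : SL2R) : Matrix (Fin 2) (Fin 2) ℝ) = 1 + Matrix.single i j (r * t)) : k = 1 := by
  have hu (n : ℕ) : ((g ^ n * k * (g ^ n)⁻¹ : SL2R) : Matrix (Fin 2) (Fin 2) ℝ) =
      1 + Matrix.single i j (r ^ n * t) := by
    induction n with
    | zero => simp [hkf]
    | succ n ih =>
      have : g ^ (n + 1) * k * (g ^ (n + 1))⁻¹ = g * (g ^ n * k * (g ^ n)⁻¹) * g⁻¹ := by
        rw [pow_succ']; group
      rw [this, Matrix.SpecialLinearGroup.coe_mul, Matrix.SpecialLinearGroup.coe_mul, ih, hgf,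
        pow_succ', mul_assoc]
  have hm (n : ℕ) : g ^ n * k * (g ^ n)⁻¹ ∈ Γ := by
    induction n with
    | zero => simpa using hk
    | succ n ih =>
      have : g ^ (n + 1) * k * (g ^ (n + 1))⁻¹ = g * (g ^ n * k * (g ^ n)⁻¹) * g⁻¹ := by
        rw [pow_succ']; group
      rw [this]; exact hn _ ih
  obtain ⟨n, h1⟩ := hΓ.exists_eq_one _ hm (by
    intro a b
    have hl : Filter.Tendsto (fun n : ℕ => r ^ n * t) Filter.atTop (nhds 0) := by
      have := (tendsto_pow_atTop_nhds_zero_of_lt_one hr0 hr).mul_const t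
      simpa using this
    simp only [hu, Matrix.add_apply, Matrix.single_apply]
    by_cases hab : i = a ∧ j = b
    · simp only [hab, and_self, if_true]
      simpa using hl.const_add ((1 : Matrix (Fin 2) (Fin 2) ℝ) a b)
    · simp only [hab, if_false, add_zero]
      exact tendsto_const_nhds)
  have : k = (g ^ n)⁻¹ * (g ^ n * k * (g ^ n)⁻¹) * g ^ n := by group
  rw [this, h1]; group

lemma null_case {Γ : Subgroup SL2R} (hΓ : IsDiscreteSubgroup Γ) {g h : SL2R}
    {c s p y z : ℝ}
    (hg : (g : Matrix (Fin 2) (Fin 2) ℝ) = NF c s p y z)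
    (hh : (h : Matrix (Fin 2) (Fin 2) ℝ) = NF c s p (-y) (-z))
    (hk : ⁅g, h⁆ ∈ Γ) (hn : ∀ γ ∈ Γ, g * γ * g⁻¹ ∈ Γ) (hn' : ∀ γ ∈ Γ, g⁻¹ * γ * g ∈ Γ)
    (hs : 0 < s) (hc : 1 ≤ c) (hcs : c ^ 2 = 1 + s ^ 2) (hp : 0 < p) (hpyz : p ^ 2 + y * z = 1)
    (hyz : y = 0 ∨ z = 0) : ⁅g, h⁆ = 1 := by
  have hp1 : p = 1 := by
    have : y * z = 0 := mul_eq_zero.2 hyz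
    nlinarith
  subst hp1
  have hsc : s < c := by nlinarith
  have hgi := NF_inv hg
  have hhi := NF_inv hh
  have hkk : ((⁅g, h⁆ : SL2R) : Matrix (Fin 2) (Fin 2) ℝ) =
    NF c s 1 y z * NF c s 1 (-y) (-z) * NF c (-s) 1 y z * NF c (-s) 1 (-y) (-z) := by
    rw [commutatorElement_def]
    simp only [Matrix.SpecialLinearGroup.coe_mul, hg, hh, hgi, hhi]
  have hr0 : 0 ≤ (c - s) ^ 2 := sq_nonneg _
  have hr1 : (c - s) ^ 2 < 1 := by nlinarith
  rcases hyz with rfl | rfl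
  ·
    refine null_upper hΓ (g := g) (t := 4 * s ^ 2 * z * (c - s) ^ 2) hk hn ((c - s) ^ 2) hr0 hr1 1 0 ?_ ?_
    · rw [hkk]
      ext i j
      fin_cases i <;> fin_cases j <;> simp [NF, Matrix.mul_apply, Fin.sum_univ_two]
      all_goals (clear hkk hk hn hn' hΓ hg hgi hh hhi; grind)
    · intro t
      have e (t : ℝ) : (1 : Matrix (Fin 2) (Fin 2) ℝ) + Matrix.single 1 0 t = !![1, 0; t, 1] := by
        ext i j
        fin_cases i <;> fin_cases j <;> simp
      rw [hg, hgi, e, e]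
      ext i j
      fin_cases i <;> fin_cases j <;> simp [NF, Matrix.mul_apply, Fin.sum_univ_two]
      all_goals (clear hkk hk hn hn' hΓ hg hgi hh hhi; grind)
  · refine null_upper hΓ (g := g⁻¹) (t := -4 * s ^ 2 * y * (c + s) ^ 2) hk (by simpa using hn') ((c - s) ^ 2) hr0 hr1 0 1 ?_ ?_
    · rw [hkk]
      ext i j
      fin_cases i <;> fin_cases j <;> simp [NF, Matrix.mul_apply, Fin.sum_univ_two]
      all_goals (clear hkk hk hn hn' hΓ hg hgi hh hhi; grind)
    · intro t
      have e (t : ℝ) : (1 : Matrix (Fin 2) (Fin 2) ℝ) + Matrix.single 0 1 t = !![1, t; 0, 1] := by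
        ext i j
        fin_cases i <;> fin_cases j <;> simp
      rw [inv_inv, hg, hgi, e, e]
      ext i j
      fin_cases i <;> fin_cases j <;> simp [NF, Matrix.mul_apply, Fin.sum_univ_two]
      all_goals (clear hkk hk hn hn' hΓ hg hgi hh hhi; grind)

end Null

section Assembly

open scoped commutatorElement

lemma core {Γ : Subgroup SL2R} (hΓ : IsDiscreteSubgroup Γ) {g h : SL2R} {x : ℝ} {N : ℕ}
    (hx : 0 < x) (hN : 28 ≤ N) (hNx : 3.38 ≤ N * x)
    (hg : g 0 0 + g 1 1 = 2 * Real.cosh x) (hh : h 0 0 + h 1 1 = 2 * Real.cosh x)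
    (hgh : 2 * Real.cosh x ^ 2 ≤ (g * h) 0 0 + (g * h) 1 1)
    (hk : ⁅g, h⁆ ∈ Γ) (hn : ∀ γ ∈ Γ, g * γ * g⁻¹ ∈ Γ) (hn' : ∀ γ ∈ Γ, g⁻¹ * γ * g ∈ Γ)
    (hne : ⁅g, h⁆ ≠ 1) : PP (g ^ N) (h ^ N) := by
  have hs : 0 < Real.sinh x := Real.sinh_pos_iff.2 hx
  have hc : 1 ≤ Real.cosh x := Real.one_le_cosh x
  have hcs : Real.cosh x ^ 2 = 1 + Real.sinh x ^ 2 := by rw [Real.cosh_sq]; ring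
  obtain ⟨M, p, y, z, hp, hp2, hpyz, hG, hH, hcase⟩ := frame hs hcs hg hh hgh
  have hΓ' := hΓ.conj M
  have hcomm : ⁅M * g * M⁻¹, M * h * M⁻¹⁆ = M * ⁅g, h⁆ * M⁻¹ := by
    simp only [commutatorElement_def]; group
  have hne' : ⁅M * g * M⁻¹, M * h * M⁻¹⁆ ≠ 1 := by
    rw [hcomm]
    intro h1
    apply hne
    exact (conj_eq_one_iff).1 h1
  have hk' : ⁅M * g * M⁻¹, M * h * M⁻¹⁆ ∈ Γ.map (MulAut.conj M).toMonoidHom :=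
    ⟨_, hk, hcomm.symm⟩
  have hn1 : ∀ γ ∈ Γ.map (MulAut.conj M).toMonoidHom,
      (M * g * M⁻¹) * γ * (M * g * M⁻¹)⁻¹ ∈ Γ.map (MulAut.conj M).toMonoidHom := by
    rintro _ ⟨γ, hγ, rfl⟩
    refine ⟨_, hn γ hγ, ?_⟩
    simp [mul_assoc]
  have hn2 : ∀ γ ∈ Γ.map (MulAut.conj M).toMonoidHom,
      (M * g * M⁻¹)⁻¹ * γ * (M * g * M⁻¹) ∈ Γ.map (MulAut.conj M).toMonoidHom := by
    rintro _ ⟨γ, hγ, rfl⟩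
    refine ⟨_, hn' γ hγ, ?_⟩
    simp [mul_assoc]
  by_cases hyz : y = 0 ∨ z = 0
  · exact absurd (null_case hΓ' hG hH hk' hn1 hn2 hs hc hcs hp hpyz hyz) hne'
  have hyz0 : y * z ≠ 0 := fun h0 => hyz (mul_eq_zero.1 h0)
  have habs : |y| = |z| := by tauto
  have hS := sinh_ge_14 hNx
  by_cases hq : 1 < Real.sinh (N * x) * |y|
  · apply PP.conj (M := M)
    have e1 : M * g ^ N * M⁻¹ = (M * g * M⁻¹) ^ N := by rw [conj_pow]
    have e2 : M * h ^ N * M⁻¹ = (M * h * M⁻¹) ^ N := by rw [conj_pow]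
    rw [e1, e2]
    refine PP_of_NF (c := Real.cosh (N * x)) (s := Real.sinh (N * x)) (p := p) (y := y) (z := z)
      ?_ ?_ (Real.cosh_pos _) (by rw [Real.cosh_sq]; ring) (by linarith) hp hp2 hpyz habs hq
    · rw [Matrix.SpecialLinearGroup.coe_pow, hG, NF_pow _ _ _ _ hpyz]
    · rw [Matrix.SpecialLinearGroup.coe_pow, hH, NF_pow _ _ _ _ (by linarith)]
  · exfalso
    apply hne'
    push Not at hq
    have hnum := sinh_numeric hx hN hNx
    have hy0 := abs_nonneg y
    have hq1 : |y| ≤ 0.1 := by nlinarith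
    have hp1 : p ≤ 1.1 := by
      have h1 : -(y * z) ≤ |y| * |y| := by
        calc -(y * z) ≤ |y * z| := neg_le_abs _
          _ = |y| * |y| := by rw [abs_mul, ← habs]
      nlinarith
    refine zassenhaus (q := |y|) hΓ' hG hH hk' hn1 hs hc hcs hp hp1 le_rfl habs.ge hq1 rfl ?_ hyz0
    have := mul_le_mul_of_nonneg_right hnum hy0
    linarith

lemma core2 {Γ : Subgroup SL2R} (hΓ : IsDiscreteSubgroup Γ) {g h : SL2R} {x : ℝ} {N : ℕ}
    (hx : 0 < x) (hN : 28 ≤ N) (hNx : 3.38 ≤ N * x)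
    (hg : g 0 0 + g 1 1 = 2 * Real.cosh x) (hh : h 0 0 + h 1 1 = 2 * Real.cosh x)
    (hk : ⁅g, h⁆ ∈ Γ) (hk' : ⁅g, h⁻¹⁆ ∈ Γ)
    (hn : ∀ γ ∈ Γ, g * γ * g⁻¹ ∈ Γ) (hn' : ∀ γ ∈ Γ, g⁻¹ * γ * g ∈ Γ)
    (hne : ¬ Commute g h) : PP (g ^ N) (h ^ N) := by
  have hi : ((h⁻¹ : SL2R) : Matrix (Fin 2) (Fin 2) ℝ) = !![h 1 1, -h 0 1; -h 1 0, h 0 0] := by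
    rw [Matrix.SpecialLinearGroup.coe_inv, Matrix.adjugate_fin_two]
  have hsum : ((g * h) 0 0 + (g * h) 1 1) + ((g * h⁻¹) 0 0 + (g * h⁻¹) 1 1) =
      4 * Real.cosh x ^ 2 := by
    simp only [Matrix.SpecialLinearGroup.coe_mul, Matrix.mul_apply, Fin.sum_univ_two, hi]
    simp
    linear_combination (h 0 0 + h 1 1) * hg + 2 * Real.cosh x * hh
  rcases le_total (2 * Real.cosh x ^ 2) ((g * h) 0 0 + (g * h) 1 1) with h1 | h1
  · exact core hΓ hx hN hNx hg hh h1 hk hn hn'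
      (fun h0 => hne (commutatorElement_eq_one_iff_commute.1 h0))
  · have := core hΓ hx hN hNx hg (h := h⁻¹) (by rw [hi]; simp; linarith) (by linarith) hk' hn hn'
      (fun h0 => hne (by simpa using commutatorElement_eq_one_iff_commute.1 h0))
    simpa using this.inv

lemma exists_sign (g : SL2R) {c : ℝ} (hg : |g 0 0 + g 1 1| = c) :
    ∃ g' : SL2R, (g' = g ∨ g' = -g) ∧ g' 0 0 + g' 1 1 = c := by
  rcases abs_cases (g 0 0 + g 1 1) with ⟨h1, _⟩ | ⟨h1, _⟩
  · exact ⟨g, Or.inl rfl, by rw [← hg, h1]⟩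
  · refine ⟨-g, Or.inr rfl, ?_⟩
    simp only [Matrix.SpecialLinearGroup.coe_neg, Matrix.neg_apply]
    linarith

lemma mk_neg_one_mul {g g' : SL2R} (h : g' = g ∨ g' = -g) (N : ℕ) :
    QuotientGroup.mk' (Subgroup.center SL2R) (g ^ N) =
      QuotientGroup.mk' (Subgroup.center SL2R) (g' ^ N) := by
  rcases h with rfl | rfl
  · rfl
  · rw [map_pow, map_pow]
    congr 1
    rw [QuotientGroup.mk'_eq_mk']
    refine ⟨-1, ?_, by simp⟩
    rw [Subgroup.mem_center_iff]
    intro a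
    simp

lemma SL2R_inv_neg (g : SL2R) : (-g)⁻¹ = -g⁻¹ := by
  rw [inv_eq_iff_mul_eq_one]
  simp

lemma comm_sign {g g' h h' : SL2R} (hg : g' = g ∨ g' = -g) (hh : h' = h ∨ h' = -h) :
    ⁅g', h'⁆ = ⁅g, h⁆ := by
  rcases hg with rfl | rfl <;> rcases hh with rfl | rfl <;>
    simp [commutatorElement_def, SL2R_inv_neg]

lemma virtuallyAbelian_of_commute {g h : SL2R} (hgh : Commute g h) :
    VirtuallyAbelian ↥(Subgroup.closure ({g, h} : Set SL2R)) := by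
  refine ⟨⊤, inferInstance, ?_⟩
  have := Subgroup.isMulCommutative_closure (k := ({g, h} : Set SL2R)) (by
    rintro a (rfl | rfl) b (rfl | rfl)
    exacts [rfl, hgh, hgh.symm, rfl])
  intro a _ b _
  exact mul_comm' a b

end Assembly

/-- Theorem 4.8 (thm:Case1) of the paper for `X = ℍ²`: for hyperbolic `g, h` with equal
translation lengths `τ ≥ λ` generating a discrete nonelementary subgroup, the images of
`g^N, h^N` in `PSL(2,ℝ)` generate a free group of rank two, for the stated explicit `N`. -/
theorem case1_free_powers (ε : ℝ) (hε : 0 < ε) (hmarg : IsMargulisConstant ε)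
    (δ L₁ : ℝ) (hδ : δ = Real.log (1 + Real.sqrt 2))
    (hL₁pos : 0 < L₁) (hL₁ : Real.sinh L₁ * Real.sinh (ε / 100) = 1)
    (lam : ℝ) (hlam : 0 < lam) (g h : SL2R)
    (hg : 2 < |Matrix.trace (g : Matrix (Fin 2) (Fin 2) ℝ)|)
    (hh : 2 < |Matrix.trace (h : Matrix (Fin 2) (Fin 2) ℝ)|)
    (τ : ℝ) (hτg : translationLength g = τ) (hτh : translationLength h = τ)
    (hτ : lam ≤ τ)
    (hdisc : IsDiscreteSubgroup (Subgroup.closure {g, h}))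
    (hne : ¬ VirtuallyAbelian ↥(Subgroup.closure ({g, h} : Set SL2R)))
    (N : ℕ)
    (hN : max ((5 + 2 * δ + 3 * L₁) / lam) (27 + 9 * (5 + 2 * δ) / L₁) ≤ (N : ℝ)) :
    Function.Injective
      ⇑(FreeGroup.lift
          ![QuotientGroup.mk' (Subgroup.center SL2R) (g ^ N),
            QuotientGroup.mk' (Subgroup.center SL2R) (h ^ N)] :
        FreeGroup (Fin 2) →* SL2R ⧸ Subgroup.center SL2R) := by
  have hδ1 : 0.88 ≤ δ := hδ ▸ log_one_add_sqrt_two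
  have hτ0 : 0 < τ := hlam.trans_le hτ
  have hN1 := (le_max_left _ _).trans hN
  have hN2 := (le_max_right _ _).trans hN
  have hN28 : 28 ≤ N := by
    have h1 : 0 < 9 * (5 + 2 * δ) / L₁ := by positivity
    have h2 : (27 : ℝ) < N := by linarith
    have h3 : 27 < N := by exact_mod_cast h2
    omega
  have hNx : 3.38 ≤ N * (τ / 2) := by
    rw [div_le_iff₀ hlam] at hN1
    have : (N : ℝ) * lam ≤ N * τ := mul_le_mul_of_nonneg_left hτ (Nat.cast_nonneg N)
    linarith
  have hx : 0 < τ / 2 := by linarith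
  have tg := trace_eq g hg
  have th := trace_eq h hh
  rw [hτg] at tg
  rw [hτh] at th
  obtain ⟨g', hg', tg'⟩ := exists_sign g tg
  obtain ⟨h', hh', th'⟩ := exists_sign h th
  have gm : g ∈ Subgroup.closure ({g, h} : Set SL2R) := Subgroup.subset_closure (by simp)
  have hm : h ∈ Subgroup.closure ({g, h} : Set SL2R) := Subgroup.subset_closure (by simp)
  have cm (a b : SL2R) (ha : a ∈ Subgroup.closure ({g, h} : Set SL2R))
      (hb : b ∈ Subgroup.closure ({g, h} : Set SL2R)) :
      a * b * a⁻¹ * b⁻¹ ∈ Subgroup.closure ({g, h} : Set SL2R) :=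
    mul_mem (mul_mem (mul_mem ha hb) (inv_mem ha)) (inv_mem hb)
  have hncomm : ¬ Commute g h := fun hc => hne (virtuallyAbelian_of_commute hc)
  have key : PP (g' ^ N) (h' ^ N) := by
    apply core2 hdisc hx hN28 hNx tg' th'
    · rw [comm_sign hg' hh']; exact cm _ _ gm hm
    · rw [comm_sign hg' (h := h⁻¹) (h' := h'⁻¹) (by
        rcases hh' with rfl | rfl
        · exact Or.inl rfl
        · right; rw [SL2R_inv_neg])]
      exact cm _ _ gm (inv_mem hm)
    · intro γ hγ
      rcases hg' with rfl | rfl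
      · exact mul_mem (mul_mem gm hγ) (inv_mem gm)
      · simpa [SL2R_inv_neg] using mul_mem (mul_mem gm hγ) (inv_mem gm)
    · intro γ hγ
      rcases hg' with rfl | rfl
      · exact mul_mem (mul_mem (inv_mem gm) hγ) gm
      · simpa [SL2R_inv_neg] using mul_mem (mul_mem (inv_mem gm) hγ) gm
    · intro hc
      apply hncomm
      rcases hg' with rfl | rfl <;> rcases hh' with rfl | rfl <;>
        simpa [commute_iff_eq] using hc
  exact key.injective' (mk_neg_one_mul hg' N) (mk_neg_one_mul hh' N)
end
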